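/- arXiv:1207.4990 — 3 statements merged into one kernel-verified Lean document; each statement's English description precedes it below -/
import Mathlib

section
/- Heine-type multi-integral representation: For every integrable function φ on the unit circle and every n ≥ 1, D_n(φ) = (1/n!)·∫_0^{2π} ⋯ ∫_0^{2π} ∏_{0≤j<k≤n-1} |e^{iθ_j} − e^{iθ_k}|² · ∏_{j=0}^{n-1} φ(e^{iθ_j}) dθ_j/(2π). -/
/-!
The squared Vandermonde product is a product of two determinants,
`∏_{j<k} |z_j - z_k|² = det (z̄_j^a) * det (z_j^b)` with `z_j = e^{iθ_j}`. The representation is then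
Andréief's identity `∫ det (f_a(x_j)) det (g_b(x_j)) dμⁿ = n! det (∫ f_a g_b dμ)`
(`integral_det_mul_det`) for `f_a(θ) = e^{-iaθ} φ(θ)` and `g_b(θ) = e^{ibθ}`: by periodicity the
entries `∫ f_a g_b` over one period are `2π φ_{a-b}`.

Andréief's identity follows from expanding both determinants over permutations `σ`, `τ` and
applying Fubini to each product term. For fixed `τ`, the sum over `σ` is the determinant of the
matrix `(∫ f_a g_b)` with columns permuted by `τ`, so every `τ` contributes the same amount.
-/

open MeasureTheory Filter Topology

/-- The `ℓ`-th Fourier coefficient of a function `θ ↦ φ(e^{iθ})` on the unit circle. -/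
noncomputable def fourierCoeff' (φ : ℝ → ℂ) (ℓ : ℤ) : ℂ :=
  ((2 * Real.pi : ℝ) : ℂ)⁻¹ *
    ∫ θ in (-Real.pi)..Real.pi, Complex.exp (-Complex.I * (ℓ : ℂ) * (θ : ℂ)) * φ θ

/-- The Toeplitz determinant `D_n(φ) = det (φ_{j-k})_{0 ≤ j,k ≤ n-1}`. -/
noncomputable def toeplitzDet (φ : ℝ → ℂ) (n : ℕ) : ℂ :=
  (Matrix.of fun j k : Fin n => fourierCoeff' φ ((j : ℤ) - (k : ℤ))).det

/-- Integrand of Andréief's identity as a sum over pairs of permutations of products of functions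
of one variable each, the form to which Fubini applies. -/
lemma det_mul_det_expand {n : ℕ} (f g : Fin n → ℝ → ℂ) (x : Fin n → ℝ) :
    (Matrix.of fun a j => f a (x j)).det * (Matrix.of fun a j => g a (x j)).det =
      ∑ τ : Equiv.Perm (Fin n), ∑ σ : Equiv.Perm (Fin n),
        ((Equiv.Perm.sign τ : ℤ) : ℂ) * ((Equiv.Perm.sign σ : ℤ) : ℂ) *
          ∏ j, (f (σ j) (x j) * g (τ j) (x j)) := by
  rw [Matrix.det_apply', Matrix.det_apply', Finset.sum_mul_sum, Finset.sum_comm]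
  refine Finset.sum_congr rfl fun τ _ => Finset.sum_congr rfl fun σ _ => ?_
  simp only [Matrix.of_apply, Finset.prod_mul_distrib]
  ring

/-- **Andréief's identity.** -/
lemma integral_det_mul_det {n : ℕ} (μ : Measure ℝ) [SigmaFinite μ] (f g : Fin n → ℝ → ℂ)
    (h : ∀ a b, Integrable (fun x => f a x * g b x) μ) :
    ∫ x, (Matrix.of fun a j => f a (x j)).det * (Matrix.of fun a j => g a (x j)).det
        ∂(Measure.pi fun _ : Fin n => μ) =
      (Nat.factorial n : ℂ) * (Matrix.of fun a b => ∫ x, f a x * g b x ∂μ).det := by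
  set M : Matrix (Fin n) (Fin n) ℂ := Matrix.of fun a b => ∫ x, f a x * g b x ∂μ with hM
  have hi : ∀ σ τ : Equiv.Perm (Fin n), Integrable
      (fun x : Fin n → ℝ => ((Equiv.Perm.sign τ : ℤ) : ℂ) * ((Equiv.Perm.sign σ : ℤ) : ℂ) *
          ∏ j, (f (σ j) (x j) * g (τ j) (x j))) (Measure.pi fun _ : Fin n => μ) := fun σ τ =>
    (Integrable.fintype_prod (f := fun j y => f (σ j) y * g (τ j) y)
      (fun j => h (σ j) (τ j))).const_mul _
  simp_rw [det_mul_det_expand]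
  rw [integral_finsetSum _ fun τ _ => integrable_finsetSum _ fun σ _ => hi σ τ]
  have key : ∀ τ : Equiv.Perm (Fin n),
      ∫ x, (∑ σ : Equiv.Perm (Fin n),
        ((Equiv.Perm.sign τ : ℤ) : ℂ) * ((Equiv.Perm.sign σ : ℤ) : ℂ) *
          ∏ j, (f (σ j) (x j) * g (τ j) (x j))) ∂(Measure.pi fun _ : Fin n => μ) = M.det := by
    intro τ
    rw [integral_finsetSum _ fun σ _ => hi σ τ]
    have hτ : ∀ σ : Equiv.Perm (Fin n),
        ∫ x, ((Equiv.Perm.sign τ : ℤ) : ℂ) * ((Equiv.Perm.sign σ : ℤ) : ℂ) *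
          ∏ j, (f (σ j) (x j) * g (τ j) (x j)) ∂(Measure.pi fun _ : Fin n => μ) =
        ((Equiv.Perm.sign τ : ℤ) : ℂ) *
          (((Equiv.Perm.sign σ : ℤ) : ℂ) * ∏ j, M.submatrix id τ (σ j) j) := by
      intro σ
      rw [integral_const_mul,
        integral_fintype_prod_eq_prod (fun j y => f (σ j) y * g (τ j) y), mul_assoc]
      rfl
    simp_rw [hτ]
    rw [← Finset.mul_sum, ← Matrix.det_apply', Matrix.det_permute', ← mul_assoc]
    have hs : ((Equiv.Perm.sign τ : ℤ) : ℂ) * ((Equiv.Perm.sign τ : ℤ) : ℂ) = 1 := by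
      exact_mod_cast Int.units_coe_mul_self (Equiv.Perm.sign τ)
    rw [hs, one_mul]
  simp_rw [key]
  simp [Fintype.card_perm]

/-- The squared Vandermonde product, weighted by `∏ φ(θ_j)`, as a product of two determinants. -/
lemma heine_integrand_eq_det_mul_det {n : ℕ} (φ : ℝ → ℂ) (θ : Fin n → ℝ) :
    (∏ j : Fin n, ∏ k ∈ Finset.Ioi j,
        ((‖Complex.exp (Complex.I * (θ j : ℂ)) -
            Complex.exp (Complex.I * (θ k : ℂ))‖ ^ 2 : ℝ) : ℂ)) * ∏ j : Fin n, φ (θ j) =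
      (Matrix.of fun a j : Fin n => φ (θ j) * Complex.exp (-Complex.I * (θ j : ℂ)) ^ (a : ℕ)).det *
        (Matrix.of fun a j : Fin n => Complex.exp (Complex.I * (θ j : ℂ)) ^ (a : ℕ)).det := by
  have h1 : (Matrix.of fun a j : Fin n =>
      φ (θ j) * Complex.exp (-Complex.I * (θ j : ℂ)) ^ (a : ℕ)).det =
      (∏ j, φ (θ j)) *
        (Matrix.vandermonde fun j => Complex.exp (-Complex.I * (θ j : ℂ))).det := by
    rw [← Matrix.det_transpose (Matrix.vandermonde _), ← Matrix.det_mul_row]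
    rfl
  have h2 : (Matrix.of fun a j : Fin n => Complex.exp (Complex.I * (θ j : ℂ)) ^ (a : ℕ)).det =
      (Matrix.vandermonde fun j => Complex.exp (Complex.I * (θ j : ℂ))).det := by
    rw [← Matrix.det_transpose (Matrix.vandermonde _)]
    rfl
  have hc : ∀ t : ℝ, Complex.exp (-Complex.I * (t : ℂ)) =
      (starRingEnd ℂ) (Complex.exp (Complex.I * (t : ℂ))) := by
    intro t
    rw [← Complex.exp_conj]
    simp
  rw [h1, h2, Matrix.det_vandermonde, Matrix.det_vandermonde, mul_assoc, mul_comm]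
  congr 1
  simp_rw [← Finset.prod_mul_distrib]
  refine Finset.prod_congr rfl fun j _ => Finset.prod_congr rfl fun k _ => ?_
  rw [hc, hc, ← map_sub, Complex.conj_mul', norm_sub_rev, Complex.ofReal_pow]

lemma fourier_kernel_eq (a b : ℕ) (t : ℝ) (c : ℂ) :
    c * Complex.exp (-Complex.I * (t : ℂ)) ^ a * Complex.exp (Complex.I * (t : ℂ)) ^ b =
      Complex.exp (-Complex.I * (((a : ℤ) - (b : ℤ) : ℤ) : ℂ) * (t : ℂ)) * c := by
  rw [← Complex.exp_nat_mul, ← Complex.exp_nat_mul, mul_assoc, ← Complex.exp_add, mul_comm]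
  congr 2
  push_cast
  ring

/-- By periodicity the Fourier coefficient may be computed over the period `(0, 2π]`. -/
lemma setIntegral_eq_fourierCoeff' (φ : ℝ → ℂ) (hper : Function.Periodic φ (2 * Real.pi)) (l : ℤ) :
    ∫ t in Set.Ioc (0 : ℝ) (2 * Real.pi), Complex.exp (-Complex.I * (l : ℂ) * (t : ℂ)) * φ t =
      ((2 * Real.pi : ℝ) : ℂ) * fourierCoeff' φ l := by
  have hp : Function.Periodic
      (fun t : ℝ => Complex.exp (-Complex.I * (l : ℂ) * (t : ℂ)) * φ t) (2 * Real.pi) := by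
    intro t
    simp only [hper t]
    congr 1
    rw [Complex.exp_eq_exp_iff_exists_int]
    refine ⟨-l, ?_⟩
    push_cast
    ring
  have h := hp.intervalIntegral_add_eq 0 (-Real.pi)
  rw [zero_add, show -Real.pi + 2 * Real.pi = Real.pi by ring] at h
  have h2 : ((2 * Real.pi : ℝ) : ℂ) ≠ 0 := by
    exact_mod_cast Real.two_pi_pos.ne'
  rw [← intervalIntegral.integral_of_le Real.two_pi_pos.le, h, fourierCoeff',
    mul_inv_cancel_left₀ h2]

/-- **Heine-type multi-integral representation.** For every integrable symbol `φ` on the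
unit circle and `n ≥ 1`,
`D_n(φ) = (1/n!) ∫⋯∫ ∏_{j<k} |e^{iθ_j} − e^{iθ_k}|² ∏_j φ(e^{iθ_j}) dθ_j/(2π)`. -/
theorem heine_representation
    (φ : ℝ → ℂ) (hper : Function.Periodic φ (2 * Real.pi))
    (hint : IntervalIntegrable φ volume 0 (2 * Real.pi)) (n : ℕ) (hn : 1 ≤ n) :
    toeplitzDet φ n =
      ((Nat.factorial n : ℂ))⁻¹ * (((2 * Real.pi : ℝ) : ℂ))⁻¹ ^ n *
        ∫ θ : Fin n → ℝ in Set.univ.pi (fun _ : Fin n => Set.Ioc (0 : ℝ) (2 * Real.pi)),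
          (∏ j : Fin n, ∏ k ∈ Finset.Ioi j,
              ((‖Complex.exp (Complex.I * (θ j : ℂ)) -
                  Complex.exp (Complex.I * (θ k : ℂ))‖ ^ 2 : ℝ) : ℂ)) *
            ∏ j : Fin n, φ (θ j) := by
  have hvol : (volume : Measure (Fin n → ℝ)).restrict
      (Set.univ.pi fun _ : Fin n => Set.Ioc (0 : ℝ) (2 * Real.pi)) =
      Measure.pi fun _ : Fin n => (volume : Measure ℝ).restrict (Set.Ioc 0 (2 * Real.pi)) := by
    rw [volume_pi, Measure.restrict_pi_pi]
  have hInt : ∀ a b : Fin n, Integrable (fun t : ℝ =>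
      φ t * Complex.exp (-Complex.I * (t : ℂ)) ^ (a : ℕ) *
        Complex.exp (Complex.I * (t : ℂ)) ^ (b : ℕ))
      ((volume : Measure ℝ).restrict (Set.Ioc 0 (2 * Real.pi))) := by
    intro a b
    simp_rw [fourier_kernel_eq]
    refine (intervalIntegrable_iff_integrableOn_Ioc_of_le Real.two_pi_pos.le).1
      (hint.continuousOn_mul (Continuous.continuousOn ?_))
    fun_prop
  simp_rw [heine_integrand_eq_det_mul_det]
  rw [hvol, integral_det_mul_det _
    (fun a t => φ t * Complex.exp (-Complex.I * (t : ℂ)) ^ (a : ℕ))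
    (fun b t => Complex.exp (Complex.I * (t : ℂ)) ^ (b : ℕ)) hInt]
  simp_rw [fourier_kernel_eq, setIntegral_eq_fourierCoeff' φ hper]
  have hdet : (Matrix.of fun a b : Fin n => ((2 * Real.pi : ℝ) : ℂ) *
      fourierCoeff' φ ((a : ℤ) - (b : ℤ))).det =
      ((2 * Real.pi : ℝ) : ℂ) ^ n * toeplitzDet φ n := by
    have := Matrix.det_smul
      (Matrix.of fun j k : Fin n => fourierCoeff' φ ((j : ℤ) - (k : ℤ))) ((2 * Real.pi : ℝ) : ℂ)
    rw [Fintype.card_fin] at this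
    exact this
  have h2 : ((2 * Real.pi : ℝ) : ℂ) ≠ 0 := by
    exact_mod_cast Real.two_pi_pos.ne'
  have hf : (Nat.factorial n : ℂ) ≠ 0 := by
    exact_mod_cast Nat.factorial_ne_zero n
  rw [hdet, inv_pow]
  field_simp
end

section
/- Basor–Tracy asymptotics for the double-jump symbol: Let f be the function on the unit circle defined by f(e^{iθ}) = −i for 0 ≤ θ < π and f(e^{iθ}) = +i for π ≤ θ < 2π. Then, as n → ∞, D_n(f) = ((1 + (−1)^n)/2)·√(2/n)·2^{1/6}·exp(6·ζ′(−1)) + o(n^{−1/2}), where ζ′(−1) is the derivative of the Riemann zeta function at −1. Equivalently, √(n/2)·D_n(f) − ((1 + (−1)^n)/2)·2^{1/6}·exp(6·ζ′(−1)) → 0 as n → ∞; in particular along even n, √(n/2)·D_n(f) → 2^{1/6}·exp(6·ζ′(−1)). -/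
/-!
Write `f_ℓ` for the Fourier coefficients of the symbol; they are `-(1 - (-1) ^ ℓ) / (π ℓ)`, so they
are odd in `ℓ` and vanish for even `ℓ`. Skew-symmetry gives `D_n = 0` for odd `n`
(`toeplitzDet_odd`). For `n = 2 m`, sorting the indices by parity gives a block matrix
`[0, A; -Aᵀ, 0]` where `π A` is the transpose of the Cauchy matrix `1 / (i - j + 1 / 2)`. Hence
`D_{2m} = a_m ^ 2` with `a_m = (2 / π) ^ m ∏_{k < m} W_k`, where `W_k` are the partial Wallis products
(`toeplitzDet_even`, `det_half_cauchy`).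

Put `w_d = -log (1 - 1 / (4 d ^ 2))`, so that `log W_k = ∑_{d ≤ k} w_d`. Abel summation together with
`m (log W_m - log (π / 2)) → -1 / 4` yields `log a_m + (log m) / 4 → -1 / 4 - R - γ / 4`, where
`R = ∑_{d ≥ 1} (d w_d - 1 / (4 d))` (`tendsto_even_of_hasSum`).

To evaluate `R`, consider
`G(s) = ∑_{d ≥ 1} [d ((2d - 1)^(-s) + (2d + 1)^(-s) - 2 (2d)^(-s)) - s (s + 1) / 2 * (2d)^(-s-1)]`.
A Taylor estimate (`norm_taylor_le`) shows that the terms are `O(d ^ (-3 / 2))` uniformly for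
`Re s > -1 / 2`, `|s| < 5`, so `G` is holomorphic there and `G′(0) = R`. For `Re s > 2` the terms
can be rearranged, which gives
`G(s) = (1 - 2 ^ (2 - s)) ζ(s - 1) - s (s + 1) 2 ^ (-s-2) ζ(s + 1)`, and by the identity theorem this
persists near `0`. Differentiating at `0` gives
`R = -(log 2) / 12 - 1 / 4 - 3 ζ′(-1) - γ / 4` (`exists_hasSum_wallisLog`). The Euler–Mascheroni
constants cancel and `√m * a_m ^ 2 → exp ((log 2) / 6 + 6 ζ′(-1))`.
-/

open MeasureTheory Filter Topology

/-- The Basor–Tracy double-jump symbol: `f(e^{iθ}) = −i` for `0 ≤ θ < π` and `+i` for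
`π ≤ θ < 2π` (parametrized here by `θ ∈ (−π, π)`, on which the second branch is
`−π < θ < 0`). -/
noncomputable def basorTracySymbol (θ : ℝ) : ℂ :=
  if 0 ≤ θ then -Complex.I else Complex.I

/-! ### Cauchy determinants -/

/-- One step of Gaussian elimination on a Cauchy matrix: clearing the first column leaves a Cauchy
matrix whose rows and columns are rescaled. -/
theorem det_cauchy_succ {K : Type*} [Field K] {n : ℕ} (x y : Fin (n + 1) → K)
    (h : ∀ i j, x i - y j ≠ 0) :
    (Matrix.of fun i j => (x i - y j)⁻¹).det =
      (x 0 - y 0)⁻¹ *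
        (∏ i : Fin n, ((x i.succ - x 0) * (y 0 - y i.succ)) /
          ((x i.succ - y 0) * (x 0 - y i.succ))) *
        (Matrix.of fun i j : Fin n => (x i.succ - y j.succ)⁻¹).det := by
  set c : Fin (n + 1) → K := Fin.cons 0 fun i => (x 0 - y 0) / (x i.succ - y 0) with hc
  set A : Matrix (Fin (n + 1)) (Fin (n + 1)) K := Matrix.of fun i j => (x i - y j)⁻¹ with hA
  set B : Matrix (Fin (n + 1)) (Fin (n + 1)) K :=
    Matrix.of fun i j => A i j - c i * A 0 j with hB
  have hc0 : c 0 = 0 := by simp [hc]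
  have hAB : A.det = B.det := by
    refine Matrix.det_eq_of_forall_row_eq_smul_add_const c 0 hc0 fun i j => ?_
    simp [hB, hc0]
  have hBcol : ∀ i : Fin n, B i.succ 0 = 0 := by
    intro i
    simp only [hB, hA, hc, Matrix.of_apply, Fin.cons_succ]
    have := h i.succ 0
    have := h 0 0
    field_simp
    ring
  have hsub : B.submatrix Fin.succ Fin.succ =
      Matrix.of fun i j : Fin n => ((x i.succ - x 0) / (x i.succ - y 0)) *
        (Matrix.of fun i j : Fin n => ((y 0 - y j.succ) / (x 0 - y j.succ)) *
          (Matrix.of fun i j : Fin n => (x i.succ - y j.succ)⁻¹) i j) i j := by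
    ext i j
    simp only [hB, hA, hc, Matrix.submatrix_apply, Matrix.of_apply, Fin.cons_succ]
    have := h i.succ 0
    have := h 0 j.succ
    have := h i.succ j.succ
    field_simp
    ring
  rw [hAB, Matrix.det_succ_column_zero, Fin.sum_univ_succ]
  simp only [hBcol, mul_zero, zero_mul, Finset.sum_const_zero, add_zero]
  rw [Fin.succAbove_zero, hsub, Matrix.det_mul_column, Matrix.det_mul_row]
  simp only [hB, hA, hc0, Matrix.of_apply, Finset.prod_div_distrib, Finset.prod_mul_distrib]
  simp
  ring

/-- For the Cauchy matrix `1 / (i - j + 1 / 2)` the elimination step contributes, at size `m + 1`,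
exactly the factor `2 * W m`. -/
theorem det_half_cauchy (m : ℕ) :
    (Matrix.of fun i j : Fin m => ((i : ℂ) - (j : ℂ) + 1 / 2)⁻¹).det =
      ((2 ^ m * ∏ k ∈ Finset.range m, Real.Wallis.W k : ℝ) : ℂ) := by
  have hne : ∀ a b : ℕ, (a : ℂ) - (b - 1 / 2) ≠ 0 := by
    intro a b hab
    have h1 : ((2 * (a : ℤ) - 2 * b + 1 : ℤ) : ℂ) = 0 := by
      push_cast
      linear_combination 2 * hab
    have h2 : 2 * (a : ℤ) - 2 * b + 1 = 0 := by exact_mod_cast h1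
    omega
  induction m with
  | zero => simp
  | succ m ih =>
    have key := det_cauchy_succ (n := m) (fun i => ((i : ℕ) : ℂ)) (fun j => ((j : ℕ) : ℂ) - 1 / 2)
      (fun i j => hne i j)
    have e1 : (Matrix.of fun i j : Fin (m + 1) => ((i : ℂ) - (j : ℂ) + 1 / 2)⁻¹) =
        Matrix.of fun i j : Fin (m + 1) => ((i : ℂ) - ((j : ℂ) - 1 / 2))⁻¹ := by
      ext i j
      simp only [Matrix.of_apply]
      congr 1
      ring
    have e2 : (Matrix.of fun i j : Fin m =>
        (((i.succ : Fin (m + 1)) : ℕ) - ((((j.succ : Fin (m + 1)) : ℕ) : ℂ) - 1 / 2))⁻¹) =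
        Matrix.of fun i j : Fin m => ((i : ℂ) - (j : ℂ) + 1 / 2)⁻¹ := by
      ext i j
      simp only [Matrix.of_apply]
      congr 1
      simp only [Fin.val_succ]
      push_cast
      ring
    rw [e1, key, e2, ih, Finset.prod_range_succ]
    have e3 : (∏ i : Fin m, (((i.succ : Fin (m + 1)) : ℕ) - (((0 : Fin (m + 1)) : ℕ) : ℂ)) *
          (((0 : Fin (m + 1)) : ℕ) - 1 / 2 - ((((i.succ : Fin (m + 1)) : ℕ) : ℂ) - 1 / 2)) /
          (((((i.succ : Fin (m + 1)) : ℕ) : ℂ) - (((0 : Fin (m + 1)) : ℕ) - 1 / 2)) *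
            ((((0 : Fin (m + 1)) : ℕ) : ℂ) - ((((i.succ : Fin (m + 1)) : ℕ) : ℂ) - 1 / 2)))) =
        ((Real.Wallis.W m : ℝ) : ℂ) := by
      rw [Real.Wallis.W, Finset.prod_range, Complex.ofReal_prod]
      refine Finset.prod_congr rfl fun i _ => ?_
      have h3 : ((i : ℂ) * 2 + 1) ≠ 0 := by exact_mod_cast Nat.succ_ne_zero ((i : ℕ) * 2)
      have h4 : ((i : ℂ) * 2 + 3) ≠ 0 := by exact_mod_cast Nat.succ_ne_zero ((i : ℕ) * 2 + 2)
      simp only [Fin.val_succ, Fin.val_zero]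
      push_cast
      rw [show (i : ℂ) + 1 - (0 - 1 / 2) = (i * 2 + 3) / 2 by ring,
        show (0 : ℂ) - (i + 1 - 1 / 2) = -((i * 2 + 1) / 2) by ring,
        show 2 * (i : ℂ) + 1 = i * 2 + 1 by ring, show 2 * (i : ℂ) + 3 = i * 2 + 3 by ring]
      field_simp
      ring
    rw [e3]
    push_cast [Fin.val_zero]
    ring

/-! ### The Toeplitz determinant -/

theorem fourierCoeff'_basorTracySymbol (l : ℤ) :
    fourierCoeff' basorTracySymbol l = -((1 - (-1 : ℂ) ^ l) / (Real.pi * l)) := by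
  have hpi : (Real.pi : ℂ) ≠ 0 := by exact_mod_cast Real.pi_ne_zero
  set g : ℝ → ℂ := fun θ => Complex.exp (-Complex.I * (l : ℂ) * (θ : ℂ)) with hg
  have hgc : Continuous g := by fun_prop
  have hpos : Set.EqOn (fun θ : ℝ => g θ * basorTracySymbol θ) (fun θ => g θ * -Complex.I)
      (Set.uIoc 0 Real.pi) := by
    intro θ hθ
    rw [Set.uIoc_of_le Real.pi_pos.le] at hθ
    simp [basorTracySymbol, hθ.1.le]
  have hneg : Set.EqOn (fun θ : ℝ => g θ * basorTracySymbol θ) (fun θ => g θ * Complex.I)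
      (Set.uIoo (-Real.pi) 0) := by
    intro θ hθ
    rw [Set.uIoo_of_le (by linarith [Real.pi_pos])] at hθ
    simp [basorTracySymbol, not_le.2 hθ.2]
  have i1 : IntervalIntegrable (fun θ : ℝ => g θ * basorTracySymbol θ) volume 0 Real.pi :=
    ((hgc.mul continuous_const).intervalIntegrable _ _).congr hpos.symm
  have i2 : IntervalIntegrable (fun θ : ℝ => g θ * basorTracySymbol θ) volume (-Real.pi) 0 :=
    ((hgc.mul continuous_const).intervalIntegrable _ _).congr_uIoo hneg.symm
  have s1 : ∫ θ in (0 : ℝ)..Real.pi, g θ * basorTracySymbol θ =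
      (∫ θ in (0 : ℝ)..Real.pi, g θ) * -Complex.I := by
    rw [← intervalIntegral.integral_mul_const]
    exact intervalIntegral.integral_congr_ae (Eventually.of_forall hpos)
  have s2 : ∫ θ in (-Real.pi)..0, g θ * basorTracySymbol θ =
      (∫ θ in (-Real.pi)..0, g θ) * Complex.I := by
    rw [← intervalIntegral.integral_mul_const]
    exact intervalIntegral.integral_congr_uIoo hneg
  have hsplit := intervalIntegral.integral_add_adjacent_intervals i2 i1
  rw [fourierCoeff']
  change _ * ∫ θ in (-Real.pi)..Real.pi, g θ * basorTracySymbol θ = _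
  rw [← hsplit, s1, s2]
  rcases eq_or_ne l 0 with rfl | hl
  · simp [hg]
  · have hlc : (l : ℂ) ≠ 0 := by exact_mod_cast hl
    have hc : -Complex.I * (l : ℂ) ≠ 0 := by simp [hl]
    simp only [hg]
    rw [integral_exp_mul_complex hc, integral_exp_mul_complex hc]
    have hexp : ∀ k : ℤ, Complex.exp (Real.pi * Complex.I * k) = (-1 : ℂ) ^ k := by
      intro k
      rw [mul_comm, Complex.exp_int_mul, Complex.exp_pi_mul_I]
    have e1 : Complex.exp (-Complex.I * l * (Real.pi : ℝ)) = (-1 : ℂ) ^ l := by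
      have := hexp (-l)
      rw [zpow_neg, ← inv_zpow] at this
      norm_num at this
      rw [← this]
      congr 1
      ring
    have e2 : Complex.exp (-Complex.I * l * ((-Real.pi : ℝ) : ℂ)) = (-1 : ℂ) ^ l := by
      rw [← hexp l]
      congr 1
      push_cast
      ring
    rw [e1, e2]
    simp only [Complex.ofReal_zero, mul_zero, Complex.exp_zero]
    push_cast
    field_simp
    ring

/-- The Toeplitz matrix is skew-symmetric, so its determinant vanishes in odd size. -/
theorem toeplitzDet_odd (m : ℕ) : toeplitzDet basorTracySymbol (2 * m + 1) = 0 := by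
  have hodd : ∀ l : ℤ, fourierCoeff' basorTracySymbol (-l) = -fourierCoeff' basorTracySymbol l := by
    intro l
    rw [fourierCoeff'_basorTracySymbol, fourierCoeff'_basorTracySymbol, zpow_neg, ← inv_zpow]
    norm_num
    ring
  rw [toeplitzDet]
  set T := Matrix.of fun j k : Fin (2 * m + 1) =>
    fourierCoeff' basorTracySymbol ((j : ℤ) - (k : ℤ)) with hT
  have hTt : T.transpose = -T := by
    ext i j
    simp only [hT, Matrix.transpose_apply, Matrix.of_apply, Matrix.neg_apply]
    rw [← hodd]
    congr 1
    ring
  have h := congrArg Matrix.det hTt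
  rw [Matrix.det_transpose, Matrix.det_neg, Fintype.card_fin, pow_succ, pow_mul] at h
  norm_num at h
  linear_combination h / 2

/-- Splitting `Fin (2 * m)` into the even indices (left) and the odd indices (right). -/
noncomputable def evenOddEquiv (m : ℕ) : Fin m ⊕ Fin m ≃ Fin (2 * m) :=
  Equiv.ofBijective
    (Sum.elim (fun i => ⟨2 * i, by omega⟩) (fun i => ⟨2 * i + 1, by omega⟩))
    ((Fintype.bijective_iff_injective_and_card _).2 ⟨by
      rintro (i | i) (j | j) h <;> simp [Fin.ext_iff] at h ⊢ <;> omega, by simp; omega⟩)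

/-- Multiplicativity of the determinant is used instead of a column permutation, which would
require tracking a sign. -/
theorem det_fromBlocks_skew {n R : Type*} [Fintype n] [DecidableEq n] [CommRing R]
    (A : Matrix n n R) :
    (Matrix.fromBlocks 0 A (-A.transpose) 0).det = A.det ^ 2 := by
  have h1 : Matrix.fromBlocks 0 A (-A.transpose) 0 =
      Matrix.fromBlocks A 0 0 A.transpose * Matrix.fromBlocks 0 1 (-1) 0 := by
    simp [Matrix.fromBlocks_multiply]
  have h2 : (Matrix.fromBlocks (0 : Matrix n n R) 1 (-1) (0 : Matrix n n R)).det = 1 := by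
    have h3 : Matrix.fromBlocks (1 : Matrix n n R) (-1) 0 (1 : Matrix n n R) *
        Matrix.fromBlocks (0 : Matrix n n R) 1 (-1) (0 : Matrix n n R) =
        Matrix.fromBlocks (1 : Matrix n n R) 1 (-1) (0 : Matrix n n R) := by
      simp [Matrix.fromBlocks_multiply]
    have h4 := congrArg Matrix.det h3
    rw [Matrix.det_mul, Matrix.det_fromBlocks_zero₂₁, Matrix.det_fromBlocks_one₁₁] at h4
    simpa using h4
  rw [h1, Matrix.det_mul, h2, Matrix.det_fromBlocks_zero₂₁, Matrix.det_transpose]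
  ring

/-- The Fourier coefficients vanish at even indices, so sorting the indices by parity puts the
Toeplitz matrix in the block form `[0, A; -Aᵀ, 0]` with `πA` the transpose of a Cauchy matrix. -/
theorem toeplitzDet_even (m : ℕ) :
    toeplitzDet basorTracySymbol (2 * m) =
      (((2 / Real.pi) ^ m * ∏ k ∈ Finset.range m, Real.Wallis.W k : ℝ) : ℂ) ^ 2 := by
  have hpi : (Real.pi : ℂ) ≠ 0 := by exact_mod_cast Real.pi_ne_zero
  set C : Matrix (Fin m) (Fin m) ℂ := Matrix.of fun i j => ((i : ℂ) - (j : ℂ) + 1 / 2)⁻¹ with hC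
  set A : Matrix (Fin m) (Fin m) ℂ := (Real.pi : ℂ)⁻¹ • C.transpose with hA
  have hev : ∀ l : ℤ, fourierCoeff' basorTracySymbol (2 * l) = 0 := by
    intro l
    simp [fourierCoeff'_basorTracySymbol, zpow_mul]
  have hod : ∀ l : ℤ, fourierCoeff' basorTracySymbol (2 * l + 1) =
      -((Real.pi : ℂ)⁻¹ * ((l : ℂ) + 1 / 2)⁻¹) := by
    intro l
    have h0 : (2 * (l : ℂ) + 1) ≠ 0 := by
      have : (2 * l + 1 : ℤ) ≠ 0 := by omega
      exact_mod_cast this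
    have h1 : (l : ℂ) + 1 / 2 = (2 * l + 1) / 2 := by ring
    rw [fourierCoeff'_basorTracySymbol, zpow_add₀ (by norm_num), zpow_mul, h1]
    push_cast
    norm_num
    field_simp
  have hblock : (Matrix.of fun j k : Fin (2 * m) =>
      fourierCoeff' basorTracySymbol ((j : ℤ) - (k : ℤ))).submatrix
        (evenOddEquiv m) (evenOddEquiv m) = Matrix.fromBlocks 0 A (-A.transpose) 0 := by
    ext (i | i) (j | j)
    · have := hev ((i : ℤ) - j)
      simp only [evenOddEquiv, Matrix.submatrix_apply, Equiv.ofBijective_apply, Sum.elim_inl,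
        Matrix.of_apply, Matrix.fromBlocks_apply₁₁, Matrix.zero_apply]
      rw [← this]
      congr 1
      push_cast
      ring
    · have := hod ((i : ℤ) - j - 1)
      simp only [evenOddEquiv, Matrix.submatrix_apply, Equiv.ofBijective_apply, Sum.elim_inl,
        Sum.elim_inr, Matrix.of_apply, Matrix.fromBlocks_apply₁₂, hA, hC, Matrix.smul_apply,
        Matrix.transpose_apply, smul_eq_mul]
      rw [show (((2 * (i : ℕ) : ℕ) : ℤ) - ((2 * (j : ℕ) + 1 : ℕ) : ℤ)) =
        2 * ((i : ℤ) - j - 1) + 1 by push_cast; ring, this, ← mul_neg, ← inv_neg]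
      congr 2
      push_cast
      ring
    · have := hod ((i : ℤ) - j)
      simp only [evenOddEquiv, Matrix.submatrix_apply, Equiv.ofBijective_apply, Sum.elim_inl,
        Sum.elim_inr, Matrix.of_apply, Matrix.fromBlocks_apply₂₁, hA, hC, Matrix.smul_apply,
        Matrix.transpose_apply, smul_eq_mul, Matrix.neg_apply]
      rw [show (((2 * (i : ℕ) + 1 : ℕ) : ℤ) - ((2 * (j : ℕ) : ℕ) : ℤ)) =
        2 * ((i : ℤ) - j) + 1 by push_cast; ring, this]
      push_cast
      rfl
    · have := hev ((i : ℤ) - j)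
      simp only [evenOddEquiv, Matrix.submatrix_apply, Equiv.ofBijective_apply, Sum.elim_inr,
        Matrix.of_apply, Matrix.fromBlocks_apply₂₂, Matrix.zero_apply]
      rw [← this]
      congr 1
      push_cast
      ring
  rw [toeplitzDet, ← Matrix.det_submatrix_equiv_self (evenOddEquiv m), hblock,
    det_fromBlocks_skew, hA, Matrix.det_smul, Matrix.det_transpose, hC, det_half_cauchy,
    Fintype.card_fin]
  push_cast
  rw [div_pow, inv_pow]
  ring

/-! ### Asymptotics of Wallis products -/

/-- The logarithm `-log (1 - 1 / (4 d²))`, with `d = n + 1`, of a Wallis factor. -/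
noncomputable def wallisLog (n : ℕ) : ℝ :=
  2 * Real.log (2 * n + 2) - Real.log (2 * n + 1) - Real.log (2 * n + 3)

theorem log_W_succ (n : ℕ) :
    Real.log (Real.Wallis.W (n + 1)) = Real.log (Real.Wallis.W n) + wallisLog n := by
  rw [Real.Wallis.W_succ, Real.log_mul (Real.Wallis.W_pos n).ne' (by positivity),
    Real.log_mul (by positivity) (by positivity), Real.log_div (by positivity) (by positivity),
    Real.log_div (by positivity) (by positivity), wallisLog]
  ring

theorem wallisLog_eq (n : ℕ) :
    wallisLog n = Real.log ((2 * n + 2) ^ 2 / ((2 * n + 1) * (2 * n + 3))) := by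
  rw [Real.log_div (by positivity) (by positivity), Real.log_mul (by positivity) (by positivity),
    Real.log_pow, wallisLog]
  push_cast
  ring

/-- With `le_wallisLog`, this bounds the increments of `log W` by telescoping differences, which
pins down `log W n - log (π / 2)` to leading order. -/
theorem wallisLog_le (n : ℕ) :
    wallisLog n ≤ 1 / (4 * n + 2) - 1 / (4 * (n + 1 : ℕ) + 2) := by
  rw [wallisLog_eq]
  refine (Real.log_le_sub_one_of_pos (by positivity)).trans (le_of_eq ?_)
  push_cast
  field_simp
  ring

theorem le_wallisLog (n : ℕ) :
    1 / (4 * (n + 1)) - 1 / (4 * ((n + 1 : ℕ) + 1)) ≤ wallisLog n := by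
  rw [wallisLog_eq]
  refine le_trans ?_ (Real.one_sub_inv_le_log_of_pos (by positivity))
  rw [inv_div]
  have : 1 - (2 * (n : ℝ) + 1) * (2 * n + 3) / (2 * n + 2) ^ 2 -
      (1 / (4 * (n + 1)) - 1 / (4 * ((n + 1 : ℕ) + 1))) =
      1 / (4 * (n + 1) ^ 2 * (n + 2)) := by
    push_cast
    rw [show (n : ℝ) + 1 + 1 = n + 2 by ring, show 2 * (n : ℝ) + 2 = 2 * (n + 1) by ring]
    field_simp
    ring
  have h : 0 ≤ 1 / (4 * ((n : ℝ) + 1) ^ 2 * (n + 2)) := by positivity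
  linarith

theorem tendsto_log_W :
    Tendsto (fun n => Real.log (Real.Wallis.W n)) atTop (𝓝 (Real.log (Real.pi / 2))) :=
  Real.Wallis.tendsto_W_nhds_pi_div_two.log (by positivity)

/-- First-order correction in the Wallis product: `log W n = log (π / 2) - 1 / (4 n) + o(1 / n)`. -/
theorem tendsto_mul_log_W_sub :
    Tendsto (fun n : ℕ => n * (Real.log (Real.Wallis.W n) - Real.log (Real.pi / 2))) atTop
      (𝓝 (-1 / 4)) := by
  have t1 : Tendsto (fun n : ℕ => (1 : ℝ) / (4 * (n + 1))) atTop (𝓝 0) := by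
    have := (tendsto_one_div_add_atTop_nhds_zero_nat (𝕜 := ℝ)).const_mul (1 / 4)
    rw [mul_zero] at this
    refine this.congr fun n => ?_
    field_simp
  have t2 : Tendsto (fun n : ℕ => (1 : ℝ) / (4 * n + 2)) atTop (𝓝 0) := by
    refine squeeze_zero (fun n => by positivity) (fun n => ?_)
      (tendsto_one_div_add_atTop_nhds_zero_nat (𝕜 := ℝ))
    exact one_div_le_one_div_of_le (by positivity) (by have := n.cast_nonneg (α := ℝ); linarith)
  have hlow : ∀ n : ℕ, Real.log (Real.Wallis.W n) + 1 / (4 * (n + 1)) ≤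
      Real.log (Real.pi / 2) := by
    have hm : Monotone fun n : ℕ => Real.log (Real.Wallis.W n) + 1 / (4 * ((n : ℝ) + 1)) :=
      monotone_nat_of_le_succ fun n => by
        have := le_wallisLog n
        simp only [log_W_succ]
        linarith
    have ht := tendsto_log_W.add t1
    rw [add_zero] at ht
    exact fun n => hm.ge_of_tendsto ht n
  have hupp : ∀ n : ℕ, Real.log (Real.pi / 2) ≤
      Real.log (Real.Wallis.W n) + 1 / (4 * n + 2) := by
    have hm : Antitone fun n : ℕ => Real.log (Real.Wallis.W n) + 1 / (4 * (n : ℝ) + 2) :=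
      antitone_nat_of_succ_le fun n => by
        have := wallisLog_le n
        simp only [log_W_succ]
        linarith
    have ht := tendsto_log_W.add t2
    rw [add_zero] at ht
    exact fun n => hm.le_of_tendsto ht n
  have l1 : Tendsto (fun n : ℕ => -1 / 4 + (1 : ℝ) / (4 * (n + 1))) atTop (𝓝 (-1 / 4)) := by
    simpa using t1.const_add (-1 / 4)
  have l2 : Tendsto (fun n : ℕ => -1 / 4 + 1 / 2 * ((1 : ℝ) / (4 * n + 2))) atTop
      (𝓝 (-1 / 4)) := by
    have := (t2.const_mul (1 / 2)).const_add (-1 / 4)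
    rwa [mul_zero, add_zero] at this
  refine tendsto_of_tendsto_of_tendsto_of_le_of_le l2 l1 (fun n => ?_) (fun n => ?_)
  · have h := mul_le_mul_of_nonneg_left (hupp n) n.cast_nonneg (α := ℝ)
    have e : -1 / 4 + 1 / 2 * ((1 : ℝ) / (4 * n + 2)) = -(n * (1 / (4 * n + 2))) := by
      field_simp
      ring
    simp only [e]
    linarith
  · have h := mul_le_mul_of_nonneg_left (hlow n) n.cast_nonneg (α := ℝ)
    have e : -1 / 4 + (1 : ℝ) / (4 * (n + 1)) = -(n * (1 / (4 * (n + 1)))) := by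
      field_simp
      ring
    simp only [e]
    linarith

/-- Abel summation of `∑ log W k`. -/
theorem sum_log_W (m : ℕ) :
    ∑ k ∈ Finset.range m, Real.log (Real.Wallis.W k) =
      m * Real.log (Real.Wallis.W m) - ∑ n ∈ Finset.range m, (n + 1) * wallisLog n := by
  induction m with
  | zero => simp
  | succ m ih =>
    rw [Finset.sum_range_succ, Finset.sum_range_succ, ih, log_W_succ]
    push_cast
    ring

/-- After Abel summation, the logarithm of the Wallis double product is governed by
`∑ d * wallisLog (d - 1)`. Subtracting `1 / (4 d)` makes this series converge, and the harmonic sum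
supplies the power of `m` and the Euler–Mascheroni constant. -/
theorem tendsto_even_of_hasSum {R : ℝ}
    (hR : HasSum (fun n : ℕ => (n + 1) * wallisLog n - 1 / (4 * (n + 1))) R) :
    Tendsto (fun m : ℕ => Real.sqrt m *
        ((2 / Real.pi) ^ m * ∏ k ∈ Finset.range m, Real.Wallis.W k) ^ 2) atTop
      (𝓝 (Real.exp (2 * (-1 / 4 - R - Real.eulerMascheroniConstant / 4)))) := by
  have h1 := (tendsto_mul_log_W_sub.sub hR.tendsto_sum_nat).sub
    (Real.tendsto_harmonic_sub_log.div_const 4)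
  refine ((Real.continuous_exp.tendsto _).comp (h1.const_mul 2)).congr' ?_
  filter_upwards [eventually_ge_atTop 1] with m hm
  have hm0 : (0 : ℝ) < m := by exact_mod_cast hm
  have hW : 0 < ∏ k ∈ Finset.range m, Real.Wallis.W k :=
    Finset.prod_pos fun k _ => Real.Wallis.W_pos k
  have hpos : 0 < Real.sqrt m *
      ((2 / Real.pi) ^ m * ∏ k ∈ Finset.range m, Real.Wallis.W k) ^ 2 := by positivity
  rw [Function.comp_apply, ← Real.exp_log hpos]
  congr 1
  have hH : ∑ n ∈ Finset.range m, ((n + 1) * wallisLog n - 1 / (4 * ((n : ℝ) + 1))) =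
      ∑ n ∈ Finset.range m, (n + 1) * wallisLog n - (harmonic m : ℝ) / 4 := by
    rw [Finset.sum_sub_distrib, harmonic]
    push_cast
    rw [Finset.sum_div]
    congr 1
    refine Finset.sum_congr rfl fun n _ => ?_
    field_simp
  rw [hH, Real.log_mul (by positivity) (by positivity), Real.log_pow,
    Real.log_mul (by positivity) hW.ne', Real.log_pow, Real.log_sqrt hm0.le,
    Real.log_prod (fun k _ => (Real.Wallis.W_pos k).ne'), sum_log_W,
    Real.log_div (by norm_num) Real.pi_ne_zero, Real.log_div Real.pi_ne_zero (by norm_num)]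
  push_cast
  ring

/-! ### Uniform convergence of the zeta-type series -/

/-- Mean value inequality in the form used to integrate up a Taylor estimate: a bound of order `k`
on the derivative gives a bound of order `k + 1`. -/
theorem norm_le_pow_succ {f f' : ℝ → ℂ} {C : ℝ} {k : ℕ} (h0 : f 0 = 0)
    (hf : ∀ u ∈ Set.Icc (0 : ℝ) (1 / 2), HasDerivAt f (f' u) u)
    (hb : ∀ u ∈ Set.Icc (0 : ℝ) (1 / 2), ‖f' u‖ ≤ C * u ^ k) :
    ∀ u ∈ Set.Icc (0 : ℝ) (1 / 2), ‖f u‖ ≤ C * u ^ (k + 1) := by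
  intro u hu
  have hC : 0 ≤ C := by
    have := (norm_nonneg _).trans (hb (1 / 2) (by norm_num))
    exact nonneg_of_mul_nonneg_left this (by positivity)
  have h := norm_image_sub_le_of_norm_deriv_le_segment' (f := f) (f' := f') (a := 0) (b := u)
    (C := C * u ^ k) (fun x hx => (hf x ⟨hx.1, hx.2.trans hu.2⟩).hasDerivWithinAt)
    (fun x hx => (hb x ⟨hx.1, hx.2.le.trans hu.2⟩).trans
      (mul_le_mul_of_nonneg_left (pow_le_pow_left₀ hx.1 hx.2.le k) hC)) u ⟨hu.1, le_rfl⟩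
  rw [h0, sub_zero, sub_zero] at h
  rw [pow_succ, ← mul_assoc]
  exact h

theorem hasDerivAt_one_sub_cpow (w : ℂ) {u : ℝ} (hu : u ∈ Set.Icc (0 : ℝ) (1 / 2)) :
    HasDerivAt (fun u : ℝ => (1 - (u : ℂ)) ^ w) (-w * (1 - (u : ℂ)) ^ (w - 1)) u := by
  have h : (1 - (u : ℂ)) ∈ Complex.slitPlane := by
    left
    simp only [Complex.sub_re, Complex.one_re, Complex.ofReal_re]
    linarith [hu.2]
  have := (((hasDerivAt_id (u : ℂ)).const_sub 1).cpow_const (c := w) h).comp_ofReal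
  exact this.congr_deriv (by simp)

theorem hasDerivAt_one_add_cpow (w : ℂ) {u : ℝ} (hu : u ∈ Set.Icc (0 : ℝ) (1 / 2)) :
    HasDerivAt (fun u : ℝ => (1 + (u : ℂ)) ^ w) (w * (1 + (u : ℂ)) ^ (w - 1)) u := by
  have h : (1 + (u : ℂ)) ∈ Complex.slitPlane := by
    left
    simp only [Complex.add_re, Complex.one_re, Complex.ofReal_re]
    linarith [hu.1]
  have := (((hasDerivAt_id (u : ℂ)).const_add 1).cpow_const (c := w) h).comp_ofReal
  exact this.congr_deriv (by simp)

theorem norm_cpow_le_of_half_le {x : ℝ} (hx : 1 / 2 ≤ x) {w : ℂ} (h0 : w.re ≤ 0)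
    (h8 : -8 ≤ w.re) : ‖(x : ℂ) ^ w‖ ≤ 256 := by
  rw [Complex.norm_cpow_eq_rpow_re_of_pos (by linarith)]
  calc x ^ w.re ≤ (1 / 2 : ℝ) ^ w.re := Real.rpow_le_rpow_of_nonpos (by norm_num) hx h0
    _ ≤ (1 / 2 : ℝ) ^ (-8 : ℝ) :=
        Real.rpow_le_rpow_of_exponent_ge (by norm_num) (by norm_num) h8
    _ = 256 := by
        rw [Real.rpow_neg (by norm_num)]
        norm_num

/-- The region of analytic continuation: convex, containing `0` and a neighbourhood of `3`. -/
def zetaRegion : Set ℂ := {s | -1 / 2 < s.re} ∩ Metric.ball 0 5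

/-- Second-order Taylor remainder of `(1 - u) ^ (-s) + (1 + u) ^ (-s)`, uniformly in `s`. -/
theorem norm_taylor_le {s : ℂ} (hs : s ∈ zetaRegion) {u : ℝ} (hu : u ∈ Set.Icc (0 : ℝ) (1 / 2)) :
    ‖(1 - (u : ℂ)) ^ (-s) + (1 + (u : ℂ)) ^ (-s) - 2 - s * (s + 1) * (u : ℂ) ^ 2‖ ≤
      5 * 6 * 7 * 512 * u ^ 3 := by
  have hre : -1 / 2 < s.re := hs.1
  have hn : ‖s‖ < 5 := by simpa using hs.2
  have hre5 : s.re < 5 := (Complex.re_le_norm s).trans_lt hn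
  have n1 : ‖s + 1‖ ≤ 6 := (norm_add_le _ _).trans (by rw [norm_one]; linarith)
  have n2 : ‖s + 2‖ ≤ 7 := (norm_add_le _ _).trans (by rw [Complex.norm_ofNat]; linarith)
  have hsq : ∀ (c : ℂ) (u : ℝ), HasDerivAt (fun u : ℝ => c * (u : ℂ) ^ 2) (2 * c * u) u := by
    intro c u
    have := (((hasDerivAt_id (u : ℂ)).pow 2).const_mul c).comp_ofReal
    exact this.congr_deriv (by simp; ring)
  have hli : ∀ (c : ℂ) (u : ℝ), HasDerivAt (fun u : ℝ => c * (u : ℂ)) c u := by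
    intro c u
    have := ((hasDerivAt_id (u : ℂ)).const_mul c).comp_ofReal
    exact this.congr_deriv (by simp)
  have b3 : ∀ u ∈ Set.Icc (0 : ℝ) (1 / 2), ‖s * (s + 1) * (s + 2) * ((1 - (u : ℂ)) ^ (-s - 3)
      - (1 + (u : ℂ)) ^ (-s - 3))‖ ≤ 5 * 6 * 7 * 512 * u ^ 0 := by
    intro u hu
    have p1 := norm_cpow_le_of_half_le (x := 1 - u) (by linarith [hu.2]) (w := -s - 3)
      (by simp; linarith) (by simp; linarith)
    have p2 := norm_cpow_le_of_half_le (x := 1 + u) (by linarith [hu.1]) (w := -s - 3)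
      (by simp; linarith) (by simp; linarith)
    push_cast at p1 p2
    rw [norm_mul, norm_mul, norm_mul, pow_zero, mul_one]
    have p3 : ‖(1 - (u : ℂ)) ^ (-s - 3) - (1 + (u : ℂ)) ^ (-s - 3)‖ ≤ 512 :=
      (norm_sub_le _ _).trans (by linarith)
    gcongr
  have b2 := norm_le_pow_succ (f := fun u : ℝ => s * (s + 1) * ((1 - (u : ℂ)) ^ (-s - 2)
      + (1 + (u : ℂ)) ^ (-s - 2) - 2)) (by simp; norm_num) (fun u hu => by
        have := (((hasDerivAt_one_sub_cpow (-s - 2) hu).add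
          (hasDerivAt_one_add_cpow (-s - 2) hu)).sub_const 2).const_mul (s * (s + 1))
        refine this.congr_deriv ?_
        rw [show -s - 2 - 1 = -s - 3 by ring]
        ring) b3
  have b1 := norm_le_pow_succ (f := fun u : ℝ => s * ((1 - (u : ℂ)) ^ (-s - 1)
      - (1 + (u : ℂ)) ^ (-s - 1)) - 2 * (s * (s + 1)) * u) (by simp) (fun u hu => by
        have := (((hasDerivAt_one_sub_cpow (-s - 1) hu).sub
          (hasDerivAt_one_add_cpow (-s - 1) hu)).const_mul s).sub (hli (2 * (s * (s + 1))) u)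
        refine this.congr_deriv ?_
        rw [show -s - 1 - 1 = -s - 2 by ring]
        ring) b2
  exact norm_le_pow_succ (f := fun u : ℝ => (1 - (u : ℂ)) ^ (-s) + (1 + (u : ℂ)) ^ (-s) - 2
      - s * (s + 1) * (u : ℂ) ^ 2) (by simp; norm_num) (fun u hu => by
        have := (((hasDerivAt_one_sub_cpow (-s) hu).add
          (hasDerivAt_one_add_cpow (-s) hu)).sub_const 2).sub (hsq (s * (s + 1)) u)
        refine this.congr_deriv ?_
        ring) b1 u hu

/-- The `n`-th term, with `d = n + 1`, of the series whose sum continues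
`(1 - 2 ^ (2 - s)) ζ(s - 1) - s (s + 1) 2 ^ (- s - 2) ζ(s + 1)`: a weighted second difference of
`x ↦ x ^ (-s)` at `2 d`, minus its leading asymptotics. -/
noncomputable def zetaTerm (n : ℕ) (s : ℂ) : ℂ :=
  (n + 1) * ((2 * n + 1 : ℂ) ^ (-s) + (2 * n + 3 : ℂ) ^ (-s) - 2 * (2 * n + 2 : ℂ) ^ (-s)) -
    s * (s + 1) / 2 * (2 * n + 2 : ℂ) ^ (-s - 1)

theorem norm_zetaTerm_le (n : ℕ) {s : ℂ} (hs : s ∈ zetaRegion) :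
    ‖zetaTerm n s‖ ≤ 5 * 6 * 7 * 512 * (1 / ((n + 1 : ℕ) : ℝ) ^ (3 / 2 : ℝ)) := by
  set N : ℝ := 2 * n + 2 with hN
  have hN0 : 0 < N := by positivity
  have hN2 : 2 ≤ N := by rw [hN]; linarith [n.cast_nonneg (α := ℝ)]
  set u : ℝ := N⁻¹ with hu
  have hu' : u ∈ Set.Icc (0 : ℝ) (1 / 2) :=
    ⟨by positivity, by rw [hu, one_div]; exact inv_anti₀ (by norm_num) hN2⟩
  have hNc : (N : ℂ) ≠ 0 := by exact_mod_cast hN0.ne'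
  have m1 : (2 * n + 1 : ℂ) ^ (-s) = (N : ℂ) ^ (-s) * (1 - (u : ℂ)) ^ (-s) := by
    have := Complex.mul_cpow_ofReal_nonneg hN0.le (sub_nonneg.2 (hu'.2.trans (by norm_num)) :
      0 ≤ 1 - u) (-s)
    push_cast at this
    rw [← this]
    congr 1
    rw [hu, Complex.ofReal_inv, mul_sub, mul_inv_cancel₀ hNc, hN]
    push_cast
    ring
  have m2 : (2 * n + 3 : ℂ) ^ (-s) = (N : ℂ) ^ (-s) * (1 + (u : ℂ)) ^ (-s) := by
    have := Complex.mul_cpow_ofReal_nonneg hN0.le (by linarith [hu'.1] : 0 ≤ 1 + u) (-s)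
    push_cast at this
    rw [← this]
    congr 1
    rw [hu, Complex.ofReal_inv, mul_add, mul_inv_cancel₀ hNc, hN]
    push_cast
    ring
  have m3 : (2 * n + 2 : ℂ) = (N : ℂ) := by rw [hN]; push_cast; ring
  have m4 : (n + 1 : ℂ) = (N : ℂ) / 2 := by rw [← m3]; ring
  have key : zetaTerm n s = (N : ℂ) / 2 * (N : ℂ) ^ (-s) *
      ((1 - (u : ℂ)) ^ (-s) + (1 + (u : ℂ)) ^ (-s) - 2 - s * (s + 1) * (u : ℂ) ^ 2) := by
    rw [zetaTerm, m1, m2, m3, m4, Complex.cpow_sub _ _ hNc, Complex.cpow_one, hu,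
      Complex.ofReal_inv]
    field_simp
  rw [key, norm_mul, norm_mul, norm_div, Complex.norm_real, Complex.norm_ofNat,
    Complex.norm_cpow_eq_rpow_re_of_pos hN0, Real.norm_of_nonneg hN0.le]
  calc N / 2 * N ^ (-s).re * _ ≤ N / 2 * N ^ (1 / 2 : ℝ) * (5 * 6 * 7 * 512 * u ^ 3) := by
        gcongr
        · linarith
        · rw [Complex.neg_re]
          have : -1 / 2 < s.re := hs.1
          linarith
        · exact norm_taylor_le hs hu'
    _ = 5 * 6 * 7 * 512 * (1 / 2 * N ^ (-3 / 2 : ℝ)) := by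
        have : N ^ (-3 / 2 : ℝ) = N * N ^ (1 / 2 : ℝ) * u ^ 3 := by
          rw [hu, inv_pow, ← Real.rpow_natCast, ← Real.rpow_neg hN0.le, ← Real.rpow_one_add' hN0.le
            (by norm_num), ← Real.rpow_add hN0]
          norm_num
        rw [this]
        ring
    _ ≤ _ := by
        have h1 : N ^ (-3 / 2 : ℝ) ≤ ((n + 1 : ℕ) : ℝ) ^ (-3 / 2 : ℝ) :=
          Real.rpow_le_rpow_of_nonpos (by positivity)
            (by rw [hN]; push_cast; linarith [n.cast_nonneg (α := ℝ)]) (by norm_num)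
        have h2 : 0 ≤ N ^ (-3 / 2 : ℝ) := by positivity
        rw [one_div (((n + 1 : ℕ) : ℝ) ^ (3 / 2 : ℝ)), ← Real.rpow_neg (by positivity),
          show -(3 / 2 : ℝ) = -3 / 2 by norm_num]
        gcongr
        linarith

/-! ### Evaluation of the series through the zeta function -/

theorem hasSum_even_cpow {w : ℂ} (hw : 1 < w.re) :
    HasSum (fun n : ℕ => (2 * n + 2 : ℂ) ^ (-w)) ((2 : ℂ) ^ (-w) * riemannZeta w) := by
  have h := (((summable_nat_add_iff 1).2 (Complex.summable_one_div_nat_cpow.2 hw)).hasSum)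
  push_cast at h
  rw [← zeta_eq_tsum_one_div_nat_add_one_cpow hw] at h
  have e : (fun n : ℕ => (2 * n + 2 : ℂ) ^ (-w)) =
      fun n : ℕ => (2 : ℂ) ^ (-w) * (1 / ((n : ℂ) + 1) ^ w) := by
    funext n
    have hm := Complex.mul_cpow_ofReal_nonneg (zero_le_two) (by positivity : (0 : ℝ) ≤ n + 1)
      (-w)
    push_cast at hm
    rw [one_div, ← Complex.cpow_neg, ← hm]
    congr 1
    ring
  rw [e]
  exact h.mul_left _

theorem hasSum_odd_cpow {w : ℂ} (hw : 1 < w.re) :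
    HasSum (fun n : ℕ => (2 * n + 1 : ℂ) ^ (-w)) ((1 - (2 : ℂ) ^ (-w)) * riemannZeta w) := by
  have h := (((summable_nat_add_iff 1).2 (Complex.summable_one_div_nat_cpow.2 hw)))
  have hs := h.hasSum
  push_cast at hs
  rw [← zeta_eq_tsum_one_div_nat_add_one_cpow hw] at hs
  have ho : Summable (fun n : ℕ => (2 * n + 1 : ℂ) ^ (-w)) := by
    refine (h.comp_injective (i := fun n => 2 * n) (fun a b hab => by simpa using hab)).congr ?_
    intro n
    simp [Complex.cpow_neg]
  have he := hasSum_even_cpow hw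
  have h2 : HasSum (fun n : ℕ => 1 / ((n : ℂ) + 1) ^ w)
      (∑' n : ℕ, (2 * n + 1 : ℂ) ^ (-w) + (2 : ℂ) ^ (-w) * riemannZeta w) := by
    refine HasSum.even_add_odd ?_ ?_
    · convert ho.hasSum using 2 with n
      simp [Complex.cpow_neg]
    · convert he using 2 with n
      push_cast
      rw [Complex.cpow_neg, one_div]
      ring_nf
  have := h2.unique hs
  convert ho.hasSum using 1
  linear_combination -this

/-- In the half-plane of absolute convergence the series `∑ zetaTerm n s` splits into sums over
odd and even integers. -/
theorem hasSum_zetaTerm {s : ℂ} (hs : 2 < s.re) :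
    HasSum (fun n => zetaTerm n s)
      ((1 - 2 * (2 : ℂ) ^ (-(s - 1))) * riemannZeta (s - 1) -
        s * (s + 1) / 2 * ((2 : ℂ) ^ (-(s + 1)) * riemannZeta (s + 1))) := by
  have o1 := hasSum_odd_cpow (w := s - 1) (by simp; linarith)
  have o0 := hasSum_odd_cpow (w := s) (by linarith)
  have e1 := hasSum_even_cpow (w := s - 1) (by simp; linarith)
  have e2 := hasSum_even_cpow (w := s + 1) (by simp; linarith)
  have hodd : ∀ n : ℕ, (2 * n + 1 : ℂ) ^ (-(s - 1)) = (2 * n + 1) * (2 * n + 1 : ℂ) ^ (-s) := by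
    intro n
    have : (2 * n + 1 : ℂ) ≠ 0 := by exact_mod_cast Nat.succ_ne_zero (2 * n)
    rw [show -(s - 1) = 1 + -s by ring, Complex.cpow_add _ _ this, Complex.cpow_one]
  have heven : ∀ n : ℕ, (2 * n + 2 : ℂ) ^ (-(s - 1)) = (2 * n + 2) * (2 * n + 2 : ℂ) ^ (-s) := by
    intro n
    have : (2 * n + 2 : ℂ) ≠ 0 := by exact_mod_cast Nat.succ_ne_zero (2 * n + 1)
    rw [show -(s - 1) = 1 + -s by ring, Complex.cpow_add _ _ this, Complex.cpow_one]
  -- The weights `n` and `n + 1` of the odd number `2 n + 1` come from its two neighbours.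
  have a : HasSum (fun n : ℕ => (n : ℂ) * (2 * n + 1 : ℂ) ^ (-s))
      (((1 - (2 : ℂ) ^ (-(s - 1))) * riemannZeta (s - 1) -
        (1 - (2 : ℂ) ^ (-s)) * riemannZeta s) / 2) := by
    have e : (fun n : ℕ => (n : ℂ) * (2 * n + 1 : ℂ) ^ (-s)) = fun n : ℕ =>
        ((2 * n + 1 : ℂ) ^ (-(s - 1)) - (2 * n + 1 : ℂ) ^ (-s)) / 2 := by
      funext n
      rw [hodd]
      ring
    rw [e]
    exact (o1.sub o0).div_const 2
  have a' := (hasSum_nat_add_iff' 1).2 a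
  have h := ((((o1.sub a).add a').sub e1).sub (e2.mul_left (s * (s + 1) / 2)))
  have hterm : (fun n => zetaTerm n s) = fun n : ℕ =>
      (2 * n + 1 : ℂ) ^ (-(s - 1)) - n * (2 * n + 1 : ℂ) ^ (-s) +
        ((n + 1 : ℕ) : ℂ) * (2 * ((n + 1 : ℕ) : ℂ) + 1) ^ (-s) - (2 * n + 2 : ℂ) ^ (-(s - 1)) -
          s * (s + 1) / 2 * (2 * n + 2 : ℂ) ^ (-(s + 1)) := by
    funext n
    rw [hodd, heven, zetaTerm, show -(s + 1) = -s - 1 by ring]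
    push_cast
    rw [show 2 * ((n : ℂ) + 1) + 1 = 2 * n + 3 by ring]
    ring
  rw [hterm]
  refine (congrArg (HasSum _) ?_).mp h
  simp only [Finset.sum_range_one, Nat.cast_zero, zero_mul, sub_zero]
  ring

theorem convex_zetaRegion : Convex ℝ zetaRegion :=
  (convex_halfSpace_re_gt _).inter (convex_ball _ _)

theorem isOpen_zetaRegion : IsOpen zetaRegion :=
  (isOpen_lt continuous_const Complex.continuous_re).inter Metric.isOpen_ball

theorem zero_mem_zetaRegion : (0 : ℂ) ∈ zetaRegion := by
  constructor
  · norm_num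
  · simp

theorem differentiable_zetaTerm (n : ℕ) : Differentiable ℂ (zetaTerm n) := by
  have h1 : (2 * n + 1 : ℂ) ≠ 0 := by exact_mod_cast Nat.succ_ne_zero (2 * n)
  have h2 : (2 * n + 2 : ℂ) ≠ 0 := by exact_mod_cast Nat.succ_ne_zero (2 * n + 1)
  have h3 : (2 * n + 3 : ℂ) ≠ 0 := by exact_mod_cast Nat.succ_ne_zero (2 * n + 2)
  have key : ∀ {c : ℂ}, c ≠ 0 → ∀ a : ℂ, Differentiable ℂ fun s : ℂ => c ^ (-s - a) :=
    fun hc a s => (((hasDerivAt_id s).neg.sub_const a).const_cpow (Or.inl hc)).differentiableAt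
  have k1 := key h1 0
  have k2 := key h2 0
  have k3 := key h3 0
  have k4 := key h2 1
  simp only [sub_zero] at k1 k2 k3
  unfold zetaTerm
  fun_prop

/-- The derivative at `0` turns the second difference of `x ^ (-s)` into that of `-log x`, which is
the summand in `tendsto_even_of_hasSum`. -/
theorem deriv_zetaTerm_zero (n : ℕ) :
    deriv (zetaTerm n) 0 = (((n + 1) * wallisLog n - 1 / (4 * (n + 1)) : ℝ) : ℂ) := by
  have h1 : (2 * n + 1 : ℂ) ≠ 0 := by exact_mod_cast Nat.succ_ne_zero (2 * n)
  have h2 : (2 * n + 2 : ℂ) ≠ 0 := by exact_mod_cast Nat.succ_ne_zero (2 * n + 1)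
  have h3 : (2 * n + 3 : ℂ) ≠ 0 := by exact_mod_cast Nat.succ_ne_zero (2 * n + 2)
  have hn : (n + 1 : ℂ) ≠ 0 := by exact_mod_cast Nat.succ_ne_zero n
  have key : ∀ {c : ℂ}, c ≠ 0 → HasDerivAt (fun s : ℂ => c ^ (-s)) (-Complex.log c) 0 :=
    fun hc => ((hasDerivAt_id (0 : ℂ)).neg.const_cpow (Or.inl hc)).congr_deriv (by simp)
  have k4 : HasDerivAt (fun s : ℂ => (2 * n + 2 : ℂ) ^ (-s - 1))
      (-((2 * n + 2 : ℂ)⁻¹ * Complex.log (2 * n + 2))) 0 :=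
    (((hasDerivAt_id (0 : ℂ)).neg.sub_const 1).const_cpow (Or.inl h2)).congr_deriv (by
      simp [Complex.cpow_neg_one])
  have k5 : HasDerivAt (fun s : ℂ => s * (s + 1) / 2) (1 / 2) 0 :=
    (((hasDerivAt_id (0 : ℂ)).mul ((hasDerivAt_id (0 : ℂ)).add_const 1)).div_const 2).congr_deriv
      (by simp)
  have h := ((((key h1).add (key h3)).sub ((key h2).const_mul 2)).const_mul (n + 1 : ℂ)).sub
    (k5.mul k4)
  have hd : HasDerivAt (zetaTerm n) _ 0 := h
  rw [hd.deriv]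
  have l1 : Complex.log (2 * n + 1) = (Real.log (2 * n + 1) : ℝ) := by
    rw [Complex.ofReal_log (by positivity)]; push_cast; rfl
  have l2 : Complex.log (2 * n + 2) = (Real.log (2 * n + 2) : ℝ) := by
    rw [Complex.ofReal_log (by positivity)]; push_cast; rfl
  have l3 : Complex.log (2 * n + 3) = (Real.log (2 * n + 3) : ℝ) := by
    rw [Complex.ofReal_log (by positivity)]; push_cast; rfl
  rw [l1, l2, l3, wallisLog]
  have h4 : (2 * n + 2 : ℂ) ^ (-(0 : ℂ) - 1) = (2 * (n + 1 : ℂ))⁻¹ := by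
    rw [neg_zero, zero_sub, Complex.cpow_neg_one]
    ring
  rw [h4]
  push_cast
  field_simp
  ring

theorem summable_bound :
    Summable fun n : ℕ => 5 * 6 * 7 * 512 * (1 / ((n + 1 : ℕ) : ℝ) ^ (3 / 2 : ℝ)) :=
  ((summable_nat_add_iff 1).2 (Real.summable_one_div_nat_rpow.2 (by norm_num))).mul_left _

/-- Identity theorem on `zetaRegion`, with `riemannZeta₁ s = (s - 1) ζ(s)`. The factor `s - 2`
cancels the pole of `ζ(s - 1)`, while the pole of `ζ(s + 1)` at `0` is absorbed by the factor `s` in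
front of it. -/
theorem tsum_zetaTerm_eq : Set.EqOn (fun s => (s - 2) * ∑' n, zetaTerm n s)
    (fun s => (1 - 2 * (2 : ℂ) ^ (-(s - 1))) * riemannZeta₁ (s - 1) -
      (s - 2) * (s + 1) / 2 * (2 : ℂ) ^ (-(s + 1)) * riemannZeta₁ (s + 1)) zetaRegion := by
  have hp : ∀ a : ℂ, Differentiable ℂ fun s : ℂ => (2 : ℂ) ^ (-(s + a)) := fun a s =>
    (((hasDerivAt_id s).add_const a).neg.const_cpow (Or.inl two_ne_zero)).differentiableAt
  have hp1 : Differentiable ℂ fun s : ℂ => (2 : ℂ) ^ (-(s - 1)) := hp (-1)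
  have hp2 := hp 1
  have hL : DifferentiableOn ℂ (fun s => (s - 2) * ∑' n, zetaTerm n s) zetaRegion :=
    (by fun_prop : DifferentiableOn ℂ (fun s : ℂ => s - 2) zetaRegion).mul
      (Complex.differentiableOn_tsum_of_summable_norm summable_bound
        (fun n => (differentiable_zetaTerm n).differentiableOn) isOpen_zetaRegion
        (fun n s hs => norm_zetaTerm_le n hs))
  have hR : Differentiable ℂ (fun s => (1 - 2 * (2 : ℂ) ^ (-(s - 1))) * riemannZeta₁ (s - 1) -
      (s - 2) * (s + 1) / 2 * (2 : ℂ) ^ (-(s + 1)) * riemannZeta₁ (s + 1)) := by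
    fun_prop
  refine (hL.analyticOnNhd isOpen_zetaRegion).eqOn_of_preconnected_of_eventuallyEq
    (hR.differentiableOn.analyticOnNhd isOpen_zetaRegion) convex_zetaRegion.isPreconnected
    (z₀ := 3) ⟨by norm_num, by norm_num⟩ ?_
  have hev : ∀ᶠ s : ℂ in 𝓝 3, 2 < s.re :=
    (isOpen_lt continuous_const Complex.continuous_re).mem_nhds (by norm_num)
  filter_upwards [hev] with s hs
  have n1 : s - 1 ≠ 1 := fun h => by
    have := congrArg Complex.re h
    simp at this
    linarith
  have n2 : s + 1 ≠ 1 := fun h => by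
    have := congrArg Complex.re h
    simp at this
    simp [this] at hs
    linarith
  have n3 : s - 2 ≠ 0 := fun h => n1 (by linear_combination h)
  have n4 : s ≠ 0 := fun h => n2 (by linear_combination h)
  rw [(hasSum_zetaTerm hs).tsum_eq, riemannZeta_eq_inv_sub_mul n1, riemannZeta_eq_inv_sub_mul n2,
    show s - 1 - 1 = s - 2 by ring, show s + 1 - 1 = s by ring]
  field_simp

theorem riemannZeta_neg_one : riemannZeta (-1) = -1 / 12 := by
  have := riemannZeta_neg_nat_eq_bernoulli 1
  norm_num at this
  rw [this]
  norm_num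

theorem deriv_riemannZeta₁_neg_one :
    deriv riemannZeta₁ (-1) = -1 / 12 - 2 * deriv riemannZeta (-1) := by
  have h1 : HasDerivAt (fun s : ℂ => (s - 1) * riemannZeta s) _ (-1) :=
    ((hasDerivAt_id (-1 : ℂ)).sub_const 1).mul
      (differentiableAt_riemannZeta (by norm_num : (-1 : ℂ) ≠ 1)).hasDerivAt
  have h2 : riemannZeta₁ =ᶠ[𝓝 (-1)] fun s : ℂ => (s - 1) * riemannZeta s := by
    filter_upwards [isOpen_ne.mem_nhds (by norm_num : (-1 : ℂ) ≠ 1)] with s hs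
    have : s - 1 ≠ 0 := sub_ne_zero.2 hs
    rw [riemannZeta_eq_inv_sub_mul hs, mul_inv_cancel_left₀ this]
  rw [h2.deriv_eq, h1.deriv, riemannZeta_neg_one]
  simp
  ring

/-- The value of the convergent series in `tendsto_even_of_hasSum`, obtained by differentiating
`tsum_zetaTerm_eq` at `0`. The constants come from `ζ(-1) = -1 / 12` and
`ζ(s) = 1 / (s - 1) + γ + O(s - 1)`. -/
theorem exists_hasSum_wallisLog : ∃ R : ℝ,
    HasSum (fun n : ℕ => (n + 1) * wallisLog n - 1 / (4 * (n + 1))) R ∧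
    (R : ℂ) = -Complex.log 2 / 12 - 1 / 4 - 3 * deriv riemannZeta (-1) -
      Real.eulerMascheroniConstant / 4 := by
  have hsum := Complex.hasSum_deriv_of_summable_norm summable_bound
    (fun n => (differentiable_zetaTerm n).differentiableOn) isOpen_zetaRegion
    (fun n s hs => norm_zetaTerm_le n hs) zero_mem_zetaRegion
  have hdiff := (Complex.differentiableOn_tsum_of_summable_norm summable_bound
    (fun n => (differentiable_zetaTerm n).differentiableOn) isOpen_zetaRegion
    (fun n s hs => norm_zetaTerm_le n hs)).differentiableAt
      (isOpen_zetaRegion.mem_nhds zero_mem_zetaRegion)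
  set G : ℂ → ℂ := fun s => ∑' n, zetaTerm n s with hG
  have hG0 : G 0 = 0 := by
    have : ∀ n, zetaTerm n 0 = 0 := fun n => by
      simp [zetaTerm]
      norm_num
    simp [hG, this]
  simp only [deriv_zetaTerm_zero] at hsum
  have hre := Complex.hasSum_re hsum
  simp only [Complex.ofReal_re] at hre
  have hR : ((deriv G 0).re : ℂ) = deriv G 0 :=
    (Complex.hasSum_ofReal.2 hre).unique hsum
  refine ⟨_, hre, ?_⟩
  rw [hR]
  have hL : HasDerivAt (fun s => (s - 2) * G s) (-2 * deriv G 0) 0 :=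
    (((hasDerivAt_id (0 : ℂ)).sub_const 2).mul hdiff.hasDerivAt).congr_deriv (by
      simp [hG0])
  have z1 : HasDerivAt (fun s : ℂ => riemannZeta₁ (s - 1)) (deriv riemannZeta₁ (-1)) 0 := by
    have := (differentiable_riemannZeta₁ (0 - 1)).hasDerivAt.comp_sub_const 0 1
    simpa using this
  have z2 : HasDerivAt (fun s : ℂ => riemannZeta₁ (s + 1)) Real.eulerMascheroniConstant 0 := by
    have := (differentiable_riemannZeta₁ (0 + 1)).hasDerivAt.comp_add_const 0 1
    simpa using this
  have p1 : HasDerivAt (fun s : ℂ => (2 : ℂ) ^ (-(s - 1))) (-2 * Complex.log 2) 0 :=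
    (((hasDerivAt_id (0 : ℂ)).sub_const 1).neg.const_cpow (Or.inl two_ne_zero)).congr_deriv (by
      simp)
  have p2 : HasDerivAt (fun s : ℂ => (2 : ℂ) ^ (-(s + 1))) (-(1 / 2) * Complex.log 2) 0 :=
    (((hasDerivAt_id (0 : ℂ)).add_const 1).neg.const_cpow (Or.inl two_ne_zero)).congr_deriv (by
      simp [Complex.cpow_neg_one])
  have p3 : HasDerivAt (fun s : ℂ => (s - 2) * (s + 1) / 2) (-1 / 2) 0 :=
    ((((hasDerivAt_id (0 : ℂ)).sub_const 2).mul
      ((hasDerivAt_id (0 : ℂ)).add_const 1)).div_const 2).congr_deriv (by simp; norm_num)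
  have hRd := (((p1.const_mul 2).const_sub 1).mul z1).sub ((p3.mul p2).mul z2)
  have heq := hL.unique (hRd.congr_of_eventuallyEq
    (tsum_zetaTerm_eq.eventuallyEq_of_mem (isOpen_zetaRegion.mem_nhds zero_mem_zetaRegion)))
  have hz1 : riemannZeta₁ (0 - 1) = 1 / 6 := by
    have h := riemannZeta_eq_inv_sub_mul (by norm_num : (-1 : ℂ) ≠ 1)
    rw [riemannZeta_neg_one] at h
    rw [zero_sub]
    norm_num at h
    linear_combination -2 * h
  have c1 : (2 : ℂ) ^ (-((0 : ℂ) - 1)) = 2 := by simp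
  have c2 : (2 : ℂ) ^ (-((0 : ℂ) + 1)) = 1 / 2 := by simp [Complex.cpow_neg_one]
  simp only [Pi.mul_apply] at heq
  rw [hz1, c1, c2, deriv_riemannZeta₁_neg_one, zero_add, riemannZeta₁_one] at heq
  linear_combination -heq / 2

/-! ### Conclusion -/

/-- **Basor–Tracy asymptotics for the double-jump symbol.** As `n → ∞`,
`√(n/2)·D_n(f) − ((1+(−1)^n)/2)·2^{1/6}·exp(6ζ′(−1)) → 0`; i.e.
`D_n(f) = ((1+(−1)^n)/2)·√(2/n)·2^{1/6} e^{6ζ′(−1)} + o(n^{−1/2})`. -/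
theorem basor_tracy_double_jump :
    Tendsto (fun n : ℕ =>
        ((Real.sqrt ((n : ℝ) / 2) : ℝ) : ℂ) * toeplitzDet basorTracySymbol n -
          ((1 + (-1 : ℂ) ^ n) / 2) * (((2 : ℝ) ^ ((1 : ℝ) / 6) : ℝ) : ℂ) *
            Complex.exp (6 * deriv riemannZeta (-1)))
      atTop (𝓝 0) := by
  obtain ⟨R, hR, hRz⟩ := exists_hasSum_wallisLog
  have hconst : ((Real.exp (2 * (-1 / 4 - R - Real.eulerMascheroniConstant / 4)) : ℝ) : ℂ) =
      (((2 : ℝ) ^ ((1 : ℝ) / 6) : ℝ) : ℂ) * Complex.exp (6 * deriv riemannZeta (-1)) := by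
    rw [Real.rpow_def_of_pos two_pos]
    have hlog : Complex.log 2 = (Real.log 2 : ℝ) := by
      rw [Complex.ofReal_log two_pos.le, Complex.ofReal_ofNat]
    push_cast
    rw [← Complex.exp_add, hRz, hlog]
    congr 1
    ring
  have heven := (Complex.continuous_ofReal.tendsto _).comp (tendsto_even_of_hasSum hR)
  rw [hconst] at heven
  -- Along `n = 2 m` the sequence converges by `heven`; along odd `n` it vanishes identically.
  have h0 := heven.sub_const
    ((((2 : ℝ) ^ ((1 : ℝ) / 6) : ℝ) : ℂ) * Complex.exp (6 * deriv riemannZeta (-1)))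
  rw [sub_self] at h0
  rw [Metric.tendsto_atTop] at h0 ⊢
  intro ε hε
  obtain ⟨N, hN⟩ := h0 ε hε
  refine ⟨2 * N, fun n hn => ?_⟩
  rcases Nat.even_or_odd' n with ⟨m, rfl | rfl⟩
  · convert hN m (by omega) using 2
    rw [toeplitzDet_even, pow_mul]
    simp
  · rw [toeplitzDet_odd, pow_succ, pow_mul]
    simpa using hε
end

section
/- Wu's asymptotics for the Ising row-correlation Toeplitz determinant above the critical temperature (leading order): Let 0 < γ_1 < 1 < γ_2 with γ_1·γ_2 < 1, and define the symbol φ on the unit circle by φ(e^{iθ}) = (1 − γ_1 e^{iθ})(1 − γ_2 e^{-iθ}) / (|1 − γ_1 e^{iθ}|·|1 − γ_2 e^{iθ}|). Then, as n → ∞, √(π n)·γ_2^{n}·D_n(φ) converges to (1 − γ_1²)^{1/4}·(1 − γ_2^{-2})^{-1/4}·(1 − γ_1 γ_2)^{-1/2}; equivalently D_n(φ) = (π n)^{-1/2}·γ_2^{-n}·(1 − γ_1²)^{1/4}·(1 − γ_2^{-2})^{-1/4}·(1 − γ_1 γ_2)^{-1/2}·(1 + o(1)). -/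
/-!
Write `a = γ₁` and `b = 1 / γ₂`, so that `0 < a < b < 1`, and `P(z) = ((1 - a z) (1 - b z)) ^ (1/2)`. On the
unit circle the symbol is `φ(z) = -z⁻¹ P(z) / P(1/z)` (`wuSymbol_eq`). Hence the matrix `-T_n(φ)` is obtained
from the `(n+1) × (n+1)` Toeplitz matrix `T` of the symbol `P(z) / P(1/z)`, of winding number zero, by deleting
the first row and the last column. By Cramer's rule (`toeplitzDet_wuSymbol`), `D_n(φ)` is `det T` times the
bottom-left entry of `T⁻¹`.

Let `p` and `r = 1 / p` be the Taylor series of `P` and `1 / P`. Instead of Wiener-Hopf operators on `ℓ²`, the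
proof uses an exactly solvable finite model. Replace `r` by the inverse `ρ` of the polynomial obtained by
truncating `p` at degree `n + 1`. Let `K` be the companion matrix of this polynomial and `G` the unipotent
upper triangular Toeplitz matrix of `ρ`. Since the columns of `G` are windows of a solution of the linear
recurrence, `f(K) G` is the Toeplitz matrix of `f(z) ρ(1/z)` for every power series `f` with sufficiently
decaying coefficients (`peval_comp_mul_gmat`). Consequently the model matrix `p(K) G` has

* determinant `√(det (1 - a K) det (1 - b K))`, which is the square root of the product of the values of the
  truncated polynomial at `a` and `b` (`det_tmat`), and tends to `√(P(a) P(b))`;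
* inverse `G⁻¹ (r(K) G) G⁻¹` (`exact_inverse`), whose bottom-left entry is `∑ m, r (m + n) * ρ m`.

The coefficients of `((1 - a z) (1 - b z)) ^ (-1/2)` satisfy `r n ~ (1 - a/b) ^ (-1/2) * b ^ n / √(π n)`, by
Wallis' formula (`tendsto_coeff_pw`), so the bottom-left entry is asymptotic to
`(1 - a/b) ^ (-1/2) * b ^ n / √(π n) / P(b)`. Multiplying by `√(P(a) P(b))` gives the constant of the theorem.

It remains to compare `T` with the model. With `s = √b`, the coefficients of `ρ` are bounded by `2 C s ^ k`
uniformly in `n` (`exists_approx`), so the two matrices differ by `O(s ^ n * b ^ (n + j - k))` in the entry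
`j, k`. The entries of the explicit inverse are polynomially bounded, and those of its last row decay like
`b ^ (n - j)`. The determinant therefore changes by a factor `1 + o(1)` (`det_perturb`), and the
bottom-left entry of the inverse changes by `o(b ^ n / √n)` (`solve_perturb`), as shown in `tendsto_cramer`.
-/

open MeasureTheory Filter Topology

/-- Onsager's symbol for the 2D Ising model at `T > T_c`, in single-valued form:
`φ(e^{iθ}) = (1 − γ₁e^{iθ})(1 − γ₂e^{−iθ}) / (|1 − γ₁e^{iθ}| |1 − γ₂e^{iθ}|)`. -/
noncomputable def wuSymbol (γ₁ γ₂ : ℝ) (θ : ℝ) : ℂ :=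
  ((1 - (γ₁ : ℂ) * Complex.exp (Complex.I * (θ : ℂ))) *
      (1 - (γ₂ : ℂ) * Complex.exp (-Complex.I * (θ : ℂ)))) /
    (((‖1 - (γ₁ : ℂ) * Complex.exp (Complex.I * (θ : ℂ))‖ *
        ‖1 - (γ₂ : ℂ) * Complex.exp (Complex.I * (θ : ℂ))‖ : ℝ)) : ℂ)

/-! ### Determinants of perturbations of the identity -/

namespace Wu

lemma abs_prod_one_add_sub_one_le {ι : Type*} (s : Finset ι) (f : ι → ℝ) :
    |∏ i ∈ s, (1 + f i) - 1| ≤ ∏ i ∈ s, (1 + |f i|) - 1 := by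
  classical
  induction s using Finset.induction_on with
  | empty => simp
  | insert a s ha ih =>
    rw [Finset.prod_insert ha, Finset.prod_insert ha]
    set P := ∏ i ∈ s, (1 + f i)
    set Q := ∏ i ∈ s, (1 + |f i|)
    have e : (1 + f a) * P - 1 = (P - 1) + f a * (P - 1) + f a := by ring
    rw [e]
    calc |(P - 1) + f a * (P - 1) + f a| ≤ |P - 1| + |f a * (P - 1)| + |f a| := by
          exact (abs_add_le _ _).trans (by gcongr; exact abs_add_le _ _)
      _ = |P - 1| + |f a| * |P - 1| + |f a| := by rw [abs_mul]
      _ ≤ (Q - 1) + |f a| * (Q - 1) + |f a| := by gcongr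
      _ = _ := by ring

/-- Expanding over permutations, the identity permutation contributes `∏ (1 + E i i)`; the other terms are
dominated by the corresponding terms of `∏ i, ∑ j, (δ j i + |E j i|)`. -/
lemma abs_det_one_add_sub_one_le {ι : Type*} [Fintype ι] [DecidableEq ι] (E : Matrix ι ι ℝ) :
    |(1 + E).det - 1| ≤ Real.exp (∑ i, ∑ j, |E j i|) - 1 := by
  set a : ι → ι → ℝ := fun j i => (1 : Matrix ι ι ℝ) j i + |E j i| with ha
  have h1 : ∀ i j, 0 ≤ (1 : Matrix ι ι ℝ) i j := by
    intro i j; rw [Matrix.one_apply]; split_ifs <;> simp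
  have ha0 : ∀ j i, 0 ≤ a j i := fun j i => add_nonneg (h1 _ _) (abs_nonneg _)
  have hle : ∀ j i, |(1 + E) j i| ≤ a j i := by
    intro j i
    rw [Matrix.add_apply]
    refine (abs_add_le _ _).trans ?_
    rw [abs_of_nonneg (h1 _ _)]
  have key : ∀ σ : Equiv.Perm ι,
      |((Equiv.Perm.sign σ : ℤ) : ℝ) * ∏ i, (1 + E) (σ i) i - if σ = 1 then 1 else 0|
        ≤ ∏ i, a (σ i) i - if σ = 1 then 1 else 0 := by
    intro σ
    split_ifs with h
    · subst h
      simpa [ha] using abs_prod_one_add_sub_one_le Finset.univ (fun i => E i i)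
    · rw [sub_zero, sub_zero, abs_mul, Finset.abs_prod]
      have : |((Equiv.Perm.sign σ : ℤ) : ℝ)| = 1 := by
        rcases Int.units_eq_one_or (Equiv.Perm.sign σ) with h | h <;> simp [h]
      rw [this, one_mul]
      exact Finset.prod_le_prod (fun i _ => abs_nonneg _) (fun i _ => hle _ _)
  have hone : ∑ σ : Equiv.Perm ι, (if σ = 1 then (1 : ℝ) else 0) = 1 := by simp
  calc |(1 + E).det - 1|
      = |∑ σ : Equiv.Perm ι, (((Equiv.Perm.sign σ : ℤ) : ℝ) * ∏ i, (1 + E) (σ i) i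
          - if σ = 1 then 1 else 0)| := by
        rw [Finset.sum_sub_distrib, hone, Matrix.det_apply']
    _ ≤ ∑ σ : Equiv.Perm ι, (∏ i, a (σ i) i - if σ = 1 then 1 else 0) :=
        (Finset.abs_sum_le_sum_abs _ _).trans (Finset.sum_le_sum fun σ _ => key σ)
    _ = ∑ σ : Equiv.Perm ι, ∏ i, a (σ i) i - 1 := by rw [Finset.sum_sub_distrib, hone]
    _ ≤ ∑ f : ι → ι, ∏ i, a (f i) i - 1 := by
        gcongr
        have := Finset.sum_map Finset.univ
          (⟨fun σ : Equiv.Perm ι => (σ : ι → ι), DFunLike.coe_injective⟩ : Equiv.Perm ι ↪ (ι → ι))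
          (fun f => ∏ i, a (f i) i)
        simp only [Function.Embedding.coeFn_mk] at this
        rw [← this]
        exact Finset.sum_le_sum_of_subset_of_nonneg (Finset.subset_univ _)
          (fun f _ _ => Finset.prod_nonneg fun i _ => ha0 _ _)
    _ = ∏ i, ∑ j, a j i - 1 := by
        rw [Finset.prod_univ_sum]; simp
    _ ≤ ∏ i, Real.exp (∑ j, |E j i|) - 1 := by
        gcongr with i
        · exact fun i _ => Finset.sum_nonneg fun j _ => ha0 _ _
        · simp only [ha, Finset.sum_add_distrib]
          have : ∑ j, (1 : Matrix ι ι ℝ) j i = 1 := by simp [Matrix.one_apply]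
          rw [this, add_comm]
          exact Real.add_one_le_exp _
    _ = _ := by rw [Real.exp_sum]

end Wu

/-! ### The companion matrix -/

namespace Wu

/-- The companion matrix of `q 0 + q 1 x + ⋯ + q (n+1) x ^ (n+1)` (with `q 0 = 1`), normalized so that
`det (1 - x K)` is this polynomial: it sends a window of a sequence satisfying the recurrence
`∑ i ≤ n+1, q i * ρ (k - i) = 0`, listed from the newest term to the oldest, to the next window. -/
def comp (q : ℕ → ℝ) (n : ℕ) : Matrix (Fin (n + 1)) (Fin (n + 1)) ℝ :=
  Matrix.of fun i j => if i = 0 then -q (j + 1) else if (j : ℕ) + 1 = i then 1 else 0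

lemma comp_mulVec_zero (q : ℕ → ℝ) (n : ℕ) (v : Fin (n + 1) → ℝ) :
    (comp q n).mulVec v 0 = -∑ j : Fin (n + 1), q (j + 1) * v j := by
  simp [comp, Matrix.mulVec, dotProduct]

lemma comp_mulVec_succ (q : ℕ → ℝ) (n : ℕ) (v : Fin (n + 1) → ℝ) (i : Fin n) :
    (comp q n).mulVec v i.succ = v i.castSucc := by
  simp only [comp, Matrix.mulVec, dotProduct, Matrix.of_apply, Fin.succ_ne_zero, if_false]
  rw [Finset.sum_eq_single i.castSucc]
  · simp
  · intro b _ hb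
    rw [if_neg, zero_mul]
    intro h
    apply hb
    ext
    simpa using h
  · simp

/-- Multiplying `1 - x K` on the right by the unipotent lower triangular matrix with entries `x ^ (j - k)`
makes it upper triangular. -/
lemma det_one_sub_smul_comp (q : ℕ → ℝ) (h0 : q 0 = 1) (n : ℕ) (x : ℝ) :
    (1 - x • comp q n).det = ∑ k ∈ Finset.range (n + 2), q k * x ^ k := by
  set V : Matrix (Fin (n + 1)) (Fin (n + 1)) ℝ :=
    Matrix.of fun j k => if k ≤ j then x ^ ((j : ℕ) - k) else 0 with hV
  have hVdet : V.det = 1 := by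
    rw [Matrix.det_of_isLowerTriangular]
    · simp [hV]
    · intro i j hij
      simp only [hV, Matrix.of_apply]
      rw [if_neg (not_le.2 (by simpa using hij))]
  have hmul : ∀ i k, ((1 - x • comp q n) * V) i k
      = V i k - x * (comp q n).mulVec (fun j => V j k) i := by
    intro i k
    rw [sub_mul, one_mul, Matrix.smul_mul, Matrix.sub_apply, Matrix.smul_apply, smul_eq_mul]
    rfl
  have hsucc : ∀ (i : Fin n) k, ((1 - x • comp q n) * V) i.succ k = if i.succ = k then 1 else 0 := by
    intro i k
    rw [hmul, comp_mulVec_succ]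
    simp only [hV, Matrix.of_apply]
    rcases lt_trichotomy i.succ k with h | h | h
    · have h' : ¬ k ≤ i.castSucc := by
        simp only [Fin.lt_def, Fin.le_def, Fin.val_succ, Fin.val_castSucc] at *; omega
      rw [if_neg (not_le.2 h), if_neg h', if_neg h.ne]; simp
    · subst h
      have h' : ¬ i.succ ≤ i.castSucc := by
        simp only [Fin.le_def, Fin.val_succ, Fin.val_castSucc] at *; omega
      rw [if_neg h']; simp
    · have h' : k ≤ i.castSucc := by
        simp only [Fin.lt_def, Fin.le_def, Fin.val_succ, Fin.val_castSucc] at *; omega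
      rw [if_pos h.le, if_pos h', if_neg h.ne']
      have : ((i.succ : Fin (n+1)) : ℕ) - k = ((i.castSucc : Fin (n+1)) : ℕ) - k + 1 := by
        simp only [Fin.lt_def, Fin.le_def, Fin.val_succ, Fin.val_castSucc] at *; omega
      rw [this, pow_succ]; ring
  have hzero : ((1 - x • comp q n) * V) 0 0 = ∑ k ∈ Finset.range (n + 2), q k * x ^ k := by
    rw [hmul, comp_mulVec_zero, Finset.sum_range_succ', h0, Finset.sum_range]
    simp only [hV, Matrix.of_apply, Fin.zero_le, if_true, Fin.val_zero, tsub_zero, pow_zero]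
    rw [mul_neg, sub_neg_eq_add, add_comm, Finset.mul_sum, mul_one]
    congr 1
    refine Finset.sum_congr rfl fun i _ => ?_
    rw [pow_succ]; ring
  have : ((1 - x • comp q n) * V).det = ∑ k ∈ Finset.range (n + 2), q k * x ^ k := by
    rw [Matrix.det_of_isUpperTriangular, Fin.prod_univ_succ, hzero]
    · simp [hsucc]
    · intro i j hij
      have hij' : j < i := hij
      obtain ⟨i, rfl⟩ := Fin.exists_succ_eq.2 (Fin.ne_zero_of_lt hij')
      rw [hsucc, if_neg hij'.ne']
  rwa [Matrix.det_mul, hVdet, mul_one] at this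

/-- If `ρ` satisfies the recurrence, powers of the companion matrix act on the Toeplitz matrix of `ρ` by
shifting the index, as each column is a window of `ρ`. -/
lemma comp_mul_toeplitz (q : ℕ → ℝ) (h0 : q 0 = 1) (n : ℕ) (ρ : ℤ → ℝ)
    (hrec : ∀ k : ℕ, ∑ i ∈ Finset.range (n + 2), q i * ρ ((k : ℤ) + 1 - i) = 0) (m : ℕ) :
    comp q n ^ m * (Matrix.of fun j k : Fin (n + 1) => ρ ((k : ℤ) - j))
      = Matrix.of fun j k : Fin (n + 1) => ρ ((m : ℤ) + k - j) := by
  induction m with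
  | zero => simp
  | succ m ih =>
    rw [pow_succ', mul_assoc, ih]
    ext j k
    have : (comp q n * Matrix.of fun j k : Fin (n + 1) => ρ ((m : ℤ) + k - j)) j k
      = (comp q n).mulVec (fun j : Fin (n + 1) => ρ ((m : ℤ) + k - j)) j := rfl
    rw [this]
    refine Fin.cases ?_ (fun i => ?_) j
    · rw [comp_mulVec_zero]
      have h := hrec (m + k)
      rw [Finset.sum_range_succ', h0, Finset.sum_range] at h
      simp only [Matrix.of_apply, Fin.val_zero]
      push_cast at h ⊢
      rw [neg_eq_iff_add_eq_zero]
      convert h using 2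
      · refine Finset.sum_congr rfl fun i _ => ?_
        congr 2; ring
      · rw [one_mul]; congr 1; ring
    · rw [comp_mulVec_succ]
      simp only [Matrix.of_apply, Fin.val_castSucc, Fin.val_succ]
      congr 1; push_cast; ring

end Wu

/-! ### Toeplitz matrices as functions of the companion matrix -/

namespace Wu

/-- The value of a real power series at an element of a real normed algebra (a real or complex number, or
a matrix). It is a `tsum`, hence `0` where the series is not summable. -/
noncomputable def peval {𝔸 : Type*} [NormedRing 𝔸] [NormedAlgebra ℝ 𝔸] (f : PowerSeries ℝ) (x : 𝔸) : 𝔸 :=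
  ∑' k, PowerSeries.coeff k f • x ^ k

lemma peval_mul {𝔸 : Type*} [NormedRing 𝔸] [NormedAlgebra ℝ 𝔸] [CompleteSpace 𝔸]
    (f g : PowerSeries ℝ) (x : 𝔸) (hf : Summable fun k => ‖PowerSeries.coeff k f • x ^ k‖)
    (hg : Summable fun k => ‖PowerSeries.coeff k g • x ^ k‖) :
    peval (f * g) x = peval f x * peval g x := by
  unfold peval
  rw [tsum_mul_tsum_eq_tsum_sum_antidiagonal_of_summable_norm hf hg]
  refine tsum_congr fun n => ?_
  rw [PowerSeries.coeff_mul, Finset.sum_smul]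
  refine Finset.sum_congr rfl fun ij hij => ?_
  rw [smul_mul_smul_comm, ← pow_add, Finset.HasAntidiagonal.mem_antidiagonal.1 hij]

lemma peval_one {𝔸 : Type*} [NormedRing 𝔸] [NormedAlgebra ℝ 𝔸] (x : 𝔸) :
    peval (1 : PowerSeries ℝ) x = 1 := by
  unfold peval
  rw [tsum_eq_single 0]
  · simp
  · intro k hk
    rw [PowerSeries.coeff_one, if_neg hk, zero_smul]

lemma peval_linear {𝔸 : Type*} [NormedRing 𝔸] [NormedAlgebra ℝ 𝔸] (a : ℝ) (x : 𝔸) :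
    peval (1 - PowerSeries.C a * PowerSeries.X : PowerSeries ℝ) x = 1 - a • x := by
  unfold peval
  rw [tsum_eq_sum (s := Finset.range 2)]
  · simp [Finset.sum_range_succ, PowerSeries.coeff_X, PowerSeries.coeff_one, sub_eq_add_neg]
  · intro k hk
    have : 2 ≤ k := not_lt.1 fun h => hk (Finset.mem_range.2 h)
    have h1 : k ≠ 0 := by omega
    have h2 : k ≠ 1 := by omega
    simp [PowerSeries.coeff_X, PowerSeries.coeff_one, h1, h2]

lemma summable_linear {𝔸 : Type*} [NormedRing 𝔸] [NormedAlgebra ℝ 𝔸] (a : ℝ) (x : 𝔸) :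
    Summable fun k => ‖PowerSeries.coeff k (1 - PowerSeries.C a * PowerSeries.X : PowerSeries ℝ) • x ^ k‖ := by
  refine summable_of_ne_finset_zero (s := Finset.range 2) fun k hk => ?_
  have : 2 ≤ k := not_lt.1 fun h => hk (Finset.mem_range.2 h)
  have h1 : k ≠ 0 := by omega
  have h2 : k ≠ 1 := by omega
  simp [PowerSeries.coeff_X, PowerSeries.coeff_one, h1, h2]

section Matrices

attribute [local instance] Matrix.linftyOpNormedRing Matrix.linftyOpNormedAlgebra

lemma linfty_norm_le {n : ℕ} (A : Matrix (Fin n) (Fin n) ℝ) : ‖A‖ ≤ ∑ i, ∑ j, |A i j| := by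
  rw [Matrix.linfty_opNorm_def]
  have h0 : 0 ≤ ∑ i, ∑ j, |A i j| :=
    Finset.sum_nonneg fun i _ => Finset.sum_nonneg fun j _ => abs_nonneg _
  rw [← Real.coe_toNNReal _ h0, NNReal.coe_le_coe]
  refine Finset.sup_le fun i _ => ?_
  rw [← NNReal.coe_le_coe, Real.coe_toNNReal _ h0]
  push_cast
  exact Finset.single_le_sum (f := fun i => ∑ j, |A i j|)
    (fun i _ => Finset.sum_nonneg fun j _ => abs_nonneg _) (Finset.mem_univ i)

/-- The Toeplitz matrix of the sequence `ρ`, upper triangular when `ρ` vanishes at negative indices. -/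
def gmat (ρ : ℤ → ℝ) (n : ℕ) : Matrix (Fin (n + 1)) (Fin (n + 1)) ℝ :=
  Matrix.of fun j k => ρ ((k : ℤ) - j)

/-- The upper triangular Toeplitz matrix with entries `q 0, q 1, …`, the inverse of `gmat ρ n` when `ρ`
is the convolution inverse of `q` up to index `n`. -/
def umat (q : ℕ → ℝ) (n : ℕ) : Matrix (Fin (n + 1)) (Fin (n + 1)) ℝ :=
  Matrix.of fun j k => if j ≤ k then q ((k : ℕ) - j) else 0

/-- The `(n+1) × (n+1)` Toeplitz matrix whose `j, k` entry is the coefficient of index `j - k` of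
`f(z) * ρ(1/z)`, where `ρ(z) = ∑ k, ρ k * z ^ k`. -/
noncomputable def tmat (f : PowerSeries ℝ) (ρ : ℤ → ℝ) (n : ℕ) :
    Matrix (Fin (n + 1)) (Fin (n + 1)) ℝ :=
  Matrix.of fun j k => ∑' m : ℕ, PowerSeries.coeff m f * ρ ((m : ℤ) + k - j)

/-- The sequence `ρ`, supported on `k ≥ 0`, is the convolution inverse of the polynomial with coefficients
`q 0 = 1, …, q (n+1)`, and its growth `s ^ k` is slow enough for power series with coefficients `O(b ^ k)`
to converge at the companion matrix. -/
structure Data (n : ℕ) (q : ℕ → ℝ) (ρ : ℤ → ℝ) (C b s : ℝ) : Prop where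
  q0 : q 0 = 1
  neg : ∀ k : ℤ, k < 0 → ρ k = 0
  zero : ρ 0 = 1
  hrec : ∀ k : ℕ, ∑ i ∈ Finset.range (n + 2), q i * ρ ((k : ℤ) + 1 - i) = 0
  spos : 0 < s
  bpos : 0 ≤ b
  bs : b * s < 1
  bound : ∀ k : ℤ, |ρ k| ≤ C * s ^ k

variable {n : ℕ} {q : ℕ → ℝ} {ρ : ℤ → ℝ} {C b s : ℝ}

lemma det_gmat (hD : Data n q ρ C b s) : (gmat ρ n).det = 1 := by
  rw [Matrix.det_of_isUpperTriangular]
  · simp [gmat, hD.zero]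
  · intro i j hij
    have : j < i := hij
    simp only [gmat, Matrix.of_apply]
    exact hD.neg _ (by have := Fin.lt_def.1 this; omega)

lemma umat_mul_gmat (hD : Data n q ρ C b s) : umat q n * gmat ρ n = 1 := by
  ext j k
  rw [Matrix.mul_apply]
  simp only [umat, gmat, Matrix.of_apply]
  rcases lt_trichotomy k j with h | h | h
  · rw [Matrix.one_apply_ne h.ne']
    refine Finset.sum_eq_zero fun i _ => ?_
    split_ifs with hji
    · rw [hD.neg, mul_zero]
      have := Fin.lt_def.1 h; have := Fin.le_def.1 hji; omega
    · rw [zero_mul]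
  · subst h
    rw [Matrix.one_apply_eq, Finset.sum_eq_single k]
    · simp [hD.q0, hD.zero]
    · intro i _ hi
      split_ifs with hji
      · rw [hD.neg, mul_zero]
        have := Fin.lt_def.1 (lt_of_le_of_ne hji (Ne.symm hi)); omega
      · rw [zero_mul]
    · simp
  · rw [Matrix.one_apply_ne h.ne]
    have hlt := Fin.lt_def.1 h
    have hk := k.2
    have hr := hD.hrec ((k : ℕ) - j - 1)
    rw [← Finset.sum_subset (s₁ := Finset.range ((k : ℕ) - j + 1))] at hr
    · rw [Finset.sum_fin_eq_sum_range]
      have : ∀ i ∈ Finset.range (n + 1), i ∉ Finset.Ico (j : ℕ) (k + 1) →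
        (if h : i < n + 1 then (if j ≤ (⟨i, h⟩ : Fin (n+1)) then q (((⟨i, h⟩ : Fin (n+1)) : ℕ) - j) else 0)
          * ρ ((k : ℤ) - ((⟨i, h⟩ : Fin (n+1)) : ℕ)) else 0) = 0 := by
        intro i hi hi'
        rw [dif_pos (Finset.mem_range.1 hi)]
        split_ifs with hji
        · rw [hD.neg, mul_zero]
          have := Fin.le_def.1 hji
          simp only [Finset.mem_Ico, not_and, not_lt] at hi' this
          have := hi' this
          simp only []; omega
        · rw [zero_mul]
      rw [← Finset.sum_subset (s₁ := Finset.Ico (j : ℕ) (k + 1)) _ this, Finset.sum_Ico_eq_sum_range, ← hr]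
      · have e : (k : ℕ) + 1 - j = k - j + 1 := by omega
        rw [e]
        refine Finset.sum_congr rfl fun i hi => ?_
        have hi := Finset.mem_range.1 hi
        rw [dif_pos (by omega), if_pos (by simp [Fin.le_def])]
        congr 2
        · simp
        · push_cast [show 1 ≤ (k : ℕ) - j by omega, hlt.le]; ring
      · intro i hi
        simp only [Finset.mem_Ico, Finset.mem_range] at *
        omega
    · intro i hi
      simp only [Finset.mem_range] at *
      omega
    · intro i hi hi'
      simp only [Finset.mem_range] at *
      rw [hD.neg, mul_zero]
      omega

/-- The powers of the companion matrix are Toeplitz matrices of shifts of `ρ` times a fixed matrix, so their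
entries are `O(s ^ m)`. -/
lemma comp_pow_eq (hD : Data n q ρ C b s) (m : ℕ) :
    comp q n ^ m = (Matrix.of fun j k : Fin (n + 1) => ρ ((m : ℤ) + k - j)) * umat q n := by
  rw [← comp_mul_toeplitz q hD.q0 n ρ hD.hrec m, mul_assoc]
  have : gmat ρ n * umat q n = 1 := mul_eq_one_comm.1 (umat_mul_gmat hD)
  unfold gmat at this
  rw [this, mul_one]

lemma summable_comp (hD : Data n q ρ C b s) (f : PowerSeries ℝ) {Cf : ℝ}
    (hf : ∀ k, |PowerSeries.coeff k f| ≤ Cf * b ^ k) :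
    Summable fun k => ‖PowerSeries.coeff k f • comp q n ^ k‖ := by
  set K : ℝ := ∑ i : Fin (n + 1), ∑ j : Fin (n + 1), C * s ^ ((j : ℤ) - i)
  have hs := hD.spos
  have hb := hD.bpos
  have hG : Summable fun k : ℕ => Cf * K * ‖umat q n‖ * (b * s) ^ k :=
    (summable_geometric_of_lt_one (by positivity) hD.bs).mul_left _
  refine Summable.of_nonneg_of_le (fun k => norm_nonneg _) (fun k => ?_) hG
  have h1 : ‖(Matrix.of fun j k' : Fin (n + 1) => ρ ((k : ℤ) + k' - j))‖ ≤ K * s ^ k := by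
    refine (linfty_norm_le _).trans ?_
    simp only [K, Finset.sum_mul]
    refine Finset.sum_le_sum fun i _ => Finset.sum_le_sum fun j _ => ?_
    simp only [Matrix.of_apply]
    refine (hD.bound _).trans_eq ?_
    rw [add_sub_assoc, zpow_add₀ hs.ne', zpow_natCast]; ring
  rw [norm_smul, comp_pow_eq hD, Real.norm_eq_abs]
  calc _ ≤ (Cf * b ^ k) * ((K * s ^ k) * ‖umat q n‖) := by
        gcongr
        · exact (abs_nonneg _).trans (hf k)
        · exact hf k
        · exact (norm_mul_le _ _).trans (by gcongr)
    _ = _ := by rw [mul_pow]; ring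

/-- The key identity: `f(K) G` is the Toeplitz matrix of `f(z) ρ(1/z)`, with `K` the companion matrix and `G`
the unipotent matrix `gmat ρ n`. -/
lemma peval_comp_mul_gmat (hD : Data n q ρ C b s) (f : PowerSeries ℝ) {Cf : ℝ}
    (hf : ∀ k, |PowerSeries.coeff k f| ≤ Cf * b ^ k) :
    peval f (comp q n) * gmat ρ n = tmat f ρ n := by
  have h := ((summable_comp hD f hf).of_norm.hasSum).mul_right (gmat ρ n)
  ext i j
  have h2 := h.map (Matrix.entryAddMonoidHom ℝ i j) (by
    show Continuous fun A : Matrix (Fin (n+1)) (Fin (n+1)) ℝ => A i j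
    fun_prop)
  unfold peval
  refine h2.tsum_eq.symm.trans ?_
  simp only [tmat, Matrix.of_apply]
  refine tsum_congr fun m => ?_
  have := comp_mul_toeplitz q hD.q0 n ρ hD.hrec m
  simp only [Function.comp, Matrix.smul_mul, gmat, this]
  rfl

/-- As `p(K) r(K) = 1` for mutually inverse series, `p(K) G` has the inverse `G⁻¹ r(K) = G⁻¹ (r(K) G) G⁻¹`. -/
theorem exact_inverse (hD : Data n q ρ C b s) (p r : PowerSeries ℝ) {Cp Cr : ℝ}
    (hp : ∀ k, |PowerSeries.coeff k p| ≤ Cp * b ^ k)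
    (hr : ∀ k, |PowerSeries.coeff k r| ≤ Cr * b ^ k) (hpr : p * r = 1) :
    tmat p ρ n * (umat q n * tmat r ρ n * umat q n) = 1 := by
  have hGU : gmat ρ n * umat q n = 1 := mul_eq_one_comm.1 (umat_mul_gmat hD)
  rw [← peval_comp_mul_gmat hD p hp, ← peval_comp_mul_gmat hD r hr]
  calc _ = peval p (comp q n) * (gmat ρ n * umat q n) * peval r (comp q n) * (gmat ρ n * umat q n) := by
        simp only [mul_assoc]
    _ = _ := by
        rw [hGU, mul_one, mul_one, ← peval_mul _ _ _ (summable_comp hD p hp) (summable_comp hD r hr),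
          hpr, peval_one]

/-- `det p(K)` is a square root of `det (1 - a₁ K) det (1 - a₂ K)`, and it is the nonnegative one because
`p` is itself a square. -/
theorem det_tmat (hD : Data n q ρ C b s) (p h : PowerSeries ℝ) {Cp Ch a₁ a₂ : ℝ}
    (hp : ∀ k, |PowerSeries.coeff k p| ≤ Cp * b ^ k)
    (hh : ∀ k, |PowerSeries.coeff k h| ≤ Ch * b ^ k) (hhp : h * h = p)
    (hpp : p * p = (1 - PowerSeries.C a₁ * PowerSeries.X) * (1 - PowerSeries.C a₂ * PowerSeries.X)) :
    (tmat p ρ n).det = Real.sqrt ((∑ k ∈ Finset.range (n + 2), q k * a₁ ^ k) *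
      (∑ k ∈ Finset.range (n + 2), q k * a₂ ^ k)) := by
  have sp := summable_comp hD p hp
  have sh := summable_comp hD h hh
  rw [← peval_comp_mul_gmat hD p hp, Matrix.det_mul, det_gmat hD, mul_one]
  have h0 : 0 ≤ (peval p (comp q n)).det := by
    rw [← hhp, peval_mul _ _ _ sh sh, Matrix.det_mul]
    exact mul_self_nonneg _
  rw [← det_one_sub_smul_comp q hD.q0, ← det_one_sub_smul_comp q hD.q0, ← Matrix.det_mul,
    ← peval_linear, ← peval_linear, ← peval_mul _ _ _ (summable_linear _ _) (summable_linear _ _),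
    ← hpp, peval_mul _ _ _ sp sp, Matrix.det_mul, Real.sqrt_mul_self h0]

end Matrices
end Wu

/-! ### Binomial series and their coefficients -/

namespace Wu

lemma choose_succ_real (s : ℝ) (k : ℕ) :
    Ring.choose s (k + 1) * (k + 1) = Ring.choose s k * (s - k) := by
  have h1 := Ring.descPochhammer_eq_factorial_smul_choose s (k + 1)
  have h0 := Ring.descPochhammer_eq_factorial_smul_choose s k
  rw [descPochhammer_succ_right, Polynomial.smeval_mul, h0] at h1
  simp only [nsmul_eq_mul, Nat.factorial_succ] at h1
  have hk : (k.factorial : ℝ) ≠ 0 := by positivity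
  have : (Polynomial.X - (k : Polynomial ℤ)).smeval s = s - k := by
    rw [Polynomial.smeval_sub, Polynomial.smeval_X, ← Polynomial.C_eq_natCast, Polynomial.smeval_C]
    simp
  rw [this] at h1
  apply mul_left_cancel₀ hk
  push_cast at h1
  linarith

lemma abs_choose_le {s : ℝ} (hs : |s| ≤ 1) (k : ℕ) : |Ring.choose s k| ≤ 1 := by
  induction k with
  | zero => simp
  | succ k ih =>
    have h := congrArg abs (choose_succ_real s k)
    rw [abs_mul, abs_mul, abs_of_pos (by positivity : (0 : ℝ) < k + 1)] at h
    have h2 : |s - k| ≤ k + 1 := by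
      refine (abs_sub _ _).trans ?_
      rw [abs_of_nonneg (by positivity : (0 : ℝ) ≤ k)]; linarith
    have h3 : |Ring.choose s k| * |s - k| ≤ 1 * (k + 1) := by gcongr
    rw [← h] at h3
    exact le_of_mul_le_mul_right h3 (by positivity)

/-- `(1 - x X) ^ s` as a formal power series, for a real exponent `s`. -/
noncomputable def bser (s x : ℝ) : PowerSeries ℝ :=
  PowerSeries.rescale (-x) (PowerSeries.binomialSeries ℝ s)

lemma coeff_bser (s x : ℝ) (k : ℕ) :
    PowerSeries.coeff k (bser s x) = (-x) ^ k * Ring.choose s k := by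
  simp [bser, PowerSeries.coeff_rescale]

lemma bser_mul (s t x : ℝ) : bser s x * bser t x = bser (s + t) x := by
  simp [bser, PowerSeries.binomialSeries_add]

lemma bser_zero (x : ℝ) : bser 0 x = 1 := by
  simp [bser, PowerSeries.binomialSeries_zero]

lemma bser_one (x : ℝ) : bser 1 x = 1 - PowerSeries.C x * PowerSeries.X := by
  have := PowerSeries.binomialSeries_nat (R := ℝ) (A := ℝ) 1
  simp only [Nat.cast_one, pow_one] at this
  rw [bser, this, map_add, map_one, PowerSeries.rescale_X, map_neg, neg_mul, sub_eq_add_neg]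

lemma abs_coeff_bser_le {s x : ℝ} (hs : |s| ≤ 1) (hx : 0 ≤ x) (k : ℕ) :
    |PowerSeries.coeff k (bser s x)| ≤ x ^ k := by
  rw [coeff_bser, abs_mul, abs_pow, abs_neg, abs_of_nonneg hx]
  exact mul_le_of_le_one_right (by positivity) (abs_choose_le hs k)

/-- `((1 - a X) (1 - b X)) ^ s` as a formal power series, for a real exponent `s`. -/
noncomputable def pw (a b s : ℝ) : PowerSeries ℝ := bser s a * bser s b

lemma pw_mul (a b s t : ℝ) : pw a b s * pw a b t = pw a b (s + t) := by
  unfold pw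
  rw [← bser_mul, ← bser_mul]; ring

lemma pw_zero (a b : ℝ) : pw a b 0 = 1 := by simp [pw, bser_zero]

lemma pw_one (a b : ℝ) : pw a b 1 =
    (1 - PowerSeries.C a * PowerSeries.X) * (1 - PowerSeries.C b * PowerSeries.X) := by
  simp [pw, bser_one]

lemma abs_coeff_pw_le {a b s : ℝ} (ha : 0 < a) (hab : a < b) (hs : |s| ≤ 1) (k : ℕ) :
    |PowerSeries.coeff k (pw a b s)| ≤ (1 - a / b)⁻¹ * b ^ k := by
  have hb : 0 < b := ha.trans hab
  have hq : a / b < 1 := (div_lt_one hb).2 hab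
  rw [pw, PowerSeries.coeff_mul, Finset.Nat.sum_antidiagonal_eq_sum_range_succ_mk]
  calc _ ≤ ∑ i ∈ Finset.range (k + 1), |PowerSeries.coeff i (bser s a) * PowerSeries.coeff (k - i) (bser s b)| :=
        Finset.abs_sum_le_sum_abs _ _
    _ ≤ ∑ i ∈ Finset.range (k + 1), b ^ k * (a / b) ^ i := by
        refine Finset.sum_le_sum fun i hi => ?_
        rw [abs_mul]
        have hi : i ≤ k := Nat.lt_succ_iff.1 (Finset.mem_range.1 hi)
        calc _ ≤ a ^ i * b ^ (k - i) := by
              gcongr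
              · exact abs_coeff_bser_le hs ha.le _
              · exact abs_coeff_bser_le hs hb.le _
          _ = _ := by
              rw [div_pow, ← pow_sub_mul_pow b hi]; field_simp
    _ = (∑ i ∈ Finset.range (k + 1), (a / b) ^ i) * b ^ k := by rw [← Finset.mul_sum, mul_comm]
    _ ≤ _ := by
        gcongr
        rw [← tsum_geometric_of_lt_one (by positivity) hq]
        exact (summable_geometric_of_lt_one (by positivity) hq).sum_le_tsum _ (fun i _ => by positivity)

lemma summable_of_bound {𝔸 : Type*} [NormedDivisionRing 𝔸] [NormedAlgebra ℝ 𝔸]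
    {f : PowerSeries ℝ} {C b : ℝ} (hb : 0 ≤ b) (hf : ∀ k, |PowerSeries.coeff k f| ≤ C * b ^ k)
    {x : 𝔸} (hx : b * ‖x‖ < 1) : Summable fun k => ‖PowerSeries.coeff k f • x ^ k‖ := by
  refine Summable.of_nonneg_of_le (fun k => norm_nonneg _) (fun k => ?_)
    ((summable_geometric_of_lt_one (by positivity) hx).mul_left C)
  rw [norm_smul, norm_pow, Real.norm_eq_abs, mul_pow, ← mul_assoc]
  gcongr
  exact hf k

lemma peval_bser {s x t : ℝ} (h : |x * t| < 1) :
    peval (bser s x) t = (1 - x * t) ^ s := by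
  have h1 := Real.one_add_rpow_hasFPowerSeriesOnBall_zero (a := s)
  have h2 := h1.hasSum (y := -(x * t)) (by
    rw [Metric.mem_eball, edist_zero_right, enorm_neg, Real.enorm_eq_ofReal_abs]
    exact ENNReal.ofReal_lt_one.2 h)
  simp only [binomialSeries_apply, List.ofFn_const, List.prod_replicate, zero_add] at h2
  rw [sub_eq_add_neg, ← h2.tsum_eq]
  unfold peval
  refine tsum_congr fun k => ?_
  rw [coeff_bser, smul_eq_mul, smul_eq_mul, ← neg_mul, mul_pow]; ring

lemma peval_pw {a b s t : ℝ} (ha : 0 < a) (hab : a < b) (hs : |s| ≤ 1) (ht : 0 ≤ t)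
    (hbt : b * t < 1) : peval (pw a b s) t = (1 - a * t) ^ s * (1 - b * t) ^ s := by
  have hb : 0 < b := ha.trans hab
  have hat : a * t < 1 := (mul_le_mul_of_nonneg_right hab.le ht).trans_lt hbt
  rw [pw, peval_mul, peval_bser, peval_bser]
  · rwa [abs_of_nonneg (by positivity)]
  · rwa [abs_of_nonneg (by positivity)]
  · exact summable_of_bound (C := 1) ha.le (fun k => by rw [one_mul]; exact abs_coeff_bser_le hs ha.le k)
      (by rwa [Real.norm_of_nonneg ht])
  · exact summable_of_bound (C := 1) hb.le (fun k => by rw [one_mul]; exact abs_coeff_bser_le hs hb.le k)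
      (by rwa [Real.norm_of_nonneg ht])

/-- The coefficients `cc k = (-1) ^ k * choose (-1/2) k = (2 * k).choose k / 4 ^ k` of `(1 - X) ^ (-1/2)`. -/
noncomputable def cc (k : ℕ) : ℝ := (-1) ^ k * Ring.choose (-1 / 2 : ℝ) k

lemma coeff_bser_half (x : ℝ) (k : ℕ) : PowerSeries.coeff k (bser (-1 / 2) x) = x ^ k * cc k := by
  rw [coeff_bser, cc, neg_pow]; ring

lemma cc_zero : cc 0 = 1 := by simp [cc]

lemma cc_succ (k : ℕ) : cc (k + 1) * (2 * k + 2) = cc k * (2 * k + 1) := by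
  have := choose_succ_real (-1 / 2) k
  unfold cc
  rw [pow_succ]
  linear_combination (-2) * (-1) ^ k * this

lemma cc_pos (k : ℕ) : 0 < cc k := by
  induction k with
  | zero => simp [cc_zero]
  | succ k ih =>
    have h := cc_succ k
    by_contra hc
    have : cc (k + 1) * (2 * k + 2) ≤ 0 := mul_nonpos_of_nonpos_of_nonneg (not_lt.1 hc) (by positivity)
    have : 0 < cc k * (2 * k + 1) := by positivity
    linarith

lemma cc_le_one (k : ℕ) : cc k ≤ 1 := by
  have := abs_choose_le (s := -1 / 2) (by rw [abs_le]; constructor <;> norm_num) k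
  rw [← abs_of_pos (cc_pos k), cc, abs_mul, abs_pow, abs_neg, abs_one, one_pow, one_mul]
  exact this

/-- The exact relation between `cc k` and the partial products of the Wallis formula, which yields
`cc k ~ (π k) ^ (-1/2)`. -/
lemma wallis_cc (k : ℕ) : cc k ^ 2 * ((2 * k + 1) * Real.Wallis.W k) = 1 := by
  induction k with
  | zero => simp [cc_zero, Real.Wallis.W]
  | succ k ih =>
    have h := cc_succ k
    have e : cc (k + 1) = cc k * (2 * k + 1) / (2 * k + 2) := by
      rw [eq_div_iff (by positivity)]; exact h
    rw [Real.Wallis.W_succ, e]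
    refine Eq.trans ?_ ih
    push_cast
    field_simp
    ring

lemma cc_le (k : ℕ) : cc k ≤ Real.sqrt (2 / (k + 1)) := by
  refine Real.le_sqrt_of_sq_le ?_
  have hW := Real.Wallis.le_W k
  have hpi := Real.pi_gt_three
  have hW2 : 1 / 2 ≤ Real.Wallis.W k := by
    refine le_trans ?_ hW
    rw [div_mul_div_comm, div_le_div_iff₀ (by norm_num) (by positivity)]
    nlinarith [(Nat.cast_nonneg k : (0 : ℝ) ≤ k)]
  have h := wallis_cc k
  rw [le_div_iff₀ (by positivity)]
  have h3 : (k + 1 : ℝ) / 2 ≤ (2 * k + 1) * Real.Wallis.W k := by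
    nlinarith [(Nat.cast_nonneg k : (0 : ℝ) ≤ k)]
  nlinarith [sq_nonneg (cc k)]

lemma tendsto_cc : Tendsto (fun k : ℕ => Real.sqrt (Real.pi * k) * cc k) atTop (𝓝 1) := by
  have h1 : Tendsto (fun k : ℕ => (Real.pi / 2) * (2 * k / (2 * k + 1)) / Real.Wallis.W k) atTop
      (𝓝 ((Real.pi / 2) * 1 / (Real.pi / 2))) := by
    refine Tendsto.div (Tendsto.const_mul _ ?_) Real.Wallis.tendsto_W_nhds_pi_div_two (by positivity)
    have : Tendsto (fun k : ℕ => 1 - 1 / (2 * (k : ℝ) + 1)) atTop (𝓝 (1 - 0)) := by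
      refine tendsto_const_nhds.sub ?_
      refine Tendsto.div_atTop tendsto_const_nhds ?_
      exact tendsto_atTop_add_const_right _ _
        (tendsto_natCast_atTop_atTop.const_mul_atTop (by norm_num))
    rw [sub_zero] at this
    refine this.congr fun k => ?_
    field_simp
    ring
  rw [mul_one, div_self (by positivity)] at h1
  have h2 := h1.sqrt
  rw [Real.sqrt_one] at h2
  refine h2.congr fun k => ?_
  have hW := Real.Wallis.W_pos k
  have := wallis_cc k
  rw [← Real.sqrt_sq (cc_pos k).le, ← Real.sqrt_mul (by positivity)]
  congr 1
  have e : cc k ^ 2 = 1 / ((2 * k + 1) * Real.Wallis.W k) := by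
    rw [eq_div_iff (by positivity)]; exact this
  rw [e]
  field_simp

/-- The Taylor coefficients of `((1 - a z) (1 - b z)) ^ (-1/2)` are governed by the singularity at `z = 1/b`:
the `n`-th one is `∑ i ≤ n, cc i * a ^ i * cc (n - i) * b ^ (n - i)`, and dominated convergence gives the limit. -/
lemma tendsto_coeff_pw {a b : ℝ} (ha : 0 < a) (hab : a < b) :
    Tendsto (fun n : ℕ => Real.sqrt (Real.pi * n) * (b ^ n)⁻¹ * PowerSeries.coeff n (pw a b (-1 / 2)))
      atTop (𝓝 ((1 - a / b) ^ (-1 / 2 : ℝ))) := by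
  have hb : 0 < b := ha.trans hab
  have hq : a / b < 1 := (div_lt_one hb).2 hab
  have hq0 : 0 < a / b := by positivity
  have hval : (1 - a / b) ^ (-1 / 2 : ℝ) = ∑' i, cc i * (a / b) ^ i := by
    have := peval_bser (s := -1 / 2) (x := 1) (t := a / b) (by rwa [one_mul, abs_of_pos hq0])
    rw [one_mul] at this
    rw [← this, peval]
    refine tsum_congr fun k => ?_
    rw [coeff_bser_half, one_pow, one_mul, smul_eq_mul]
  have hterm : ∀ n : ℕ, Real.sqrt (Real.pi * n) * (b ^ n)⁻¹ * PowerSeries.coeff n (pw a b (-1 / 2))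
      = ∑' i, if i ≤ n then cc i * (a / b) ^ i * (Real.sqrt (Real.pi * n) * cc (n - i)) else 0 := by
    intro n
    rw [tsum_eq_sum (s := Finset.range (n + 1))]
    · rw [pw, PowerSeries.coeff_mul, Finset.Nat.sum_antidiagonal_eq_sum_range_succ_mk, Finset.mul_sum]
      refine Finset.sum_congr rfl fun i hi => ?_
      have hi : i ≤ n := Nat.lt_succ_iff.1 (Finset.mem_range.1 hi)
      rw [if_pos hi, coeff_bser_half, coeff_bser_half, div_pow, ← pow_sub_mul_pow b hi]
      field_simp
    · intro i hi
      rw [if_neg]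
      simpa using hi
  simp_rw [hterm]
  rw [hval]
  have hsum : Summable fun i : ℕ => Real.sqrt (2 * Real.pi) * ((i + 1) * (a / b) ^ i) := by
    refine Summable.mul_left _ ?_
    have h1 := summable_pow_mul_geometric_of_norm_lt_one 1 (r := a / b)
      (by rwa [Real.norm_of_nonneg hq0.le])
    have h2 := summable_geometric_of_lt_one hq0.le hq
    refine (h1.add h2).congr fun i => ?_
    ring
  refine tendsto_tsum_of_dominated_convergence hsum ?_ (Eventually.of_forall fun n i => ?_)
  · intro i
    rw [← tendsto_add_atTop_iff_nat i]
    have h1 : Tendsto (fun n : ℕ => Real.sqrt (((n : ℝ) + i) / n)) atTop (𝓝 1) := by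
      have : Tendsto (fun n : ℕ => ((n : ℝ) + i) / n) atTop (𝓝 1) := by
        have h0 : Tendsto (fun n : ℕ => 1 + (i : ℝ) / n) atTop (𝓝 (1 + 0)) :=
          tendsto_const_nhds.add (tendsto_const_div_atTop_nhds_zero_nat _)
        rw [add_zero] at h0
        refine h0.congr' ?_
        filter_upwards [eventually_gt_atTop 0] with n hn
        have : (n : ℝ) ≠ 0 := by positivity
        field_simp
      simpa using this.sqrt
    have h2 := (h1.mul tendsto_cc).const_mul (cc i * (a / b) ^ i)
    rw [mul_one, mul_one] at h2
    refine h2.congr' ?_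
    filter_upwards [eventually_gt_atTop 0] with n hn
    have hn' : (0 : ℝ) < n := by positivity
    rw [if_pos (by omega), Nat.add_sub_cancel, ← mul_assoc (Real.sqrt _), ← Real.sqrt_mul (by positivity)]
    congr 3
    push_cast
    field_simp
  · split_ifs with h
    · have hn0 := Real.sqrt_nonneg (Real.pi * n)
      have := cc_pos i
      have := cc_pos (n - i)
      rw [Real.norm_of_nonneg (by positivity)]
      have key : Real.sqrt (Real.pi * n) * cc (n - i) ≤ Real.sqrt (2 * Real.pi) * (i + 1) := by
        calc _ ≤ Real.sqrt (Real.pi * n) * Real.sqrt (2 / ((n - i : ℕ) + 1)) := by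
              gcongr; exact cc_le _
          _ = Real.sqrt (Real.pi * n * (2 / ((n - i : ℕ) + 1))) := by
              exact (Real.sqrt_mul (by positivity) _).symm
          _ ≤ Real.sqrt (2 * Real.pi * (i + 1) ^ 2) := by
              apply Real.sqrt_le_sqrt
              rw [Nat.cast_sub h]
              have hin : (i : ℝ) ≤ n := by exact_mod_cast h
              rw [mul_div_assoc', div_le_iff₀ (by linarith)]
              have hi0 : (0 : ℝ) ≤ i := by positivity
              have : (n : ℝ) ≤ (i + 1) ^ 2 * (n - i + 1) := by
                nlinarith [mul_nonneg hi0 (sub_nonneg.2 hin), mul_nonneg (mul_nonneg hi0 hi0) (sub_nonneg.2 hin)]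
              nlinarith [Real.pi_pos]
          _ = _ := by rw [Real.sqrt_mul (by positivity), Real.sqrt_sq (by positivity)]
      calc _ ≤ 1 * (a / b) ^ i * (Real.sqrt (2 * Real.pi) * (i + 1)) := by
            gcongr; exact cc_le_one i
        _ = _ := by ring
    · rw [norm_zero]; positivity

end Wu

/-! ### Factorization and Fourier coefficients of the symbol -/

namespace Wu

/-- The coefficients of a power series, extended by zero to all integer indices. -/
noncomputable def zext (f : PowerSeries ℝ) (k : ℤ) : ℝ :=
  if 0 ≤ k then PowerSeries.coeff k.toNat f else 0

lemma zext_natCast (f : PowerSeries ℝ) (k : ℕ) : zext f k = PowerSeries.coeff k f := by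
  simp [zext]

lemma zext_neg (f : PowerSeries ℝ) {k : ℤ} (hk : k < 0) : zext f k = 0 := by
  simp [zext, hk]

section Symbol

variable {a b : ℝ}

lemma summable_pw (ha : 0 < a) (hab : a < b) (hb : b < 1) {s : ℝ} (hs : |s| ≤ 1) {z : ℂ}
    (hz : ‖z‖ = 1) : Summable fun k => ‖PowerSeries.coeff k (pw a b s) • z ^ k‖ :=
  summable_of_bound (ha.trans hab).le (abs_coeff_pw_le ha hab hs) (by rw [hz, mul_one]; exact hb)

lemma conj_peval (f : PowerSeries ℝ) (z : ℂ) :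
    (starRingEnd ℂ) (peval f z) = peval f ((starRingEnd ℂ) z) := by
  unfold peval
  rw [Complex.conj_tsum]
  refine tsum_congr fun k => ?_
  simp

/-- Wiener-Hopf form of the symbol: with `P(z) = ((1 - a z) (1 - b z)) ^ (1/2)` and `z` on the unit circle,
`φ(z) = -z⁻¹ P(z) / P(1/z)`. -/
lemma wuSymbol_eq (ha : 0 < a) (hab : a < b) (hb : b < 1) (θ : ℝ) :
    wuSymbol a b⁻¹ θ = -((Complex.exp (Complex.I * θ))⁻¹ *
      peval (pw a b (1 / 2)) (Complex.exp (Complex.I * θ)) *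
      peval (pw a b (-1 / 2)) (Complex.exp (Complex.I * θ))⁻¹) := by
  have hb0 : 0 < b := ha.trans hab
  set z := Complex.exp (Complex.I * θ) with hz
  have hzn : ‖z‖ = 1 := by rw [hz, mul_comm]; exact Complex.norm_exp_ofReal_mul_I θ
  have hz0 : z ≠ 0 := norm_ne_zero_iff.1 (by rw [hzn]; exact one_ne_zero)
  have hzi : ‖z⁻¹‖ = 1 := by rw [norm_inv, hzn, inv_one]
  have hconj : (starRingEnd ℂ) z = z⁻¹ := (Complex.inv_eq_conj hzn).symm
  have hez : Complex.exp (-Complex.I * θ) = z⁻¹ := by rw [neg_mul, Complex.exp_neg]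
  have hh : |(1 / 2 : ℝ)| ≤ 1 := by rw [abs_of_pos] <;> norm_num
  have hh' : |(-1 / 2 : ℝ)| ≤ 1 := by rw [abs_of_neg] <;> norm_num
  have hPP : peval (pw a b (1 / 2)) z * peval (pw a b (1 / 2)) z
      = (1 - a * z) * (1 - b * z) := by
    rw [← peval_mul _ _ _ (summable_pw ha hab hb hh hzn) (summable_pw ha hab hb hh hzn), pw_mul,
      show (1 / 2 + 1 / 2 : ℝ) = 1 by norm_num, pw_one,
      peval_mul _ _ _ (summable_linear _ _) (summable_linear _ _), peval_linear, peval_linear]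
    simp
  have hPR : peval (pw a b (1 / 2)) z⁻¹ * peval (pw a b (-1 / 2)) z⁻¹ = 1 := by
    rw [← peval_mul _ _ _ (summable_pw ha hab hb hh hzi) (summable_pw ha hab hb hh' hzi), pw_mul,
      show (1 / 2 + -1 / 2 : ℝ) = 0 by norm_num, pw_zero, peval_one]
  have hPc : (starRingEnd ℂ) (peval (pw a b (1 / 2)) z) = peval (pw a b (1 / 2)) z⁻¹ := by
    rw [conj_peval, hconj]
  unfold wuSymbol
  rw [hez, ← hz]
  set P := peval (pw a b (1 / 2)) z
  set P' := peval (pw a b (1 / 2)) z⁻¹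
  set R := peval (pw a b (-1 / 2)) z⁻¹
  have hP'0 : P' ≠ 0 := left_ne_zero_of_mul (hPR ▸ one_ne_zero)
  have hP0 : P ≠ 0 := fun h => hP'0 (by rw [← hPc, h, map_zero])
  have hbc : (b : ℂ) ≠ 0 := by exact_mod_cast hb0.ne'
  have hn1 : ‖1 - ((b⁻¹ : ℝ) : ℂ) * z‖ = b⁻¹ * ‖1 - b * z‖ := by
    rw [← Complex.norm_conj, map_sub, map_mul, hconj, map_one, Complex.conj_ofReal]
    have : (1 : ℂ) - ((b⁻¹ : ℝ) : ℂ) * z⁻¹ = -((b⁻¹ : ℝ) : ℂ) * z⁻¹ * (1 - b * z) := by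
      push_cast; field_simp; ring
    rw [this, norm_mul, norm_mul, norm_neg, hzi, Complex.norm_real,
      Real.norm_of_nonneg (by positivity)]
    ring
  have hden : ((‖1 - (a : ℂ) * z‖ * ‖1 - ((b⁻¹ : ℝ) : ℂ) * z‖ : ℝ) : ℂ) = (b : ℂ)⁻¹ * (P * P') := by
    rw [← hPc, Complex.mul_conj', ← Complex.ofReal_pow, ← Complex.ofReal_inv, ← Complex.ofReal_mul]
    congr 1
    rw [hn1, sq, ← norm_mul, hPP, norm_mul]
    ring
  rw [hden]
  have hnum : (1 - (a : ℂ) * z) * (1 - ((b⁻¹ : ℝ) : ℂ) * z⁻¹) = -((b : ℂ)⁻¹ * z⁻¹ * (P * P)) := by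
    rw [hPP]; push_cast; field_simp; ring
  rw [hnum]
  have hR : R = P'⁻¹ := (inv_eq_of_mul_eq_one_right hPR).symm
  rw [hR]
  field_simp

lemma integral_exp_int (N : ℤ) :
    ∫ θ in (-Real.pi)..Real.pi, Complex.exp (Complex.I * N * θ)
      = if N = 0 then ((2 * Real.pi : ℝ) : ℂ) else 0 := by
  split_ifs with h
  · subst h
    simp
    ring
  · have hc : Complex.I * N ≠ 0 := mul_ne_zero Complex.I_ne_zero (by exact_mod_cast h)
    rw [integral_exp_mul_complex hc, div_eq_zero_iff]
    left
    rw [sub_eq_zero, Complex.exp_eq_exp_iff_exists_int]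
    exact ⟨N, by push_cast; ring⟩

lemma summable_unit {f : PowerSeries ℝ} (hf : Summable fun k => ‖PowerSeries.coeff k f‖) {z : ℂ}
    (hz : ‖z‖ = 1) : Summable fun k => ‖PowerSeries.coeff k f • z ^ k‖ := by
  simpa [norm_smul, hz] using hf

lemma hasSum_mul_complex {u v : ℕ → ℂ} (hu : Summable fun k => ‖u k‖)
    (hv : Summable fun k => ‖v k‖) :
    HasSum (fun x : ℕ × ℕ => u x.1 * v x.2) ((∑' k, u k) * ∑' k, v k) :=
  HasSum.mul hu.of_norm.hasSum hv.of_norm.hasSum (summable_mul_of_summable_norm hu hv)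

lemma hasSum_integrand {p r : PowerSeries ℝ} (hp : Summable fun k => ‖PowerSeries.coeff k p‖)
    (hr : Summable fun k => ‖PowerSeries.coeff k r‖) {φ : ℝ → ℂ}
    (hφ : ∀ θ : ℝ, φ θ = -((Complex.exp (Complex.I * θ))⁻¹ *
      peval p (Complex.exp (Complex.I * θ)) * peval r (Complex.exp (Complex.I * θ))⁻¹)) (ℓ : ℤ)
    (θ : ℝ) :
    HasSum (fun x : ℕ × ℕ => ((PowerSeries.coeff x.1 p * PowerSeries.coeff x.2 r : ℝ) : ℂ) *
      Complex.exp (Complex.I * ((x.1 - x.2 - (ℓ + 1) : ℤ) : ℂ) * θ))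
      (-(Complex.exp (-Complex.I * ℓ * θ) * φ θ)) := by
  have hzn : ‖Complex.exp (Complex.I * θ)‖ = 1 := by
    rw [mul_comm]; exact Complex.norm_exp_ofReal_mul_I θ
  have hzi : ‖(Complex.exp (Complex.I * θ))⁻¹‖ = 1 := by rw [norm_inv, hzn, inv_one]
  have s1 := summable_unit hp hzn
  have s2 := summable_unit hr hzi
  have h1 := (hasSum_mul_complex s1 s2).mul_left
    (Complex.exp (-Complex.I * ℓ * θ) * (Complex.exp (Complex.I * θ))⁻¹)
  have hexp : ∀ x : ℕ × ℕ, Complex.exp (Complex.I * ((x.1 - x.2 - (ℓ + 1) : ℤ) : ℂ) * θ)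
      = Complex.exp (-Complex.I * ℓ * θ) * (Complex.exp (Complex.I * θ))⁻¹ *
        (Complex.exp (Complex.I * θ) ^ x.1 * (Complex.exp (Complex.I * θ))⁻¹ ^ x.2) := by
    intro x
    rw [← Complex.exp_neg, ← Complex.exp_nat_mul, ← Complex.exp_nat_mul,
      ← Complex.exp_add, ← Complex.exp_add, ← Complex.exp_add]
    congr 1
    push_cast; ring
  convert h1 using 1
  · rfl
  · funext x
    rw [hexp, Complex.real_smul, Complex.real_smul]
    push_cast; ring
  · rw [hφ, peval, peval]
    ring

lemma hasSum_fourier {u v : ℕ → ℝ} (hu : Summable fun k => ‖u k‖) (hv : Summable fun k => ‖v k‖)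
    (ℓ : ℤ) {f : ℝ → ℂ} (hf : ∀ θ : ℝ, HasSum (fun x : ℕ × ℕ => ((u x.1 * v x.2 : ℝ) : ℂ) *
      Complex.exp (Complex.I * ((x.1 - x.2 - (ℓ + 1) : ℤ) : ℂ) * θ)) (f θ)) :
    HasSum (fun x : ℕ × ℕ => if (x.1 - x.2 - (ℓ + 1) : ℤ) = 0 then ((u x.1 * v x.2 : ℝ) : ℂ) else 0)
      (((2 * Real.pi : ℝ) : ℂ)⁻¹ * ∫ θ in (-Real.pi)..Real.pi, f θ) := by
  have hpr : Summable fun x : ℕ × ℕ => ‖u x.1 * v x.2‖ := hu.mul_norm hv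
  have key := intervalIntegral.hasSum_integral_of_dominated_convergence
    (μ := volume) (a := -Real.pi) (b := Real.pi)
    (F := fun (x : ℕ × ℕ) (θ : ℝ) => ((u x.1 * v x.2 : ℝ) : ℂ) *
      Complex.exp (Complex.I * ((x.1 - x.2 - (ℓ + 1) : ℤ) : ℂ) * θ))
    (f := f)
    (fun x _ => ‖u x.1 * v x.2‖)
    (fun x => by
      refine Continuous.aestronglyMeasurable ?_
      fun_prop)
    (fun x => Eventually.of_forall fun θ _ => by
      rw [norm_mul, Complex.norm_real]
      refine mul_le_of_le_one_right (norm_nonneg _) ?_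
      rw [Complex.norm_exp]
      simp)
    (Eventually.of_forall fun θ _ => hpr)
    intervalIntegrable_const
    (Eventually.of_forall fun θ _ => hf θ)
  have hpi : ((2 * Real.pi : ℝ) : ℂ) ≠ 0 := by exact_mod_cast Real.two_pi_pos.ne'
  convert key.mul_left (((2 * Real.pi : ℝ) : ℂ)⁻¹) using 1
  · rfl
  funext x
  rw [intervalIntegral.integral_const_mul, integral_exp_int]
  split_ifs
  · field_simp
  · simp

/-- The Fourier coefficients of minus the product of `z⁻¹`, a power series in `z` and a power
series in `z⁻¹`, by termwise integration. -/
lemma fourierCoeff'_product {p r : PowerSeries ℝ} (hp : Summable fun k => ‖PowerSeries.coeff k p‖)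
    (hr : Summable fun k => ‖PowerSeries.coeff k r‖) {φ : ℝ → ℂ}
    (hφ : ∀ θ : ℝ, φ θ = -((Complex.exp (Complex.I * θ))⁻¹ *
      peval p (Complex.exp (Complex.I * θ)) * peval r (Complex.exp (Complex.I * θ))⁻¹)) (ℓ : ℤ) :
    fourierCoeff' φ ℓ = ((-∑' k : ℕ, PowerSeries.coeff k p * zext r (k - (ℓ + 1)) : ℝ) : ℂ) := by
  have key := hasSum_fourier hp hr ℓ (hasSum_integrand hp hr hφ ℓ)
  rw [intervalIntegral.integral_neg, mul_neg] at key
  have h2 : fourierCoeff' φ ℓ = -∑' x : ℕ × ℕ, (if (x.1 - x.2 - (ℓ + 1) : ℤ) = 0 then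
      ((PowerSeries.coeff x.1 p * PowerSeries.coeff x.2 r : ℝ) : ℂ) else 0) := by
    rw [key.tsum_eq, neg_neg, fourierCoeff']
  rw [h2, Complex.ofReal_neg, Complex.ofReal_tsum, key.summable.tsum_prod]
  refine congrArg _ (tsum_congr fun k => ?_)
  by_cases hk : 0 ≤ (k : ℤ) - (ℓ + 1)
  · rw [tsum_eq_single ((k : ℤ) - (ℓ + 1)).toNat]
    · rw [if_pos (by rw [Int.toNat_of_nonneg hk]; ring), zext, if_pos hk]
    · intro m hm
      rw [if_neg]
      intro h
      apply hm
      omega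
  · rw [zext, if_neg hk, mul_zero, Complex.ofReal_zero]
    convert tsum_zero with m
    rw [if_neg]
    omega

lemma summable_norm_coeff_pw (ha : 0 < a) (hab : a < b) (hb : b < 1) {s : ℝ} (hs : |s| ≤ 1) :
    Summable fun k => ‖PowerSeries.coeff k (pw a b s)‖ := by
  have := summable_pw ha hab hb hs (z := 1) norm_one
  refine this.congr fun k => ?_
  rw [one_pow, norm_smul, norm_one, mul_one]

/-- The Fourier coefficients of the symbol are, up to sign and a shift of the index by one, those of the
winding-number-zero symbol `P(z) / P(1/z)`. -/
theorem fourierCoeff'_wuSymbol (ha : 0 < a) (hab : a < b) (hb : b < 1) (ℓ : ℤ) :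
    fourierCoeff' (wuSymbol a b⁻¹) ℓ = ((-∑' k : ℕ, PowerSeries.coeff k (pw a b (1 / 2)) *
      zext (pw a b (-1 / 2)) (k - (ℓ + 1)) : ℝ) : ℂ) :=
  fourierCoeff'_product (summable_norm_coeff_pw ha hab hb (by rw [abs_of_pos] <;> norm_num))
    (summable_norm_coeff_pw ha hab hb (by rw [abs_of_neg] <;> norm_num))
    (fun θ => wuSymbol_eq ha hab hb θ) ℓ

end Symbol
end Wu

/-! ### Cramer's rule -/

namespace Wu

/-- The determinant of the theorem is a minor of the `(n+1) × (n+1)` Toeplitz matrix of the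
winding-number-zero symbol, hence by Cramer's rule a determinant times the last entry of the first
column of an inverse. -/
theorem toeplitzDet_wuSymbol {a b : ℝ} (ha : 0 < a) (hab : a < b) (hb : b < 1) (n : ℕ)
    (x : Fin (n + 1) → ℝ)
    (hx : (tmat (pw a b (1 / 2)) (zext (pw a b (-1 / 2))) n).mulVec x = Pi.single 0 1) :
    toeplitzDet (wuSymbol a b⁻¹) n =
      (((tmat (pw a b (1 / 2)) (zext (pw a b (-1 / 2))) n).det * x (Fin.last n) : ℝ) : ℂ) := by
  set T := tmat (pw a b (1 / 2)) (zext (pw a b (-1 / 2))) n with hT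
  have h1 : T.adjugate (Fin.last n) 0 = T.det * x (Fin.last n) := by
    have h := congrArg (fun v => T.adjugate.mulVec v (Fin.last n)) hx
    simp only [Matrix.mulVec_mulVec, Matrix.adjugate_mul, Matrix.mulVec_single_one] at h
    simpa [Matrix.smul_mulVec] using h.symm
  rw [← h1, Matrix.adjugate_fin_succ_eq_det_submatrix]
  have h2 : (Matrix.of fun j k : Fin n => fourierCoeff' (wuSymbol a b⁻¹) ((j : ℤ) - (k : ℤ)))
      = (-(T.submatrix (Fin.succAbove 0) (Fin.last n).succAbove)).map Complex.ofRealHom := by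
    ext j k
    simp only [Matrix.of_apply, Matrix.map_apply, Matrix.neg_apply, Matrix.submatrix_apply,
      Complex.ofRealHom_eq_coe, hT, tmat, Fin.succAbove_last, Fin.zero_succAbove]
    rw [fourierCoeff'_wuSymbol ha hab hb]
    congr 2
    refine tsum_congr fun m => ?_
    congr 2
    simp
    ring
  rw [toeplitzDet, h2, ← RingHom.mapMatrix_apply, ← RingHom.map_det, Matrix.det_neg]
  simp
end Wu

/-! ### Truncation of the factor `p` -/

namespace Wu

/-- A pair of mutually inverse power series whose coefficients are `O(b ^ k)`, together with the
slower rate `s = √b` used for the perturbation estimates. -/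
structure Pair (p r : PowerSeries ℝ) (C b s : ℝ) : Prop where
  mul : p * r = 1
  p0 : PowerSeries.coeff 0 p = 1
  hp : ∀ k, |PowerSeries.coeff k p| ≤ C * b ^ k
  hr : ∀ k, |PowerSeries.coeff k r| ≤ C * b ^ k
  C1 : 1 ≤ C
  spos : 0 < s
  s1 : s < 1
  ss : s * s = b

/-- `ρ` is the convolution inverse of the truncation of `p` at degree `n + 1`, with coefficients bounded
by `2 C s ^ k` independently of `n`, and it agrees with the coefficients of `r = 1 / p` up to index `n + 1`. -/
structure Approx (n : ℕ) (p r : PowerSeries ℝ) (ρ : ℤ → ℝ) (C b s : ℝ) : Prop where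
  data : Data n (fun k => PowerSeries.coeff k p) ρ (2 * C) b s
  agree : ∀ k : ℤ, k ≤ n + 1 → ρ k = zext r k

variable {p r : PowerSeries ℝ} {C b s : ℝ}

lemma Pair.bpos (h : Pair p r C b s) : 0 < b := by rw [← h.ss]; exact mul_pos h.spos h.spos
lemma Pair.bs (h : Pair p r C b s) : b ≤ s := by
  rw [← h.ss]; exact mul_le_of_le_one_left h.spos.le h.s1.le
lemma Pair.b1 (h : Pair p r C b s) : b < 1 := h.bs.trans_lt h.s1

/-- The part of `p` of degree greater than `n + 1`. -/
noncomputable def tail (p : PowerSeries ℝ) (n : ℕ) : PowerSeries ℝ :=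
  PowerSeries.mk fun k => if k < n + 2 then 0 else PowerSeries.coeff k p

/-- The weight controlling the `j`-th coefficient of `r * tail p n`. -/
noncomputable def wt (C s : ℝ) (n j : ℕ) : ℝ := if j < n + 2 then 0 else C ^ 2 * ((j + 1) * s ^ j)

lemma wt_nonneg (hs : 0 ≤ s) (n j : ℕ) : 0 ≤ wt C s n j := by
  unfold wt; split_ifs <;> positivity

lemma sum_wt_eventually (hs : 0 < s) (hs1 : s < 1) (C : ℝ) :
    ∀ᶠ n : ℕ in atTop, ∀ K : ℕ, ∑ j ∈ Finset.range K, wt C s n j ≤ 1 / 2 := by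
  set f : ℕ → ℝ := fun j => C ^ 2 * ((j + 1) * s ^ j) with hf
  have hf0 : ∀ j, 0 ≤ f j := fun j => by simp only [hf]; positivity
  have hsum : Summable f := by
    refine Summable.mul_left _ ?_
    have h1 := summable_pow_mul_geometric_of_norm_lt_one (R := ℝ) 1 (r := s)
      (by rwa [Real.norm_of_nonneg hs.le])
    have h2 := summable_geometric_of_lt_one hs.le hs1
    refine (h1.add h2).congr fun j => ?_
    ring
  have ht := tendsto_sum_nat_add f
  have ht2 := (ht.comp (tendsto_add_atTop_nat 2)).eventually (ge_mem_nhds (by norm_num : (0 : ℝ) < 1 / 2))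
  filter_upwards [ht2] with n hn K
  refine le_trans ?_ hn
  have hle : ∑ j ∈ Finset.range K, wt C s n j ≤ ∑ j ∈ Finset.range (n + 2 + K), wt C s n j :=
    Finset.sum_le_sum_of_subset_of_nonneg (Finset.range_mono (by omega))
      fun j _ _ => wt_nonneg hs.le n j
  refine hle.trans ?_
  rw [Finset.sum_range_add, Finset.sum_eq_zero, zero_add]
  · have : ∀ i, wt C s n (n + 2 + i) = f (i + (n + 2)) := fun i => by
      rw [add_comm, wt, if_neg (by omega)]
    simp only [this]
    exact ((summable_nat_add_iff (n + 2)).2 hsum).sum_le_tsum _ fun i _ => hf0 _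
  · intro j hj
    rw [wt, if_pos (Finset.mem_range.1 hj)]

lemma coeff_mul_tail (h : Pair p r C b s) (n j : ℕ) :
    |PowerSeries.coeff j (r * tail p n)| ≤ wt C s n j * s ^ j := by
  rw [PowerSeries.coeff_mul]
  unfold wt
  have hb := h.bpos
  split_ifs with hj
  · rw [zero_mul, Finset.sum_eq_zero, abs_zero]
    intro x hx
    have := Finset.HasAntidiagonal.mem_antidiagonal.1 hx
    rw [tail, PowerSeries.coeff_mk, if_pos (by omega), mul_zero]
  · have hC := h.C1
    calc _ ≤ ∑ x ∈ Finset.HasAntidiagonal.antidiagonal j, C ^ 2 * b ^ j := by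
          refine (Finset.abs_sum_le_sum_abs _ _).trans (Finset.sum_le_sum fun x hx => ?_)
          have hx := Finset.HasAntidiagonal.mem_antidiagonal.1 hx
          have h2 : |PowerSeries.coeff x.2 (tail p n)| ≤ C * b ^ x.2 := by
            rw [tail, PowerSeries.coeff_mk]
            split_ifs
            · rw [abs_zero]; positivity
            · exact h.hp _
          rw [abs_mul]
          calc _ ≤ (C * b ^ x.1) * (C * b ^ x.2) :=
                mul_le_mul (h.hr _) h2 (abs_nonneg _) (by positivity)
            _ = _ := by rw [← hx, pow_add]; ring
      _ = _ := by
          rw [Finset.sum_const, Finset.Nat.card_antidiagonal, ← h.ss, mul_pow, nsmul_eq_mul]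
          push_cast; ring

/-- The bootstrap estimate: if `f = r + (r * tail p n) * f`, the coefficients of `f` are at most
`2 C s ^ k`, provided the weights sum to at most `1 / 2`. -/
lemma coeff_le_of_eq (h : Pair p r C b s) {n : ℕ}
    (hw : ∀ K : ℕ, ∑ j ∈ Finset.range K, wt C s n j ≤ 1 / 2) {f : PowerSeries ℝ}
    (hf : f = r + (r * tail p n) * f) (k : ℕ) : |PowerSeries.coeff k f| ≤ 2 * C * s ^ k := by
  have hs := h.spos
  have hC := h.C1
  induction k using Nat.strong_induction_on with
  | _ k ih =>
    rw [hf, map_add, PowerSeries.coeff_mul (n := k) (φ := r * tail p n)]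
    have h1 : |PowerSeries.coeff k r| ≤ C * s ^ k :=
      (h.hr k).trans (by have := h.bpos; have := h.bs; gcongr)
    have h2 : |∑ x ∈ Finset.HasAntidiagonal.antidiagonal k, PowerSeries.coeff x.1 (r * tail p n) *
        PowerSeries.coeff x.2 f| ≤ C * s ^ k := by
      calc _ ≤ ∑ x ∈ Finset.HasAntidiagonal.antidiagonal k, wt C s n x.1 * (2 * C * s ^ k) := by
            refine (Finset.abs_sum_le_sum_abs _ _).trans (Finset.sum_le_sum fun x hx => ?_)
            have hx := Finset.HasAntidiagonal.mem_antidiagonal.1 hx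
            have hu := coeff_mul_tail h n x.1
            have hw0 := wt_nonneg (C := C) hs.le n x.1
            rw [abs_mul]
            rcases Nat.eq_zero_or_pos x.1 with h0 | h0
            · have : wt C s n x.1 = 0 := by rw [wt, if_pos (by omega)]
              rw [this, zero_mul] at hu ⊢
              rw [le_antisymm hu (abs_nonneg _), zero_mul]
            · calc _ ≤ (wt C s n x.1 * s ^ x.1) * (2 * C * s ^ x.2) :=
                    mul_le_mul hu (ih _ (by omega)) (abs_nonneg _) (by positivity)
                _ = _ := by rw [← hx, pow_add]; ring
        _ = (∑ j ∈ Finset.range (k + 1), wt C s n j) * (2 * C * s ^ k) := by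
            rw [← Finset.sum_mul, Finset.Nat.sum_antidiagonal_eq_sum_range_succ_mk]
        _ ≤ 1 / 2 * (2 * C * s ^ k) := by gcongr; exact hw _
        _ = _ := by ring
    calc _ ≤ _ := abs_add_le _ _
      _ ≤ C * s ^ k + C * s ^ k := add_le_add h1 h2
      _ = _ := by ring

/-- The inverse of the truncation `p - tail p n` is controlled by `coeff_le_of_eq`, since it satisfies
`f = r + r * tail p n * f`. -/
theorem exists_approx (h : Pair p r C b s) {n : ℕ}
    (hw : ∀ K : ℕ, ∑ j ∈ Finset.range K, wt C s n j ≤ 1 / 2) : ∃ ρ, Approx n p r ρ C b s := by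
  have hs := h.spos
  have hC := h.C1
  set q := p - tail p n with hq
  have hqc : ∀ k, PowerSeries.coeff k q = if k < n + 2 then PowerSeries.coeff k p else 0 := by
    intro k
    rw [hq, map_sub, tail, PowerSeries.coeff_mk]
    split_ifs <;> simp
  have hq0 : PowerSeries.constantCoeff q ≠ 0 := by
    rw [← PowerSeries.coeff_zero_eq_constantCoeff_apply, hqc, if_pos (by omega), h.p0]
    exact one_ne_zero
  set f := q⁻¹ with hfdef
  have hqf : q * f = 1 := PowerSeries.mul_inv_cancel q hq0
  have hf : f = r + (r * tail p n) * f := by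
    have h1 : tail p n = p - q := by rw [hq]; ring
    rw [h1]
    linear_combination (-f) * h.mul + r * hqf
  have hb := coeff_le_of_eq h hw hf
  have hag : ∀ k, k < n + 2 → PowerSeries.coeff k f = PowerSeries.coeff k r := by
    intro k hk
    conv_lhs => rw [hf]
    rw [map_add, PowerSeries.coeff_mul (n := k) (φ := r * tail p n), Finset.sum_eq_zero, add_zero]
    intro x hx
    have hx := Finset.HasAntidiagonal.mem_antidiagonal.1 hx
    have hu := coeff_mul_tail h n x.1
    rw [wt, if_pos (by omega), zero_mul] at hu
    rw [abs_nonpos_iff.1 hu, zero_mul]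
  refine ⟨zext f, ⟨h.p0, fun k => zext_neg f, ?_, ?_, hs, h.bpos.le, ?_, ?_⟩, ?_⟩
  · rw [show (0 : ℤ) = ((0 : ℕ) : ℤ) from rfl, zext_natCast, hag 0 (by omega)]
    have := congrArg (PowerSeries.coeff 0) h.mul
    have hp0 := h.p0
    rw [PowerSeries.coeff_zero_eq_constantCoeff_apply] at this hp0 ⊢
    rw [map_mul, hp0, one_mul] at this
    rw [this]
    simp
  · intro k
    have h1 := congrArg (PowerSeries.coeff (k + 1)) hqf
    rw [PowerSeries.coeff_one, if_neg (by omega), PowerSeries.coeff_mul,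
      Finset.Nat.sum_antidiagonal_eq_sum_range_succ_mk] at h1
    set A := n + 2 + (k + 2)
    have e2 : ∑ i ∈ Finset.range (n + 2), PowerSeries.coeff i p * zext f ((k : ℤ) + 1 - i)
        = ∑ i ∈ Finset.range A, PowerSeries.coeff i q * zext f ((k : ℤ) + 1 - i) := by
      rw [← Finset.sum_subset (Finset.range_mono (by omega : n + 2 ≤ A))]
      · refine Finset.sum_congr rfl fun i hi => ?_
        rw [hqc, if_pos (Finset.mem_range.1 hi)]
      · intro i _ hi
        rw [hqc, if_neg (by simpa using hi), zero_mul]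
    have e3 : ∑ i ∈ Finset.range (k + 1).succ, PowerSeries.coeff i q * PowerSeries.coeff (k + 1 - i) f
        = ∑ i ∈ Finset.range A, PowerSeries.coeff i q * zext f ((k : ℤ) + 1 - i) := by
      rw [← Finset.sum_subset (Finset.range_mono (by omega : k + 2 ≤ A))]
      · refine Finset.sum_congr rfl fun i hi => ?_
        have := Finset.mem_range.1 hi
        rw [← zext_natCast f]
        congr 2
        omega
      · intro i _ hi
        rw [zext_neg f (by have := Finset.mem_range.not.1 hi; omega), mul_zero]
    show ∑ i ∈ Finset.range (n + 2), PowerSeries.coeff i p * zext f ((k : ℤ) + 1 - i) = 0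
    rw [e2, ← e3]
    exact h1
  · exact (mul_lt_of_lt_one_left hs h.b1).trans h.s1
  · intro k
    rcases lt_or_ge k 0 with hk | hk
    · rw [zext_neg f hk, abs_zero]; positivity
    · lift k to ℕ using hk
      rw [zext_natCast, zpow_natCast]; exact hb k
  · intro k hk
    rcases lt_or_ge k 0 with hk0 | hk0
    · rw [zext_neg _ hk0, zext_neg _ hk0]
    · lift k to ℕ using hk0
      rw [zext_natCast, zext_natCast]; exact hag k (by omega)

end Wu

/-! ### Entrywise bounds and perturbation of the inverse -/

namespace Wu

variable {p r : PowerSeries ℝ} {C b s : ℝ} {n : ℕ} {ρ : ℤ → ℝ}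

lemma abs_tsum_le_geometric {u : ℕ → ℝ} {K : ℝ} {m₀ : ℕ} (hb : 0 ≤ b) (hb1 : b < 1)
    (h0 : ∀ m, m < m₀ → u m = 0) (hu : ∀ m, |u m| ≤ K * b ^ m) :
    |∑' m, u m| ≤ K * (1 - b)⁻¹ * b ^ m₀ := by
  have hg : Summable fun m => K * b ^ m := (summable_geometric_of_lt_one hb hb1).mul_left K
  have hs : Summable u := Summable.of_norm_bounded hg hu
  rw [← hs.sum_add_tsum_nat_add m₀, Finset.sum_eq_zero fun i hi => h0 i (Finset.mem_range.1 hi),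
    zero_add]
  have hg2 := ((hasSum_geometric_of_lt_one hb hb1).mul_left (K * b ^ m₀))
  refine (tsum_of_norm_bounded (f := fun m => u (m + m₀)) hg2 fun m => ?_).trans_eq (by ring)
  calc _ ≤ K * b ^ (m + m₀) := hu _
    _ = _ := by rw [pow_add]; ring

lemma Approx.abs_le (h : Pair p r C b s) (hA : Approx n p r ρ C b s) (k : ℤ) : |ρ k| ≤ 2 * C := by
  have hC := h.C1
  rcases lt_or_ge k 0 with hk | hk
  · rw [hA.data.neg k hk, abs_zero]; positivity
  · refine (hA.data.bound k).trans ?_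
    lift k to ℕ using hk
    rw [zpow_natCast]
    exact mul_le_of_le_one_right (by positivity) (pow_le_one₀ h.spos.le h.s1.le)

lemma Pair.abs_zext_le (h : Pair p r C b s) (k : ℤ) : |zext r k| ≤ C := by
  have hC := h.C1
  rcases lt_or_ge k 0 with hk | hk
  · rw [zext_neg r hk, abs_zero]; positivity
  · lift k to ℕ using hk
    rw [zext_natCast]
    refine (h.hr k).trans ?_
    exact mul_le_of_le_one_right (by positivity) (pow_le_one₀ h.bpos.le h.b1.le)

lemma abs_diff_le (h : Pair p r C b s) (hA : Approx n p r ρ C b s) (k : ℤ) :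
    |zext r k - ρ k| ≤ 3 * C * s ^ n := by
  have hC := h.C1
  have hs := h.spos
  rcases le_or_gt k (n + 1) with hk | hk
  · rw [hA.agree k hk, sub_self, abs_zero]; positivity
  · lift k to ℕ using (by omega)
    have h1 : |zext r k| ≤ C * s ^ n := by
      rw [zext_natCast]
      refine (h.hr k).trans ?_
      have hb := h.bpos
      have hbs := h.bs
      calc C * b ^ k ≤ C * s ^ k := by gcongr
        _ ≤ C * s ^ n := by
          gcongr C * ?_
          exact pow_le_pow_of_le_one hs.le h.s1.le (by omega)
    have h2 : |ρ k| ≤ 2 * C * s ^ n := by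
      refine (hA.data.bound k).trans ?_
      rw [zpow_natCast]
      gcongr 2 * C * ?_
      exact pow_le_pow_of_le_one hs.le h.s1.le (by omega)
    refine (abs_sub _ _).trans ?_
    linarith

/-- The error made by replacing `r` by its approximation is `O(s ^ n)` in every entry, with a further factor
`b ^ (n + j - k)` away from the top-right corner. -/
lemma abs_tmat_sub_le (h : Pair p r C b s) (hA : Approx n p r ρ C b s) (j k : Fin (n + 1)) :
    |(tmat p (zext r) n - tmat p ρ n) j k| ≤
      3 * C ^ 2 * (1 - b)⁻¹ * s ^ n * b ^ (n + (j : ℕ) - k) := by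
  have hC := h.C1
  have hb := h.bpos
  have hs := h.spos
  have hg : Summable fun m => C * (2 * C) * b ^ m :=
    (summable_geometric_of_lt_one hb.le h.b1).mul_left _
  have hsum : ∀ σ : ℤ → ℝ, (∀ k, |σ k| ≤ 2 * C) →
      Summable fun m : ℕ => PowerSeries.coeff m p * σ ((m : ℤ) + k - j) := by
    intro σ hσ
    refine Summable.of_norm_bounded hg fun m => ?_
    rw [norm_mul, Real.norm_eq_abs, Real.norm_eq_abs]
    calc _ ≤ (C * b ^ m) * (2 * C) := mul_le_mul (h.hp m) (hσ _) (abs_nonneg _) (by positivity)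
      _ = _ := by ring
  rw [Matrix.sub_apply, tmat, tmat, Matrix.of_apply, Matrix.of_apply,
    ← (hsum _ fun k => (h.abs_zext_le k).trans (by linarith)).tsum_sub (hsum _ (hA.abs_le h))]
  refine (abs_tsum_le_geometric (K := 3 * C ^ 2 * s ^ n) (m₀ := n + (j : ℕ) - k) hb.le h.b1
    (fun m hm => ?_) fun m => ?_).trans_eq (by ring)
  · rw [← mul_sub, hA.agree _ (by omega), sub_self, mul_zero]
  · rw [← mul_sub, abs_mul]
    calc _ ≤ (C * b ^ m) * (3 * C * s ^ n) :=
          mul_le_mul (h.hp m) (abs_diff_le h hA _) (abs_nonneg _) (by positivity)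
      _ = _ := by ring

lemma abs_tmat_r_le (h : Pair p r C b s) (hA : Approx n p r ρ C b s) (j k : Fin (n + 1)) :
    |tmat r ρ n j k| ≤ 2 * C ^ 2 * (1 - b)⁻¹ * b ^ ((j : ℕ) - k) := by
  have hC := h.C1
  have hb := h.bpos
  rw [tmat, Matrix.of_apply]
  refine abs_tsum_le_geometric hb.le h.b1 (fun m hm => ?_) fun m => ?_
  · rw [hA.data.neg _ (by omega), mul_zero]
  · rw [abs_mul]
    calc _ ≤ (C * b ^ m) * (2 * C) :=
          mul_le_mul (h.hr m) (hA.abs_le h _) (abs_nonneg _) (by positivity)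
      _ = _ := by ring

lemma abs_umat_le (h : Pair p r C b s) (j k : Fin (n + 1)) :
    |umat (fun k => PowerSeries.coeff k p) n j k| ≤ C * b ^ ((k : ℕ) - j) := by
  have hC := h.C1
  have hb := h.bpos
  rw [umat, Matrix.of_apply]
  split_ifs
  · exact h.hp _
  · rw [abs_zero]; positivity

lemma umat_last (h : Pair p r C b s) (k : Fin (n + 1)) :
    umat (fun k => PowerSeries.coeff k p) n (Fin.last n) k = if k = Fin.last n then 1 else 0 := by
  rw [umat, Matrix.of_apply]
  simp only [Fin.last_le_iff]
  split_ifs with hk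
  · rw [hk, Nat.sub_self, h.p0]
  · rfl

lemma umat_zero (h : Pair p r C b s) (k : Fin (n + 1)) :
    umat (fun k => PowerSeries.coeff k p) n k 0 = if k = 0 then 1 else 0 := by
  rw [umat, Matrix.of_apply]
  simp only [Fin.le_zero_iff]
  split_ifs with hk
  · rw [hk, Nat.sub_self, h.p0]
  · rfl

/-- The explicit inverse of `tmat p ρ n` provided by `exact_inverse`. -/
noncomputable def smat (p r : PowerSeries ℝ) (ρ : ℤ → ℝ) (n : ℕ) :
    Matrix (Fin (n + 1)) (Fin (n + 1)) ℝ :=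
  umat (fun k => PowerSeries.coeff k p) n * tmat r ρ n * umat (fun k => PowerSeries.coeff k p) n

lemma smat_last (h : Pair p r C b s) (j : Fin (n + 1)) : smat p r ρ n (Fin.last n) j =
    ∑ k, tmat r ρ n (Fin.last n) k * umat (fun k => PowerSeries.coeff k p) n k j := by
  rw [smat, Matrix.mul_apply]
  refine Finset.sum_congr rfl fun k _ => ?_
  rw [Matrix.mul_apply]
  simp [umat_last h]

lemma smat_last_zero (h : Pair p r C b s) :
    smat p r ρ n (Fin.last n) 0 = tmat r ρ n (Fin.last n) 0 := by
  rw [smat_last h]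
  simp [umat_zero h]

/-- The last row of the inverse decays away from its last entry. This decay, multiplied by the one in
`abs_tmat_sub_le`, supplies the factor `b ^ n` needed to compare with the exponentially small corner entry. -/
lemma abs_smat_last_le (h : Pair p r C b s) (hA : Approx n p r ρ C b s) (j : Fin (n + 1)) :
    |smat p r ρ n (Fin.last n) j| ≤ 2 * C ^ 3 * (1 - b)⁻¹ * (n + 1) * b ^ (n - (j : ℕ)) := by
  have hC := h.C1
  have hb := h.bpos
  have hb1 : 0 < (1 - b)⁻¹ := inv_pos.2 (sub_pos.2 h.b1)
  rw [smat_last h]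
  calc _ ≤ ∑ k : Fin (n + 1), 2 * C ^ 3 * (1 - b)⁻¹ * b ^ (n - (j : ℕ)) := by
        refine (Finset.abs_sum_le_sum_abs _ _).trans (Finset.sum_le_sum fun k _ => ?_)
        by_cases hkj : k ≤ j
        swap
        · rw [umat, Matrix.of_apply, if_neg hkj, mul_zero, abs_zero]
          positivity
        rw [abs_mul]
        calc _ ≤ (2 * C ^ 2 * (1 - b)⁻¹ * b ^ (n - (k : ℕ))) * (C * b ^ ((j : ℕ) - k)) :=
              mul_le_mul (abs_tmat_r_le h hA _ _) (abs_umat_le h k j) (abs_nonneg _) (by positivity)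
          _ = 2 * C ^ 3 * (1 - b)⁻¹ * b ^ (n - (k : ℕ) + ((j : ℕ) - k)) := by rw [pow_add]; ring
          _ ≤ _ := by
            gcongr _ * ?_
            exact pow_le_pow_of_le_one hb.le h.b1.le (by omega)
    _ = _ := by
        rw [Finset.sum_const, Finset.card_univ, Fintype.card_fin, nsmul_eq_mul]
        push_cast; ring

lemma abs_smat_le (h : Pair p r C b s) (hA : Approx n p r ρ C b s) (i j : Fin (n + 1)) :
    |smat p r ρ n i j| ≤ 2 * C ^ 4 * (1 - b)⁻¹ * (n + 1) ^ 2 := by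
  have hC := h.C1
  have hb := h.bpos
  have hb1 : 0 < (1 - b)⁻¹ := inv_pos.2 (sub_pos.2 h.b1)
  have hU : ∀ i j, |umat (fun k => PowerSeries.coeff k p) n i j| ≤ C := fun i j =>
    (abs_umat_le h i j).trans (mul_le_of_le_one_right (by positivity) (pow_le_one₀ hb.le h.b1.le))
  have hR : ∀ i j, |tmat r ρ n i j| ≤ 2 * C ^ 2 * (1 - b)⁻¹ := fun i j =>
    (abs_tmat_r_le h hA i j).trans
      (mul_le_of_le_one_right (by positivity) (pow_le_one₀ hb.le h.b1.le))
  rw [smat, Matrix.mul_apply]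
  calc _ ≤ ∑ k : Fin (n + 1), (∑ l : Fin (n + 1), C * (2 * C ^ 2 * (1 - b)⁻¹)) * C := by
        refine (Finset.abs_sum_le_sum_abs _ _).trans (Finset.sum_le_sum fun k _ => ?_)
        rw [abs_mul, Matrix.mul_apply]
        refine mul_le_mul ?_ (hU _ _) (abs_nonneg _) (by positivity)
        refine (Finset.abs_sum_le_sum_abs _ _).trans (Finset.sum_le_sum fun l _ => ?_)
        rw [abs_mul]
        exact mul_le_mul (hU _ _) (hR _ _) (abs_nonneg _) (by positivity)
    _ = _ := by
        simp only [Finset.sum_const, Finset.card_univ, Fintype.card_fin, nsmul_eq_mul]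
        push_cast; ring

section Perturbation

variable {T T' S : Matrix (Fin (n + 1)) (Fin (n + 1)) ℝ} {α β : ℝ}

/-- The factor is the determinant of `1 + (T - T') S`, where `S` is the inverse of `T'`. -/
lemma det_perturb (hS : S * T' = 1) (hα : ∀ i j, |S i j| ≤ α) (hβ : ∀ i j, |(T - T') i j| ≤ β) :
    ∃ d, T.det = d * T'.det ∧ |d - 1| ≤ Real.exp ((n + 1) ^ 3 * (α * β)) - 1 := by
  have hα0 : 0 ≤ α := (abs_nonneg _).trans (hα 0 0)
  have hβ0 : 0 ≤ β := (abs_nonneg _).trans (hβ 0 0)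
  refine ⟨(1 + (T - T') * S).det, ?_, ?_⟩
  · rw [← Matrix.det_mul, add_mul, mul_assoc, hS, one_mul, mul_one, add_sub_cancel]
  · refine (abs_det_one_add_sub_one_le _).trans (sub_le_sub_right (Real.exp_le_exp.2 ?_) _)
    calc _ ≤ ∑ i : Fin (n + 1), ∑ j : Fin (n + 1), ∑ k : Fin (n + 1), β * α := by
          refine Finset.sum_le_sum fun i _ => Finset.sum_le_sum fun j _ => ?_
          rw [Matrix.mul_apply]
          refine (Finset.abs_sum_le_sum_abs _ _).trans (Finset.sum_le_sum fun k _ => ?_)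
          rw [abs_mul]
          exact mul_le_mul (hβ _ _) (hα _ _) (abs_nonneg _) hβ0
      _ = _ := by
          simp only [Finset.sum_const, Finset.card_univ, Fintype.card_fin, nsmul_eq_mul]
          push_cast; ring

/-- The resolvent identity `T⁻¹ = S - S (T - T') T⁻¹` applied to the first basis vector. -/
lemma solve_perturb (hS : S * T' = 1) {x : Fin (n + 1) → ℝ}
    (hx : T.mulVec x = Pi.single 0 1) (i : Fin (n + 1)) :
    x i = S i 0 - ∑ j, ∑ k, S i j * ((T - T') j k * x k) := by
  have h1 : S.mulVec ((T' + (T - T')).mulVec x) = S.mulVec (Pi.single 0 1) := by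
    rw [add_sub_cancel, hx]
  rw [Matrix.add_mulVec, Matrix.mulVec_add, Matrix.mulVec_mulVec, hS, Matrix.one_mulVec,
    Matrix.mulVec_single_one] at h1
  have h2 := congrFun h1 i
  rw [Pi.add_apply] at h2
  rw [eq_sub_iff_add_eq]
  change _ = S i 0 at h2
  rw [← h2]
  congr 1
  simp only [Matrix.mulVec, dotProduct, Finset.mul_sum]

lemma abs_solution_le (hS : S * T' = 1) (hα : ∀ i j, |S i j| ≤ α)
    (hβ : ∀ i j, |(T - T') i j| ≤ β) (hsmall : (n + 1) ^ 2 * (α * β) ≤ 1 / 2)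
    {x : Fin (n + 1) → ℝ} (hx : T.mulVec x = Pi.single 0 1) (i : Fin (n + 1)) :
    |x i| ≤ 2 * α := by
  have hα0 : 0 ≤ α := (abs_nonneg _).trans (hα 0 0)
  have hβ0 : 0 ≤ β := (abs_nonneg _).trans (hβ 0 0)
  -- it suffices to treat the entry of largest absolute value
  obtain ⟨i₀, hi₀⟩ := Finite.exists_max fun i => |x i|
  have hM : 0 ≤ |x i₀| := abs_nonneg _
  have h1 : |x i₀| ≤ α + (n + 1) ^ 2 * (α * β) * |x i₀| := by
    conv_lhs => rw [solve_perturb hS hx i₀]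
    refine (abs_sub _ _).trans (add_le_add (hα _ _) ?_)
    calc _ ≤ ∑ j : Fin (n + 1), ∑ k : Fin (n + 1), α * (β * |x i₀|) := by
          refine (Finset.abs_sum_le_sum_abs _ _).trans (Finset.sum_le_sum fun j _ => ?_)
          refine (Finset.abs_sum_le_sum_abs _ _).trans (Finset.sum_le_sum fun k _ => ?_)
          rw [abs_mul, abs_mul]
          exact mul_le_mul (hα _ _) (mul_le_mul (hβ _ _) (hi₀ k) (abs_nonneg _) hβ0)
            (by positivity) hα0
      _ = _ := by
          simp only [Finset.sum_const, Finset.card_univ, Fintype.card_fin, nsmul_eq_mul]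
          push_cast; ring
  have h2 : (n + 1) ^ 2 * (α * β) * |x i₀| ≤ 1 / 2 * |x i₀| := by gcongr
  have h3 : |x i| ≤ |x i₀| := hi₀ i
  linarith

end Perturbation

end Wu

/-! ### Limits for the winding-number-zero matrix -/

namespace Wu

variable {p r : PowerSeries ℝ} {C b s : ℝ} {ρ : ℕ → ℤ → ℝ}

lemma tendsto_poly_mul_pow (hs : 0 < s) (hs1 : s < 1) (d : ℕ) :
    Tendsto (fun n : ℕ => ((n : ℝ) + 1) ^ d * s ^ n) atTop (𝓝 0) := by
  have h := ((tendsto_pow_const_mul_const_pow_of_lt_one d hs.le hs1).comp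
    (tendsto_add_atTop_nat 1)).mul_const s⁻¹
  rw [zero_mul] at h
  refine h.congr fun n => ?_
  simp only [Function.comp]
  rw [pow_succ]
  push_cast
  field_simp

lemma tendsto_shift {u : ℕ → ℝ} {L : ℝ} (hb : 0 < b)
    (hL : Tendsto (fun n : ℕ => Real.sqrt (Real.pi * n) * (b ^ n)⁻¹ * u n) atTop (𝓝 L)) (m : ℕ) :
    Tendsto (fun n : ℕ => Real.sqrt (Real.pi * n) * (b ^ n)⁻¹ * u (m + n)) atTop (𝓝 (L * b ^ m)) := by
  have h1 := (tendsto_add_atTop_iff_nat m).2 hL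
  have h2 := (Real.continuous_sqrt.tendsto 1).comp (tendsto_natCast_div_add_atTop (𝕜 := ℝ) (m : ℝ))
  have h3 := (h1.mul h2).mul_const (b ^ m)
  rw [Real.sqrt_one, mul_one] at h3
  refine h3.congr' ?_
  filter_upwards [eventually_gt_atTop 0] with n hn
  have hn : (0 : ℝ) < n := by exact_mod_cast hn
  have h4 : Real.sqrt (Real.pi * n) = Real.sqrt (Real.pi * ((n + m : ℕ) : ℝ)) * Real.sqrt (n / (n + m)) := by
    rw [← Real.sqrt_mul (by positivity)]
    congr 1
    push_cast
    field_simp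
  rw [h4, add_comm m n, pow_add]
  simp only [Function.comp]
  field_simp

/-- The bottom-left entry of the explicit inverse is `∑ m, r (m + n) * ρ m`, and each term is asymptotic to
`L * b ^ m * r m` in the scale `b ^ n / √(π n)`; dominated convergence applies. -/
lemma tendsto_corner (h : Pair p r C b s) (hA : ∀ᶠ n in atTop, Approx n p r (ρ n) C b s) {L : ℝ}
    (hL : Tendsto (fun n : ℕ => Real.sqrt (Real.pi * n) * (b ^ n)⁻¹ * PowerSeries.coeff n r) atTop
      (𝓝 L)) :
    Tendsto (fun n : ℕ => Real.sqrt (Real.pi * n) * (b ^ n)⁻¹ * tmat r (ρ n) n (Fin.last n) 0) atTop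
      (𝓝 (L * peval r b)) := by
  have hb := h.bpos
  have hC := h.C1
  obtain ⟨B, hB⟩ := hL.norm.bddAbove_range
  have hB : ∀ n : ℕ, |Real.sqrt (Real.pi * n) * (b ^ n)⁻¹ * PowerSeries.coeff n r| ≤ B :=
    fun n => hB ⟨n, rfl⟩
  have hB0 : 0 ≤ B := (abs_nonneg _).trans (hB 0)
  have hlim := tendsto_tsum_of_dominated_convergence (𝓕 := atTop)
    (f := fun (n : ℕ) (m : ℕ) => Real.sqrt (Real.pi * n) * (b ^ n)⁻¹ * PowerSeries.coeff (m + n) r *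
      ρ n m)
    (g := fun m => L * b ^ m * PowerSeries.coeff m r) (bound := fun m => B * (2 * C) * b ^ m)
    ((summable_geometric_of_lt_one hb.le h.b1).mul_left _)
    (fun m => by
      have h1 := (tendsto_shift hb hL m).mul_const (PowerSeries.coeff m r)
      refine h1.congr' ?_
      filter_upwards [hA, eventually_ge_atTop m] with n hn hnm
      rw [hn.agree m (by omega), zext_natCast])
    (by
      filter_upwards [hA] with n hn m
      rw [norm_mul, Real.norm_eq_abs, Real.norm_eq_abs]
      calc _ ≤ (B * b ^ m) * (2 * C) := by
            refine mul_le_mul ?_ (hn.abs_le h _) (abs_nonneg _) (by positivity)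
            have h1 := mul_le_mul_of_nonneg_right (hB (m + n)) (by positivity : 0 ≤ b ^ m)
            refine le_trans ?_ h1
            have e1 : |(b ^ n)⁻¹| = (b ^ n)⁻¹ := abs_of_pos (by positivity)
            have e2 : |(b ^ (m + n))⁻¹| = (b ^ (m + n))⁻¹ := abs_of_pos (by positivity)
            rw [abs_mul, abs_mul, abs_mul, abs_mul, abs_of_nonneg (Real.sqrt_nonneg _),
              abs_of_nonneg (Real.sqrt_nonneg _), e1, e2]
            calc _ ≤ Real.sqrt (Real.pi * ((m + n : ℕ) : ℝ)) * (b ^ n)⁻¹ *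
                  |PowerSeries.coeff (m + n) r| := by
                  gcongr
                  linarith [Nat.cast_nonneg (α := ℝ) m]
              _ = _ := by
                  rw [pow_add]
                  field_simp
        _ = _ := by ring)
  have hval : ∑' m, L * b ^ m * PowerSeries.coeff m r = L * peval r b := by
    rw [peval, ← tsum_mul_left]
    refine tsum_congr fun m => ?_
    rw [smul_eq_mul]; ring
  rw [hval] at hlim
  refine hlim.congr' ?_
  filter_upwards [hA] with n hn
  simp only [mul_assoc]
  rw [tsum_mul_left, tsum_mul_left, tmat, Matrix.of_apply]
  congr 2
  have hinj : Function.Injective fun m : ℕ => m + n := add_left_injective n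
  refine Eq.trans ?_ (hinj.tsum_eq (f := fun m : ℕ => PowerSeries.coeff m r *
    ρ n ((m : ℤ) + (((0 : Fin (n + 1)) : ℕ) : ℤ) - ((Fin.last n : Fin (n + 1)) : ℕ))) ?_)
  · refine tsum_congr fun m => ?_
    congr 2
    simp
  · intro m hm
    by_contra hc
    apply hm
    have : m < n := by
      by_contra h2
      exact hc ⟨m - n, Nat.sub_add_cancel (not_lt.1 h2)⟩
    dsimp only
    rw [hn.data.neg _ (by simp; omega), mul_zero]

/-- The truncated polynomial of `det_tmat` at `a` and at `b` converges to `p(a)` and `p(b)`. -/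
lemma tendsto_det_approx (h : Pair p r C b s) (hA : ∀ᶠ n in atTop, Approx n p r (ρ n) C b s)
    {w : PowerSeries ℝ} {Cw a : ℝ} (hw : ∀ k, |PowerSeries.coeff k w| ≤ Cw * b ^ k) (hwp : w * w = p)
    (hpp : p * p = (1 - PowerSeries.C a * PowerSeries.X) * (1 - PowerSeries.C b * PowerSeries.X))
    (ha : 0 ≤ a) (ha1 : a < 1) :
    Tendsto (fun n => (tmat p (ρ n) n).det) atTop (𝓝 (Real.sqrt (peval p a * peval p b))) := by
  have hlim : ∀ x : ℝ, 0 ≤ x → x < 1 → Tendsto (fun n : ℕ => ∑ k ∈ Finset.range (n + 2),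
      PowerSeries.coeff k p * x ^ k) atTop (𝓝 (peval p x)) := by
    intro x hx hx1
    have hs := summable_of_bound (x := x) h.bpos.le h.hp (by
      rw [Real.norm_of_nonneg hx]
      exact (mul_le_of_le_one_left hx h.b1.le).trans_lt hx1)
    exact (hs.of_norm.hasSum.tendsto_sum_nat).comp (tendsto_add_atTop_nat 2)
  refine ((Real.continuous_sqrt.tendsto _).comp
    ((hlim a ha ha1).mul (hlim b h.bpos.le h.b1))).congr' ?_
  filter_upwards [hA] with n hn
  exact (det_tmat hn.data p w h.hp hw hwp hpp).symm

/-- Asymptotics of the determinant of `p(z) r(1/z)` times the last entry of the first column of the inverse. -/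
theorem tendsto_cramer (h : Pair p r C b s)
    {w : PowerSeries ℝ} {Cw a : ℝ} (hw : ∀ k, |PowerSeries.coeff k w| ≤ Cw * b ^ k) (hwp : w * w = p)
    (hpp : p * p = (1 - PowerSeries.C a * PowerSeries.X) * (1 - PowerSeries.C b * PowerSeries.X))
    (ha : 0 ≤ a) (ha1 : a < 1) (hpos : 0 < peval p a * peval p b) {L : ℝ}
    (hL : Tendsto (fun n : ℕ => Real.sqrt (Real.pi * n) * (b ^ n)⁻¹ * PowerSeries.coeff n r) atTop
      (𝓝 L)) :
    ∃ x : (n : ℕ) → Fin (n + 1) → ℝ,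
      (∀ᶠ n in atTop, (tmat p (zext r) n).mulVec (x n) = Pi.single 0 1) ∧
      Tendsto (fun n : ℕ => Real.sqrt (Real.pi * n) * (b ^ n)⁻¹ *
        ((tmat p (zext r) n).det * x n (Fin.last n))) atTop
        (𝓝 (Real.sqrt (peval p a * peval p b) * (L * peval r b))) := by
  have hb := h.bpos
  have hC := h.C1
  have hs := h.spos
  have hb1 : 0 < (1 - b)⁻¹ := inv_pos.2 (sub_pos.2 h.b1)
  have hex : ∀ᶠ n in atTop, ∃ ρ, Approx n p r ρ C b s :=
    (sum_wt_eventually hs h.s1 C).mono fun n hn => exists_approx h hn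
  obtain ⟨N, hN⟩ := eventually_atTop.1 hex
  choose! ρ hρ using hN
  have hA : ∀ᶠ n in atTop, Approx n p r (ρ n) C b s := eventually_atTop.2 ⟨N, hρ⟩
  have hinv : ∀ n, Approx n p r (ρ n) C b s → smat p r (ρ n) n * tmat p (ρ n) n = 1 := fun n hn =>
    mul_eq_one_comm.1 (exact_inverse hn.data p r h.hp h.hr h.mul)
  set Kα : ℝ := 2 * C ^ 4 * (1 - b)⁻¹ with hKα
  set Kβ : ℝ := 3 * C ^ 2 * (1 - b)⁻¹ with hKβ
  set Kγ : ℝ := 2 * C ^ 3 * (1 - b)⁻¹ with hKγ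
  have hKα0 : 0 < Kα := by positivity
  have hKβ0 : 0 < Kβ := by positivity
  have hKγ0 : 0 < Kγ := by positivity
  have hα : ∀ n, Approx n p r (ρ n) C b s → ∀ i j, |smat p r (ρ n) n i j| ≤ Kα * ((n : ℝ) + 1) ^ 2 :=
    fun n hn i j => abs_smat_le h hn i j
  have hβ : ∀ n, Approx n p r (ρ n) C b s → ∀ i j,
      |(tmat p (zext r) n - tmat p (ρ n) n) i j| ≤ Kβ * s ^ n := fun n hn i j =>
    (abs_tmat_sub_le h hn i j).trans
      (mul_le_of_le_one_right (by positivity) (pow_le_one₀ hb.le h.b1.le))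
  have hsmall : ∀ (d : ℕ) (K : ℝ), Tendsto (fun n : ℕ => K * (((n : ℝ) + 1) ^ d * s ^ n)) atTop (𝓝 0) :=
    fun d K => by simpa using (tendsto_poly_mul_pow hs h.s1 d).const_mul K
  -- The determinant: the perturbation changes it by a factor `1 + O(n ^ 5 * s ^ n)`.
  have hdet : Tendsto (fun n => (tmat p (zext r) n).det) atTop
      (𝓝 (Real.sqrt (peval p a * peval p b))) := by
    have h1 : ∀ᶠ n in atTop, ∃ d, (tmat p (zext r) n).det = d * (tmat p (ρ n) n).det ∧
        |d - 1| ≤ Real.exp (Kα * Kβ * (((n : ℝ) + 1) ^ 5 * s ^ n)) - 1 := by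
      filter_upwards [hA] with n hn
      obtain ⟨d, hd, hd2⟩ := det_perturb (hinv n hn) (hα n hn) (hβ n hn)
      refine ⟨d, hd, hd2.trans_eq ?_⟩
      congr 2
      ring
    obtain ⟨M, hM⟩ := eventually_atTop.1 h1
    choose! d hd hd2 using hM
    have h3 : Tendsto (fun n => d n - 1) atTop (𝓝 0) := by
      refine squeeze_zero_norm' (eventually_atTop.2 ⟨M, hd2⟩) ?_
      have := ((Real.continuous_exp.tendsto 0).comp (hsmall 5 (Kα * Kβ))).sub_const 1
      rwa [Real.exp_zero, sub_self] at this
    have h4 : Tendsto d atTop (𝓝 1) := by simpa using h3.add_const 1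
    have h5 := h4.mul (tendsto_det_approx h hA hw hwp hpp ha ha1)
    rw [one_mul] at h5
    exact h5.congr' (eventually_atTop.2 ⟨M, fun n hn => (hd n hn).symm⟩)
  have hne : ∀ᶠ n in atTop, (tmat p (zext r) n).det ≠ 0 :=
    (hdet.eventually_ne (Real.sqrt_pos.2 hpos).ne')
  refine ⟨fun n => (tmat p (zext r) n)⁻¹.mulVec (Pi.single 0 1), ?_, ?_⟩
  · filter_upwards [hne] with n hn
    rw [Matrix.mulVec_mulVec, Matrix.mul_nonsing_inv _ (isUnit_iff_ne_zero.2 hn), Matrix.one_mulVec]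
  set x : (n : ℕ) → Fin (n + 1) → ℝ := fun n => (tmat p (zext r) n)⁻¹.mulVec (Pi.single 0 1)
  have hx : ∀ᶠ n in atTop, (tmat p (zext r) n).mulVec (x n) = Pi.single 0 1 := by
    filter_upwards [hne] with n hn
    simp only [x]
    rw [Matrix.mulVec_mulVec, Matrix.mul_nonsing_inv _ (isUnit_iff_ne_zero.2 hn), Matrix.one_mulVec]
  -- The last entry of the solution: the error, of size `O(n ^ 5 * s ^ n * b ^ n)`, is negligible.
  have hlast : Tendsto (fun n : ℕ => Real.sqrt (Real.pi * n) * (b ^ n)⁻¹ * x n (Fin.last n)) atTop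
      (𝓝 (L * peval r b)) := by
    have hdiff : Tendsto (fun n : ℕ => Real.sqrt (Real.pi * n) * (b ^ n)⁻¹ *
        (x n (Fin.last n) - tmat r (ρ n) n (Fin.last n) 0)) atTop (𝓝 0) := by
      refine squeeze_zero_norm' ?_ (hsmall 6 (Real.pi * (2 * Kγ * Kβ * Kα)))
      filter_upwards [hA, hx, (hsmall 4 (Kα * Kβ)).eventually (ge_mem_nhds (by norm_num : (0 : ℝ) < 1 / 2))]
        with n hn hxn hsm
      have hxb : ∀ i, |x n i| ≤ 2 * (Kα * ((n : ℝ) + 1) ^ 2) :=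
        abs_solution_le (hinv n hn) (hα n hn) (hβ n hn) (by
          refine le_trans (le_of_eq ?_) hsm
          ring) hxn
      have hE : |x n (Fin.last n) - tmat r (ρ n) n (Fin.last n) 0| ≤
          2 * Kγ * Kβ * Kα * ((n : ℝ) + 1) ^ 5 * s ^ n * b ^ n := by
        rw [solve_perturb (hinv n hn) hxn, smat_last_zero h, sub_sub_cancel_left, abs_neg]
        calc _ ≤ ∑ j : Fin (n + 1), ∑ k : Fin (n + 1),
              2 * Kγ * Kβ * Kα * ((n : ℝ) + 1) ^ 3 * s ^ n * b ^ n := by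
              refine (Finset.abs_sum_le_sum_abs _ _).trans (Finset.sum_le_sum fun j _ => ?_)
              refine (Finset.abs_sum_le_sum_abs _ _).trans (Finset.sum_le_sum fun k _ => ?_)
              rw [abs_mul, abs_mul]
              calc _ ≤ (Kγ * (n + 1) * b ^ (n - (j : ℕ))) * ((Kβ * s ^ n * b ^ (n + (j : ℕ) - k)) *
                    (2 * (Kα * ((n : ℝ) + 1) ^ 2))) :=
                    mul_le_mul (abs_smat_last_le h hn j)
                      (mul_le_mul (abs_tmat_sub_le h hn j k) (hxb k) (abs_nonneg _) (by positivity))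
                      (by positivity) (by positivity)
                _ = 2 * Kγ * Kβ * Kα * ((n : ℝ) + 1) ^ 3 * s ^ n *
                    b ^ (n - (j : ℕ) + (n + (j : ℕ) - k)) := by rw [pow_add]; ring
                _ ≤ _ := by
                    gcongr _ * ?_
                    exact pow_le_pow_of_le_one hb.le h.b1.le (by omega)
          _ = _ := by
              simp only [Finset.sum_const, Finset.card_univ, Fintype.card_fin, nsmul_eq_mul]
              push_cast; ring
      have hsq : Real.sqrt (Real.pi * n) ≤ Real.pi * ((n : ℝ) + 1) := by
        rw [Real.sqrt_le_left (by positivity)]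
        have hpi : 1 ≤ Real.pi := by linarith [Real.pi_gt_three]
        nlinarith [mul_nonneg (Real.pi_pos.le) (Nat.cast_nonneg (α := ℝ) n)]
      rw [norm_mul, norm_mul, Real.norm_of_nonneg (Real.sqrt_nonneg _), norm_inv,
        Real.norm_of_nonneg (by positivity), Real.norm_eq_abs]
      calc _ ≤ (Real.pi * ((n : ℝ) + 1)) * (b ^ n)⁻¹ *
            (2 * Kγ * Kβ * Kα * ((n : ℝ) + 1) ^ 5 * s ^ n * b ^ n) := by gcongr
        _ = _ := by field_simp
    have := hdiff.add (tendsto_corner h hA hL)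
    rw [zero_add] at this
    refine this.congr fun n => ?_
    ring
  refine (hdet.mul hlast).congr fun n => ?_
  ring

end Wu

/-! ### The constant -/

namespace Wu

lemma coeff_zero_pw (a b s : ℝ) : PowerSeries.coeff 0 (pw a b s) = 1 := by
  rw [PowerSeries.coeff_zero_eq_constantCoeff_apply, pw, map_mul,
    ← PowerSeries.coeff_zero_eq_constantCoeff_apply, ← PowerSeries.coeff_zero_eq_constantCoeff_apply,
    coeff_bser, coeff_bser]
  simp

lemma pair_pw {a b : ℝ} (ha : 0 < a) (hab : a < b) (hb1 : b < 1) :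
    Pair (pw a b (1 / 2)) (pw a b (-1 / 2)) (1 - a / b)⁻¹ b (Real.sqrt b) where
  mul := by
    rw [pw_mul, show (1 / 2 : ℝ) + -1 / 2 = 0 by norm_num, pw_zero]
  p0 := coeff_zero_pw _ _ _
  hp := abs_coeff_pw_le ha hab (by rw [abs_le]; constructor <;> norm_num)
  hr := abs_coeff_pw_le ha hab (by rw [abs_le]; constructor <;> norm_num)
  C1 := by
    have hb := ha.trans hab
    have hq : a / b < 1 := (div_lt_one hb).2 hab
    have hq0 : 0 < a / b := by positivity
    exact (one_le_inv₀ (by linarith)).2 (by linarith)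
  spos := Real.sqrt_pos.2 (ha.trans hab)
  s1 := by rw [Real.sqrt_lt' one_pos]; linarith
  ss := Real.mul_self_sqrt (ha.trans hab).le

/-- The factors involving `D` cancel between the determinant and the corner entry. -/
lemma limit_value {A B D Q : ℝ} (hA : 0 < A) (hB : 0 < B) (hD : 0 < D) :
    Real.sqrt (A ^ (1 / 2 : ℝ) * D ^ (1 / 2 : ℝ) * (D ^ (1 / 2 : ℝ) * B ^ (1 / 2 : ℝ))) *
      (Q ^ (-1 / 2 : ℝ) * (D ^ (-1 / 2 : ℝ) * B ^ (-1 / 2 : ℝ))) =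
      A ^ ((1 : ℝ) / 4) * B ^ (-(1 : ℝ) / 4) * Q ^ (-(1 : ℝ) / 2) := by
  have hDD : D ^ (1 / 2 : ℝ) * D ^ (1 / 2 : ℝ) = D := by
    rw [← Real.rpow_add hD]; norm_num
  have e : A ^ (1 / 2 : ℝ) * D ^ (1 / 2 : ℝ) * (D ^ (1 / 2 : ℝ) * B ^ (1 / 2 : ℝ)) =
      A ^ (1 / 2 : ℝ) * B ^ (1 / 2 : ℝ) * D := by
    linear_combination A ^ (1 / 2 : ℝ) * B ^ (1 / 2 : ℝ) * hDD
  have h4 : ∀ x : ℝ, 0 < x → (x ^ (1 / 2 : ℝ)) ^ (1 / 2 : ℝ) = x ^ ((1 : ℝ) / 4) := fun x hx => by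
    rw [← Real.rpow_mul hx.le]; norm_num
  rw [e, Real.sqrt_eq_rpow, Real.mul_rpow (by positivity) hD.le,
    Real.mul_rpow (by positivity) (by positivity), h4 A hA, h4 B hB]
  have hBB : B ^ ((1 : ℝ) / 4) * B ^ (-1 / 2 : ℝ) = B ^ (-(1 : ℝ) / 4) := by
    rw [← Real.rpow_add hB]; norm_num
  have hD1 : D ^ (1 / 2 : ℝ) * D ^ (-1 / 2 : ℝ) = 1 := by
    rw [← Real.rpow_add hD]; norm_num
  rw [← hBB]
  linear_combination A ^ ((1 : ℝ) / 4) * B ^ ((1 : ℝ) / 4) * B ^ (-1 / 2 : ℝ) * Q ^ (-1 / 2 : ℝ) * hD1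

/-- The asymptotics in the parameters `a = γ₁` and `b = 1 / γ₂`. -/
theorem tendsto_toeplitzDet {a b : ℝ} (ha : 0 < a) (hab : a < b) (hb1 : b < 1) :
    Tendsto (fun n : ℕ => ((Real.sqrt (Real.pi * n) * b⁻¹ ^ n : ℝ) : ℂ) *
        toeplitzDet (wuSymbol a b⁻¹) n) atTop
      (𝓝 (((1 - a ^ 2) ^ ((1 : ℝ) / 4) * (1 - b ^ 2) ^ (-(1 : ℝ) / 4) *
        (1 - a / b) ^ (-(1 : ℝ) / 2) : ℝ) : ℂ)) := by
  have hb : 0 < b := ha.trans hab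
  have ha1 : a < 1 := hab.trans hb1
  have hq : |(1 / 4 : ℝ)| ≤ 1 := by rw [abs_le]; constructor <;> norm_num
  have hp2 : |(1 / 2 : ℝ)| ≤ 1 := by rw [abs_le]; constructor <;> norm_num
  have hr2 : |(-1 / 2 : ℝ)| ≤ 1 := by rw [abs_le]; constructor <;> norm_num
  have hba : b * a < 1 := by nlinarith
  have hbb : b * b < 1 := by nlinarith
  have hA : 0 < 1 - a ^ 2 := by nlinarith
  have hB : 0 < 1 - b ^ 2 := by nlinarith
  have hD : 0 < 1 - b * a := by linarith
  have e1 : peval (pw a b (1 / 2)) a = (1 - a ^ 2) ^ (1 / 2 : ℝ) * (1 - b * a) ^ (1 / 2 : ℝ) := by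
    rw [peval_pw ha hab hp2 ha.le hba, sq]
  have e2 : peval (pw a b (1 / 2)) b = (1 - b * a) ^ (1 / 2 : ℝ) * (1 - b ^ 2) ^ (1 / 2 : ℝ) := by
    rw [peval_pw ha hab hp2 hb.le hbb, sq, mul_comm a]
  have e3 : peval (pw a b (-1 / 2)) b =
      (1 - b * a) ^ (-1 / 2 : ℝ) * (1 - b ^ 2) ^ (-1 / 2 : ℝ) := by
    rw [peval_pw ha hab hr2 hb.le hbb, sq, mul_comm a]
  obtain ⟨x, hx, hlim⟩ := tendsto_cramer (pair_pw ha hab hb1) (w := pw a b (1 / 4))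
    (abs_coeff_pw_le ha hab hq)
    (by rw [pw_mul]; norm_num) (by rw [pw_mul, ← pw_one]; norm_num) ha.le ha1
    (by rw [e1, e2]; positivity) (tendsto_coeff_pw ha hab)
  rw [e1, e2, e3, limit_value hA hB hD] at hlim
  refine ((Complex.continuous_ofReal.tendsto _).comp hlim).congr' ?_
  filter_upwards [hx] with n hn
  rw [toeplitzDet_wuSymbol ha hab hb1 n (x n) hn, inv_pow, Function.comp_apply, ← Complex.ofReal_mul]

end Wu

/-- **Wu's leading-order asymptotics above the critical temperature.** For
`0 < γ₁ < 1 < γ₂` with `γ₁γ₂ < 1`,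
`√(πn) γ₂ⁿ D_n(φ) → (1−γ₁²)^{1/4} (1−γ₂^{-2})^{-1/4} (1−γ₁γ₂)^{-1/2}` as `n → ∞`. -/
theorem wu_supercritical_asymptotics
    (γ₁ γ₂ : ℝ) (h1 : 0 < γ₁) (h2 : γ₁ < 1) (h3 : 1 < γ₂) (h4 : γ₁ * γ₂ < 1) :
    Tendsto (fun n : ℕ =>
        ((Real.sqrt (Real.pi * n) * γ₂ ^ n : ℝ) : ℂ) * toeplitzDet (wuSymbol γ₁ γ₂) n)
      atTop
      (𝓝 (((1 - γ₁ ^ 2) ^ ((1 : ℝ) / 4) * (1 - γ₂⁻¹ ^ 2) ^ (-(1 : ℝ) / 4) *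
        (1 - γ₁ * γ₂) ^ (-(1 : ℝ) / 2) : ℝ) : ℂ)) := by
  obtain ⟨b, rfl⟩ : ∃ b, γ₂ = b⁻¹ := ⟨γ₂⁻¹, (inv_inv _).symm⟩
  have hb : 0 < b := inv_pos.1 (one_pos.trans h3)
  have hb1 : b < 1 := (one_lt_inv₀ hb).1 h3
  have hab : γ₁ < b := by rwa [mul_inv_lt_iff₀ hb, one_mul] at h4
  rw [inv_inv, ← div_eq_mul_inv]
  exact Wu.tendsto_toeplitzDet h1 hab hb1
end
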